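/- arXiv:2205.10749 — 2 statements merged into one kernel-verified Lean document; each statement's English description precedes it below -/
import Mathlib

section
/- There exists an absolute constant γ₀ > 0 such that for every constant ε ∈ (0,1) and every ρ > 0 there exists m₀ such that for all m ≥ m₀ and all r with 1 ≤ r < γ₀·m the following holds. Set K = ⌊(1-ε)·binom(m,≤r)⌋ and let Z = {z₁,…,z_K} be a uniformly random K-element subset of F₂^m. Then with probability at least 1 - ρ, the F₂-dimension of I_r(Z) equals binom(m,≤r) - K. -/
/-- `binomLe m r = ∑_{i=0}^r C(m,i)`, written `binom(m, ≤ r)`. -/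
def binomLe (m r : ℕ) : ℕ := ∑ i ∈ Finset.range (r + 1), Nat.choose m i

/-- Index type for multilinear monomials of degree at most `r` in `m` variables:
subsets `S ⊆ {1,…,m}` with `|S| ≤ r`. -/
abbrev MonIdx (m r : ℕ) := {S : Finset (Fin m) // S.card ≤ r}

/-- `RM(m,r)` as the space of coefficient vectors of multilinear polynomials in `m`
variables of total degree at most `r` over `F₂`. -/
abbrev RMcode (m r : ℕ) := MonIdx m r → ZMod 2

/-- Evaluation of a polynomial (given by its coefficients) at the point `z`,
as a linear map: `c ↦ ∑_{|S| ≤ r} c_S ∏_{i ∈ S} z_i`. -/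
def evalLin (m r : ℕ) (z : Fin m → ZMod 2) : RMcode m r →ₗ[ZMod 2] ZMod 2 :=
  ∑ S : MonIdx m r, (∏ i ∈ S.1, z i) • LinearMap.proj S

/-- The degree-`r` vanishing space `I_r(Z)` of the set `Z ⊆ F₂^m`. -/
def vanishing (m r : ℕ) (Z : Set (Fin m → ZMod 2)) : Submodule (ZMod 2) (RMcode m r) :=
  ⨅ z ∈ Z, LinearMap.ker (evalLin m r z)

/-- The vector `z^{(r)}` of evaluations at `z` of all multilinear monomials of degree `≤ r`. -/
def monVec (m r : ℕ) (z : Fin m → ZMod 2) : MonIdx m r → ZMod 2 := fun S => ∏ i ∈ S.1, z i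

/-- Fractional Hamming weight of the polynomial with coefficients `c`. -/
noncomputable def wt (m r : ℕ) (c : RMcode m r) : ℝ :=
  ((Finset.univ.filter (fun z : Fin m → ZMod 2 => evalLin m r z c ≠ 0)).card : ℝ) / 2 ^ m

/-- The number of zeros in `F₂^m` of the polynomial with coefficients `c`,
i.e. `(1 - wt(P)) · 2^m`. -/
def numZeros (m r : ℕ) (c : RMcode m r) : ℕ :=
  (Finset.univ.filter (fun z : Fin m → ZMod 2 => evalLin m r z c = 0)).card

/-- The degree-`r` closure of `Z ⊆ F₂^m`. -/
def closureSet (m r : ℕ) (Z : Set (Fin m → ZMod 2)) : Set (Fin m → ZMod 2) :=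
  {u | ∀ c ∈ vanishing m r Z, evalLin m r u c = 0}

section

open Finset Filter Topology

/-- The number of subsets of an `m`-element set with fewer than `d` elements. -/
def binomLt (m d : ℕ) : ℕ := ∑ i ∈ range d, m.choose i

/-- The squarefree monomial `∏_{i ∈ S} x_i` as a function on `F₂^m`. -/
def monomialFun {m : ℕ} (S : Finset (Fin m)) : (Fin m → ZMod 2) → ZMod 2 :=
  fun x => ∏ i ∈ S, x i

/-- The functions on `F₂^m` given by polynomials of degree less than `d`. -/
def lowDeg (m d : ℕ) : Submodule (ZMod 2) ((Fin m → ZMod 2) → ZMod 2) :=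
  Submodule.span (ZMod 2)
    (Set.range fun S : {S : Finset (Fin m) // S.card < d} => monomialFun S.1)

/-- The indicator vector of a set of coordinates. -/
def indicatorPt {m : ℕ} (T : Finset (Fin m)) : Fin m → ZMod 2 := fun i => if i ∈ T then 1 else 0

lemma monomialFun_indicatorPt {m : ℕ} (S T : Finset (Fin m)) :
    monomialFun S (indicatorPt T) = if S ⊆ T then 1 else 0 := by
  unfold monomialFun indicatorPt
  split_ifs with h
  · exact prod_eq_one fun i hi => if_pos (h hi)
  · obtain ⟨i, hi, hiT⟩ := not_subset.mp h
    exact prod_eq_zero hi (if_neg hiT)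

lemma coeff_eq_zero_of_vanish_indicatorPt {m d : ℕ}
    (c : {S : Finset (Fin m) // S.card < d} → ZMod 2)
    (h : ∀ T : Finset (Fin m), T.card < d →
      (∑ S, c S • monomialFun S.1) (indicatorPt T) = 0) : c = 0 := by
  have key : ∀ n, ∀ T : {S : Finset (Fin m) // S.card < d}, T.1.card = n → c T = 0 := by
    intro n
    induction n using Nat.strong_induction_on with
    | _ n ih =>
      intro T hT
      have h1 := h T.1 T.2
      rw [Finset.sum_apply, Finset.sum_eq_single T] at h1
      · simpa [monomialFun_indicatorPt] using h1
      · intro S _ hST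
        rw [Pi.smul_apply, monomialFun_indicatorPt]
        split_ifs with hs
        · have hss : S.1 ⊂ T.1 := hs.ssubset_of_ne fun e => hST (Subtype.ext e)
          rw [ih _ (hT ▸ card_lt_card hss) S rfl, zero_smul]
        · exact smul_zero _
      · simp
  exact funext fun T => key _ T rfl

lemma eq_zero_of_vanish_indicatorPt {m d : ℕ} {f : (Fin m → ZMod 2) → ZMod 2}
    (hf : f ∈ lowDeg m d)
    (h : ∀ T : Finset (Fin m), T.card < d → f (indicatorPt T) = 0) : f = 0 := by
  obtain ⟨c, rfl⟩ := (Submodule.mem_span_range_iff_exists_fun _).mp hf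
  rw [coeff_eq_zero_of_vanish_indicatorPt c h]
  simp

lemma linearIndependent_monomialFun (m d : ℕ) :
    LinearIndependent (ZMod 2)
      (fun S : {S : Finset (Fin m) // S.card < d} => monomialFun S.1) := by
  rw [Fintype.linearIndependent_iff]
  intro c hc i
  rw [coeff_eq_zero_of_vanish_indicatorPt c fun T _ => by rw [hc]; rfl]
  rfl

lemma card_subsets_lt (m d : ℕ) :
    Fintype.card {S : Finset (Fin m) // S.card < d} = binomLt m d := by
  rw [Fintype.card_subtype, binomLt]
  rw [card_eq_sum_card_fiberwise (f := Finset.card) (t := range d)]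
  · refine sum_congr rfl fun i hi => ?_
    rw [filter_filter]
    have : (univ.filter fun S : Finset (Fin m) => S.card < d ∧ S.card = i)
        = powersetCard i univ := by
      ext S
      have := mem_range.mp hi
      simp only [mem_filter, mem_univ, true_and, mem_powersetCard, subset_univ]
      omega
    rw [this, card_powersetCard, card_univ, Fintype.card_fin]
  · intro S hS
    simpa using hS

open Classical in
/-- The finite set of functions in `lowDeg m d`. -/
noncomputable def polys (m d : ℕ) : Finset ((Fin m → ZMod 2) → ZMod 2) :=
  univ.filter (· ∈ lowDeg m d)

lemma mem_polys {m d : ℕ} {f : (Fin m → ZMod 2) → ZMod 2} : f ∈ polys m d ↔ f ∈ lowDeg m d := by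
  simp [polys]

lemma card_polys (m d : ℕ) : (polys m d).card = 2 ^ binomLt m d := by
  classical
  have h1 := finrank_span_eq_card (linearIndependent_monomialFun m d)
  have h2 := Module.card_eq_pow_finrank (K := ZMod 2) (V := lowDeg m d)
  rw [ZMod.card] at h2
  rw [← card_subsets_lt, ← h1, polys, ← Fintype.card_subtype]
  exact h2

lemma monomialFun_mem_lowDeg {m d : ℕ} {S : Finset (Fin m)} (h : S.card < d) :
    monomialFun S ∈ lowDeg m d :=
  Submodule.subset_span ⟨⟨S, h⟩, rfl⟩

/-- The derivative of a function in the direction `y`. -/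
def deriv2 {m : ℕ} (y : Fin m → ZMod 2) (f : (Fin m → ZMod 2) → ZMod 2) :
    (Fin m → ZMod 2) → ZMod 2 := fun x => f (x + y) + f x

lemma deriv2_mem_lowDeg {m d : ℕ} (y : Fin m → ZMod 2) {f : (Fin m → ZMod 2) → ZMod 2}
    (hf : f ∈ lowDeg m d) : deriv2 y f ∈ lowDeg m (d - 1) := by
  unfold lowDeg at hf
  induction hf using Submodule.span_induction with
  | mem f hf =>
    obtain ⟨⟨S, hS⟩, rfl⟩ := hf
    have : deriv2 y (monomialFun S)
        = ∑ T ∈ S.ssubsets, (∏ i ∈ S \ T, y i) • monomialFun T := by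
      ext x
      have h2 : ∀ a : ZMod 2, a + a = 0 := CharTwo.add_self_eq_zero
      simp only [deriv2, monomialFun, Pi.add_apply, Finset.sum_apply, Pi.smul_apply, smul_eq_mul]
      rw [prod_add, ← insert_erase (mem_powerset_self S), sum_insert (notMem_erase _ _)]
      simp only [sdiff_self, bot_eq_empty, prod_empty, mul_one]
      rw [add_right_comm, h2, zero_add]
      exact sum_congr rfl fun T _ => mul_comm _ _
    show deriv2 y (monomialFun S) ∈ _
    rw [this]
    refine Submodule.sum_mem _ fun T hT => Submodule.smul_mem _ _ (monomialFun_mem_lowDeg ?_)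
    have := card_lt_card (mem_ssubsets.mp hT)
    omega
  | zero =>
    convert Submodule.zero_mem _
    ext; simp [deriv2]
  | add f g _ _ hf hg =>
    convert Submodule.add_mem _ hf hg using 1
    ext; simp [deriv2]; ring
  | smul a f _ hf =>
    convert Submodule.smul_mem _ a hf using 1
    ext; simp [deriv2]; ring

lemma lowDeg_mono {m d e : ℕ} (h : d ≤ e) : lowDeg m d ≤ lowDeg m e :=
  Submodule.span_le.mpr (by rintro _ ⟨⟨S, hS⟩, rfl⟩; exact monomialFun_mem_lowDeg (hS.trans_le h))

lemma translate_mem_lowDeg {m d : ℕ} (y : Fin m → ZMod 2) {f : (Fin m → ZMod 2) → ZMod 2}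
    (hf : f ∈ lowDeg m d) : (fun x => f (x + y)) ∈ lowDeg m d := by
  have h := Submodule.sub_mem _ (lowDeg_mono (Nat.sub_le d 1) (deriv2_mem_lowDeg y hf)) hf
  convert h using 1
  ext; simp [deriv2]

lemma mul_mem_lowDeg {m : ℕ} {f g : (Fin m → ZMod 2) → ZMod 2} {a : ℕ}
    (hf : f ∈ lowDeg m 2) (hg : g ∈ lowDeg m a) : f * g ∈ lowDeg m (a + 1) := by
  unfold lowDeg at hf hg
  induction hf using Submodule.span_induction with
  | mem f hf =>
    obtain ⟨⟨S, hS⟩, rfl⟩ := hf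
    induction hg using Submodule.span_induction with
    | mem g hg =>
      obtain ⟨⟨T, hT⟩, rfl⟩ := hg
      have : monomialFun S * monomialFun T = monomialFun (S ∪ T) := by
        ext x
        have h2 : ∀ a : ZMod 2, a * a = a := by decide
        simp only [monomialFun, Pi.mul_apply]
        rw [← prod_union_inter, ← prod_sdiff (inter_subset_union (s := S) (t := T)), mul_assoc,
          h2]
      show monomialFun S * monomialFun T ∈ _
      rw [this]
      refine monomialFun_mem_lowDeg ?_
      have := card_union_le S T
      omega
    | zero => rw [mul_zero]; exact Submodule.zero_mem _
    | add g g' _ _ hg hg' => rw [mul_add]; exact Submodule.add_mem _ hg hg'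
    | smul c g _ hg => rw [mul_smul_comm]; exact Submodule.smul_mem _ _ hg
  | zero => rw [zero_mul]; exact Submodule.zero_mem _
  | add f f' _ _ hf hf' => rw [add_mul]; exact Submodule.add_mem _ hf hf'
  | smul c f _ hf => rw [smul_mul_assoc]; exact Submodule.smul_mem _ _ hf

lemma linear_mem_lowDeg {m : ℕ} (φ : (Fin m → ZMod 2) →ₗ[ZMod 2] ZMod 2) :
    (φ : (Fin m → ZMod 2) → ZMod 2) ∈ lowDeg m 2 := by
  have : (φ : (Fin m → ZMod 2) → ZMod 2) = ∑ i, φ (Pi.single i 1) • monomialFun {i} := by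
    ext x
    conv_lhs => rw [← LinearMap.sum_single_apply (fun _ => ZMod 2) x, map_sum]
    rw [Finset.sum_apply]
    refine sum_congr rfl fun i _ => ?_
    have : (Pi.single i (x i) : Fin m → ZMod 2) = x i • Pi.single i 1 := by
      rw [← Pi.single_smul, smul_eq_mul, mul_one]
    simp [monomialFun, this, mul_comm]
  rw [this]
  exact Submodule.sum_mem _ fun i _ => Submodule.smul_mem _ _ (monomialFun_mem_lowDeg (by simp))

lemma comp_linear_mem_lowDeg {m n d : ℕ} (L : (Fin m → ZMod 2) →ₗ[ZMod 2] (Fin n → ZMod 2))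
    {f : (Fin n → ZMod 2) → ZMod 2} (hf : f ∈ lowDeg n d) : f ∘ L ∈ lowDeg m d := by
  unfold lowDeg at hf
  induction hf using Submodule.span_induction with
  | mem f hf =>
    obtain ⟨⟨S, hS⟩, rfl⟩ := hf
    refine lowDeg_mono (Nat.succ_le_of_lt hS) ?_
    show monomialFun S ∘ L ∈ lowDeg m (S.card + 1)
    clear hS
    induction S using Finset.induction_on with
    | empty => exact monomialFun_mem_lowDeg (S := ∅) (by simp)
    | insert i S hi ih =>
      rw [card_insert_of_notMem hi]
      convert mul_mem_lowDeg (linear_mem_lowDeg ((LinearMap.proj i).comp L)) ih using 1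
      ext x
      simp [monomialFun, prod_insert hi]
  | zero => exact Submodule.zero_mem _
  | add f g _ _ hf hg => exact Submodule.add_mem _ hf hg
  | smul a f _ hf => exact Submodule.smul_mem _ _ hf

/-- The number of points at which a function is nonzero. -/
def nnz {α : Type*} [Fintype α] (f : α → ZMod 2) : ℕ := (univ.filter fun x => f x ≠ 0).card

/-- The functions of degree less than `d` whose fraction of nonzero values is at most `w`. -/
noncomputable def lightPolys (m d : ℕ) (w : ℝ) : Finset ((Fin m → ZMod 2) → ZMod 2) :=
  (polys m d).filter fun f => (nnz f : ℝ) ≤ w * 2 ^ m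

lemma mem_lightPolys {m d : ℕ} {w : ℝ} {f : (Fin m → ZMod 2) → ZMod 2} :
    f ∈ lightPolys m d w ↔ f ∈ lowDeg m d ∧ (nnz f : ℝ) ≤ w * 2 ^ m := by
  rw [lightPolys, mem_filter, mem_polys]

/-- Double counting combined with Markov's inequality. -/
lemma card_le_two_mul_of_markov {α β : Type*} [Fintype β] [Nonempty β] (F : Finset α)
    (g : α → β → ℝ) (hg : ∀ f y, 0 ≤ g f y) (μ B : ℝ)
    (hμ : ∀ f ∈ F, ∑ y, g f y ≤ μ * Fintype.card β)
    (hB : ∀ y, ((F.filter fun f => g f y ≤ 2 * μ).card : ℝ) ≤ B) : (F.card : ℝ) ≤ 2 * B := by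
  have hpos : (0 : ℝ) < Fintype.card β := by exact_mod_cast Fintype.card_pos
  have h1 : ∀ f ∈ F, (Fintype.card β : ℝ)
      ≤ 2 * ((univ.filter fun y => g f y ≤ 2 * μ).card : ℝ) := by
    intro f hf
    have hsplit : ((univ.filter fun y => g f y ≤ 2 * μ).card : ℝ)
        + ((univ.filter fun y => ¬ g f y ≤ 2 * μ).card : ℝ) = Fintype.card β := by
      exact_mod_cast card_filter_add_card_filter_not (s := univ) (fun y => g f y ≤ 2 * μ)
    have hμ0 : 0 ≤ μ :=
      nonneg_of_mul_nonneg_left ((sum_nonneg fun y _ => hg f y).trans (hμ f hf)) hpos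
    rcases hμ0.eq_or_lt with h0 | h0
    · subst h0
      have hs : ∑ y, g f y = 0 :=
        le_antisymm (by simpa using hμ f hf) (sum_nonneg fun y _ => hg f y)
      have : (univ.filter fun y => ¬ g f y ≤ 2 * 0) = ∅ := by
        refine filter_eq_empty_iff.mpr fun y _ => ?_
        rw [(sum_eq_zero_iff_of_nonneg fun y _ => hg f y).mp hs y (mem_univ y)]
        simp
      rw [this] at hsplit
      simp only [card_empty, Nat.cast_zero, add_zero] at hsplit
      rw [hsplit]; linarith
    · have h2 : ((univ.filter fun y => ¬ g f y ≤ 2 * μ).card : ℝ) * (2 * μ) ≤ ∑ y, g f y := by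
        rw [← nsmul_eq_mul]
        refine (card_nsmul_le_sum _ (g f) _ fun y hy => ?_).trans
          (sum_le_sum_of_subset_of_nonneg (filter_subset _ _) fun y _ _ => hg f y)
        exact (not_le.mp (mem_filter.mp hy).2).le
      have h3 := h2.trans (hμ f hf)
      have h4 : ((univ.filter fun y => ¬ g f y ≤ 2 * μ).card : ℝ) * 2 ≤ Fintype.card β := by
        refine le_of_mul_le_mul_right ?_ h0
        linarith
      linarith
  have h2 : (F.card : ℝ) * Fintype.card β ≤ 2 * (Fintype.card β * B) := by
    calc (F.card : ℝ) * Fintype.card β = ∑ f ∈ F, (Fintype.card β : ℝ) := by simp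
      _ ≤ ∑ f ∈ F, 2 * ((univ.filter fun y => g f y ≤ 2 * μ).card : ℝ) := sum_le_sum h1
      _ = 2 * ∑ y, ((F.filter fun f => g f y ≤ 2 * μ).card : ℝ) := by
        rw [← mul_sum]
        congr 1
        exact_mod_cast sum_card_bipartiteAbove_eq_sum_card_bipartiteBelow
          (s := F) (t := univ) (fun f y => g f y ≤ 2 * μ)
      _ ≤ 2 * ∑ y : β, B := by gcongr with y; exact hB y
      _ = _ := by simp
  refine le_of_mul_le_mul_right ?_ hpos
  linarith

lemma card_strings_le {ι : Type*} [Fintype ι] [DecidableEq ι] (u x : ℝ) (hx : 0 < x) (hx1 : x ≤ 1) :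
    ((univ.filter fun s : ι → ZMod 2 => (nnz s : ℝ) ≤ u).card : ℝ)
      ≤ (1 + x) ^ Fintype.card ι * x ^ (-u) := by
  have h1 : ∑ s : ι → ZMod 2, x ^ nnz s = (1 + x) ^ Fintype.card ι := by
    have h := (Fintype.prod_sum (fun (_ : ι) (b : ZMod 2) => if b ≠ 0 then x else 1)).symm
    have h2 : ∑ b : ZMod 2, (if b ≠ 0 then x else 1) = 1 + x := by
      rw [show (univ : Finset (ZMod 2)) = {0, 1} from rfl]
      simp
    rw [h2, prod_const, card_univ] at h
    rw [← h]
    refine sum_congr rfl fun s _ => ?_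
    rw [prod_ite]
    simp [nnz]
  rw [← h1, sum_mul, card_eq_sum_ones, Nat.cast_sum]
  refine (sum_le_sum fun s hs => ?_).trans
    (sum_le_sum_of_subset_of_nonneg (filter_subset _ _) fun s _ _ => by positivity)
  rw [← Real.rpow_natCast, ← Real.rpow_add hx, Nat.cast_one]
  refine Real.one_le_rpow_of_pos_of_le_one_of_nonpos hx hx1 ?_
  linarith [(mem_filter.mp hs).2]

lemma sum_nnz_translates {m : ℕ} {ι : Type*} [Fintype ι] (p : ι → Fin m → ZMod 2)
    (f : (Fin m → ZMod 2) → ZMod 2) :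
    ∑ a, nnz (fun i => f (p i + a)) = Fintype.card ι * nnz f := by
  simp only [nnz, card_filter]
  rw [sum_comm, ← card_univ, ← smul_eq_mul, ← sum_const]
  exact sum_congr rfl fun i _ =>
    Fintype.sum_equiv (Equiv.addLeft (p i)) _ _ fun a => rfl

lemma card_lightPolys_le (m d : ℕ) {w : ℝ} (hw : 0 < w) (hw1 : w ≤ 1) :
    ((lightPolys m d w).card : ℝ) ≤ 2 * Real.exp (4 * √w * binomLt m d) := by
  classical
  let p : {S : Finset (Fin m) // S.card < d} → Fin m → ZMod 2 := fun S => indicatorPt S.1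
  have hs : 0 < √w := Real.sqrt_pos.mpr hw
  refine card_le_two_mul_of_markov (β := Fin m → ZMod 2) _
    (fun f a => (nnz (fun i => f (p i + a)) : ℝ)) (fun _ _ => Nat.cast_nonneg _)
    (w * binomLt m d) _ ?_ ?_
  · intro f hf
    have h := sum_nnz_translates p f
    rw [card_subsets_lt] at h
    have h2 := (mem_lightPolys.mp hf).2
    rw [← Nat.cast_sum, h]
    simp only [Fintype.card_pi, ZMod.card, prod_const, card_univ, Fintype.card_fin]
    push_cast
    nlinarith [(Nat.cast_nonneg (binomLt m d) : (0 : ℝ) ≤ _)]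
  · intro a
    have hinj : (((lightPolys m d w).filter fun f =>
        (nnz (fun i => f (p i + a)) : ℝ) ≤ 2 * (w * binomLt m d)).card : ℝ)
        ≤ ((univ.filter fun s : {S : Finset (Fin m) // S.card < d} → ZMod 2 =>
          (nnz s : ℝ) ≤ 2 * (w * binomLt m d)).card : ℝ) := by
      refine Nat.cast_le.mpr (card_le_card_of_injOn (fun f i => f (p i + a)) ?_ ?_)
      · intro f hf
        have := (mem_filter.mp hf).2
        simpa using this
      · intro f hf g hg hfg
        have hf' := (mem_lightPolys.mp (mem_filter.mp hf).1).1
        have hg' := (mem_lightPolys.mp (mem_filter.mp hg).1).1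
        have h0 : (fun x => (f - g) (x + a)) = 0 := by
          refine eq_zero_of_vanish_indicatorPt
            (translate_mem_lowDeg a (Submodule.sub_mem _ hf' hg')) fun T hT => ?_
          have := congrFun hfg ⟨T, hT⟩
          exact sub_eq_zero.mpr this
        ext x
        have := congrFun h0 (x - a)
        simpa [sub_eq_zero] using this
    refine hinj.trans ((card_strings_le _ (√w) hs (Real.sqrt_le_one.mpr hw1)).trans ?_)
    rw [card_subsets_lt]
    set N : ℝ := (binomLt m d : ℝ) with hN
    have hN0 : 0 ≤ N := Nat.cast_nonneg _
    have e1 : (1 + √w) ^ binomLt m d ≤ Real.exp (√w * N) := by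
      rw [mul_comm, hN, Real.exp_nat_mul]
      gcongr
      linarith [Real.add_one_le_exp (√w)]
    have e2 : (√w) ^ (-(2 * (w * N))) ≤ Real.exp (2 * √w * N) := by
      rw [Real.rpow_def_of_pos hs]
      refine Real.exp_le_exp.mpr ?_
      have hl : -Real.log (√w) ≤ (√w)⁻¹ := by
        rw [← Real.log_inv]
        exact (Real.log_le_self (by positivity))
      calc Real.log (√w) * -(2 * (w * N)) = -Real.log (√w) * (2 * w * N) := by ring
        _ ≤ (√w)⁻¹ * (2 * w * N) := by gcongr
        _ = (√w)⁻¹ * (2 * (√w * √w) * N) := by rw [Real.mul_self_sqrt hw.le]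
        _ = 2 * √w * N := by field_simp
    calc _ ≤ Real.exp (√w * N) * Real.exp (2 * √w * N) := by gcongr
      _ = Real.exp (3 * √w * N) := by rw [← Real.exp_add]; ring_nf
      _ ≤ _ := by
        refine Real.exp_le_exp.mpr ?_
        have := mul_nonneg hs.le hN0
        linarith

/-- The linear combination of the vectors `v i` with coefficients `c i`. -/
def comb {m k : ℕ} (c : Fin k → ZMod 2) (v : Fin k → Fin m → ZMod 2) : Fin m → ZMod 2 :=
  ∑ i, c i • v i

lemma comb_add {m k : ℕ} (c : Fin k → ZMod 2) (v w : Fin k → Fin m → ZMod 2) :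
    comb c (v + w) = comb c v + comb c w := by
  simp [comb, sum_add_distrib]

lemma add_comb {m k : ℕ} (c e : Fin k → ZMod 2) (v : Fin k → Fin m → ZMod 2) :
    comb (c + e) v = comb c v + comb e v := by
  simp [comb, add_smul, sum_add_distrib]

lemma comb_zero {m k : ℕ} (v : Fin k → Fin m → ZMod 2) : comb 0 v = 0 := by
  simp [comb]

/-- A nontrivial linear combination of uniformly random vectors is uniformly distributed. -/
lemma sum_comb {m k : ℕ} {c : Fin k → ZMod 2} (hc : c ≠ 0) (φ : (Fin m → ZMod 2) → ℝ) :
    2 ^ m * ∑ v : Fin k → Fin m → ZMod 2, φ (comb c v)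
      = Fintype.card (Fin k → Fin m → ZMod 2) * ∑ u, φ u := by
  obtain ⟨i, hi⟩ := Function.ne_iff.mp hc
  have hi1 : c i = 1 := Fin.eq_one_of_ne_zero _ hi
  have hcomb : ∀ u : Fin m → ZMod 2, comb c (Pi.single i u) = u := by
    intro u
    rw [comb, sum_eq_single i]
    · simp [hi1]
    · intro j _ hj; simp [hj]
    · simp
  have h1 : ∀ u : Fin m → ZMod 2, ∑ v : Fin k → Fin m → ZMod 2, φ (comb c v)
      = ∑ v : Fin k → Fin m → ZMod 2, φ (comb c v + u) := by
    intro u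
    refine (Fintype.sum_equiv (Equiv.addRight (Pi.single i u)) _ _ fun v => ?_).symm
    simp [comb_add, hcomb]
  have h2 : ∑ _u : Fin m → ZMod 2, ∑ v : Fin k → Fin m → ZMod 2, φ (comb c v)
      = 2 ^ m * ∑ v : Fin k → Fin m → ZMod 2, φ (comb c v) := by
    simp
  have h3 : ∀ v : Fin k → Fin m → ZMod 2, ∑ u, φ (comb c v + u) = ∑ u, φ u := fun v =>
    Fintype.sum_equiv (Equiv.addLeft (comb c v)) _ _ fun u => rfl
  rw [← h2, sum_congr rfl fun u _ => h1 u, sum_comm, sum_congr rfl fun v _ => h3 v, sum_const,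
    card_univ, nsmul_eq_mul]

/-- The iterated derivative of `f` in the directions `v i`. -/
def iterDeriv2 {m k : ℕ} (v : Fin k → Fin m → ZMod 2) (f : (Fin m → ZMod 2) → ZMod 2) :
    (Fin m → ZMod 2) → ZMod 2 := fun x => ∑ c : Fin k → ZMod 2, f (x + comb c v)

lemma iterDeriv2_mem_lowDeg {m d k : ℕ} (v : Fin k → Fin m → ZMod 2)
    {f : (Fin m → ZMod 2) → ZMod 2} (hf : f ∈ lowDeg m d) :
    iterDeriv2 v f ∈ lowDeg m (d - k) := by
  induction k with
  | zero =>
    have : iterDeriv2 v f = f := by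
      ext x
      simp [iterDeriv2, comb]
    rw [this]
    exact hf
  | succ k ih =>
    have : iterDeriv2 v f = deriv2 (v 0) (iterDeriv2 (fun i => v i.succ) f) := by
      ext x
      unfold iterDeriv2
      rw [← Equiv.sum_comp (Fin.consEquiv fun _ => ZMod 2), Fintype.sum_prod_type,
        show (univ : Finset (ZMod 2)) = {0, 1} from rfl, sum_pair (by decide), add_comm]
      simp [deriv2, comb, Fin.sum_univ_succ, add_assoc]
    rw [this]
    exact deriv2_mem_lowDeg (v 0) (ih (fun i => v i.succ))

lemma card_iterDeriv2_ne_le {m k : ℕ} (f : (Fin m → ZMod 2) → ZMod 2) (x : Fin m → ZMod 2) :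
    2 ^ m * ((univ.filter fun v : Fin k → Fin m → ZMod 2 => iterDeriv2 v f x ≠ f x).card : ℝ)
      ≤ Fintype.card (Fin k → Fin m → ZMod 2) * (2 ^ k * nnz f) := by
  classical
  let φ : (Fin m → ZMod 2) → ℝ := fun u => if f (x + u) ≠ 0 then 1 else 0
  have hφ : ∑ u, φ u = nnz f := by
    rw [nnz, card_filter, Nat.cast_sum]
    refine Fintype.sum_equiv (Equiv.addLeft x) _ _ fun u => ?_
    by_cases h : f (x + u) = 0 <;> simp [φ, h]
  have h1 : ∀ v : Fin k → Fin m → ZMod 2,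
      (if iterDeriv2 v f x ≠ f x then (1 : ℝ) else 0)
        ≤ ∑ c ∈ univ.erase (0 : Fin k → ZMod 2), φ (comb c v) := by
    intro v
    have h0 : ∀ c ∈ univ.erase (0 : Fin k → ZMod 2), 0 ≤ φ (comb c v) := fun c _ => by
      simp only [φ]; split_ifs <;> norm_num
    split_ifs with h
    · have : ∃ c ∈ univ.erase (0 : Fin k → ZMod 2), f (x + comb c v) ≠ 0 := by
        by_contra! hall
        refine h ?_
        rw [iterDeriv2, ← add_sum_erase _ _ (mem_univ 0), sum_eq_zero hall, comb_zero]
        simp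
      obtain ⟨c, hc, hfc⟩ := this
      refine le_trans ?_ (single_le_sum h0 hc)
      simp [φ, hfc]
    · exact sum_nonneg h0
  calc 2 ^ m * ((univ.filter fun v : Fin k → Fin m → ZMod 2 => iterDeriv2 v f x ≠ f x).card : ℝ)
      = 2 ^ m * ∑ v : Fin k → Fin m → ZMod 2, (if iterDeriv2 v f x ≠ f x then (1 : ℝ) else 0) := by
        rw [card_filter, Nat.cast_sum]
        congr 1
        exact sum_congr rfl fun v _ => by split_ifs <;> simp
    _ ≤ 2 ^ m * ∑ v : Fin k → Fin m → ZMod 2,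
          ∑ c ∈ univ.erase (0 : Fin k → ZMod 2), φ (comb c v) := by
        gcongr with v; exact h1 v
    _ = ∑ c ∈ univ.erase (0 : Fin k → ZMod 2),
          2 ^ m * ∑ v : Fin k → Fin m → ZMod 2, φ (comb c v) := by
        rw [sum_comm, mul_sum]
    _ = ∑ c ∈ univ.erase (0 : Fin k → ZMod 2),
          (Fintype.card (Fin k → Fin m → ZMod 2) * (nnz f : ℝ)) :=
        sum_congr rfl fun c hc => by rw [sum_comb (ne_of_mem_erase hc), hφ]
    _ ≤ ∑ c : Fin k → ZMod 2, (Fintype.card (Fin k → Fin m → ZMod 2) * (nnz f : ℝ)) :=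
        sum_le_sum_of_subset_of_nonneg (erase_subset _ _) fun _ _ _ => by positivity
    _ = _ := by simp; ring

/-- If each of `C` independent events has probability at most `p`, then at least half of them
occur with probability at most `(4p)^{C/2}`. -/
lemma card_half_le {T : Type*} [Fintype T] (E : T → Prop) [DecidablePred E] (h : ℕ) {p : ℝ}
    (hp : 0 < p) (hp1 : p ≤ 1) (hE : ((univ.filter E).card : ℝ) ≤ p * Fintype.card T) :
    ((univ.filter fun v : Fin (2 * h) → T =>
        h ≤ (univ.filter fun i => E (v i)).card).card : ℝ)
      ≤ (4 * p) ^ h * Fintype.card (Fin (2 * h) → T) := by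
  have h1 : ∑ v : Fin (2 * h) → T, ∏ i, (if E (v i) then (1 : ℝ) else p)
      = (∑ y, if E y then (1 : ℝ) else p) ^ (2 * h) := by
    have := (Fintype.prod_sum (fun (_ : Fin (2 * h)) (y : T) => if E y then (1 : ℝ) else p)).symm
    simpa using this
  have h2 : ∑ y, (if E y then (1 : ℝ) else p) ≤ 2 * p * Fintype.card T := by
    rw [sum_ite, sum_const, sum_const, nsmul_eq_mul, nsmul_eq_mul, mul_one]
    have : ((univ.filter fun y => ¬ E y).card : ℝ) ≤ Fintype.card T := by
      exact_mod_cast card_filter_le _ _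
    nlinarith
  have h0 : (0 : ℝ) ≤ ∑ y, (if E y then (1 : ℝ) else p) :=
    sum_nonneg fun y _ => by split_ifs <;> positivity
  have h3 : ((univ.filter fun v : Fin (2 * h) → T =>
        h ≤ (univ.filter fun i => E (v i)).card).card : ℝ) * p ^ h
      ≤ ∑ v : Fin (2 * h) → T, ∏ i, (if E (v i) then (1 : ℝ) else p) := by
    rw [← nsmul_eq_mul]
    refine (card_nsmul_le_sum _ _ _ fun v hv => ?_).trans
      (sum_le_sum_of_subset_of_nonneg (filter_subset _ _) fun v _ _ =>
        prod_nonneg fun i _ => by split_ifs <;> positivity)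
    rw [prod_ite, prod_const_one, one_mul, prod_const]
    refine pow_le_pow_of_le_one hp.le hp1 ?_
    have h4 := card_filter_add_card_filter_not (s := univ) (fun i => E (v i))
    rw [card_univ, Fintype.card_fin] at h4
    have h5 := (mem_filter.mp hv).2
    omega
  rw [h1] at h3
  have h6 := h3.trans (pow_le_pow_left₀ h0 h2 _)
  refine le_of_mul_le_mul_right (h6.trans_eq ?_) (pow_pos hp h)
  simp only [Fintype.card_pi, prod_const, card_univ, Fintype.card_fin]
  push_cast
  rw [pow_mul, pow_mul, ← mul_pow, ← mul_pow]
  congr 1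
  ring

/-- Functions of small weight are determined, up to an even smaller weight, by their iterated
derivatives in a few random directions. -/
lemma card_lightPolys_le_deriv (m d k h : ℕ) {w : ℝ} (hw : 0 < w) (hk : 2 ^ k * w ≤ 1) :
    ((lightPolys m d w).card : ℝ)
      ≤ 2 * (2 ^ (2 * h * binomLt m (d - k))
          * ((lightPolys m d (4 * (4 * (2 ^ k * w)) ^ h)).card : ℝ)) := by
  classical
  let g : ((Fin m → ZMod 2) → ZMod 2) → (Fin (2 * h) → Fin k → Fin m → ZMod 2) →
      Finset (Fin m → ZMod 2) :=
    fun f v => univ.filter fun x => h ≤ (univ.filter fun i => iterDeriv2 (v i) f x ≠ f x).card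
  refine card_le_two_mul_of_markov _ (fun f v => ((g f v).card : ℝ)) (fun _ _ => Nat.cast_nonneg _)
    ((4 * (2 ^ k * w)) ^ h * 2 ^ m) _ ?_ ?_
  · intro f hf
    have hfw := (mem_lightPolys.mp hf).2
    have h1 : ∑ v, ((g f v).card : ℝ)
        = ∑ x, ((univ.filter fun v : Fin (2 * h) → Fin k → Fin m → ZMod 2 =>
        h ≤ (univ.filter fun i => iterDeriv2 (v i) f x ≠ f x).card).card : ℝ) := by
      simp only [g]
      exact_mod_cast sum_card_bipartiteAbove_eq_sum_card_bipartiteBelow (s := univ) (t := univ)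
        (fun (v : Fin (2 * h) → Fin k → Fin m → ZMod 2) x =>
          h ≤ (univ.filter fun i => iterDeriv2 (v i) f x ≠ f x).card)
    rw [h1]
    refine (sum_le_sum fun x _ => card_half_le (fun v => iterDeriv2 v f x ≠ f x) h
      (by positivity : 0 < 2 ^ k * w) hk ?_).trans_eq ?_
    · have h2 := card_iterDeriv2_ne_le (k := k) f x
      refine le_of_mul_le_mul_left (h2.trans ?_) (by positivity : (0 : ℝ) < 2 ^ m)
      calc (Fintype.card (Fin k → Fin m → ZMod 2) : ℝ) * (2 ^ k * nnz f)
          ≤ Fintype.card (Fin k → Fin m → ZMod 2) * (2 ^ k * (w * 2 ^ m)) := by gcongr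
        _ = _ := by ring
    · rw [sum_const, card_univ, nsmul_eq_mul]
      simp only [Fintype.card_pi, prod_const, card_univ, Fintype.card_fin, ZMod.card]
      push_cast
      ring
  · intro v
    set G := (lightPolys m d w).filter fun f =>
      ((g f v).card : ℝ) ≤ 2 * ((4 * (2 ^ k * w)) ^ h * 2 ^ m) with hG
    have hfib := card_le_mul_card_image_of_maps_to (s := G)
      (t := Fintype.piFinset fun _ : Fin (2 * h) => polys m (d - k))
      (f := fun f i => iterDeriv2 (v i) f)
      (fun f hf => Fintype.mem_piFinset.mpr fun i => mem_polys.mpr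
        (iterDeriv2_mem_lowDeg _ (mem_lightPolys.mp (mem_filter.mp hf).1).1))
      (lightPolys m d (4 * (4 * (2 ^ k * w)) ^ h)).card ?_
    · rw [Fintype.card_piFinset, prod_const, card_polys, card_univ, Fintype.card_fin, ← pow_mul,
        mul_comm (binomLt m (d - k)), mul_comm] at hfib
      exact_mod_cast hfib
    · intro y _
      rcases (G.filter fun f => (fun i => iterDeriv2 (v i) f) = y).eq_empty_or_nonempty
        with he | ⟨f₀, hf₀⟩
      · rw [he]; simp
      · refine card_le_card_of_injOn (fun f => f - f₀) ?_ fun a _ b _ hab => sub_left_injective hab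
        intro f hf
        obtain ⟨hfG, hfy⟩ := mem_filter.mp hf
        obtain ⟨hf₀G, hf₀y⟩ := mem_filter.mp hf₀
        obtain ⟨hfL, hfg⟩ := mem_filter.mp hfG
        obtain ⟨hf₀L, hf₀g⟩ := mem_filter.mp hf₀G
        refine mem_lightPolys.mpr ⟨Submodule.sub_mem _ (mem_lightPolys.mp hfL).1
          (mem_lightPolys.mp hf₀L).1, ?_⟩
        have hsub : (univ.filter fun x => (f - f₀) x ≠ 0) ⊆ g f v ∪ g f₀ v := by
          intro x hx
          have hne : f x ≠ f₀ x := sub_ne_zero.mp (mem_filter.mp hx).2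
          by_contra hcon
          simp only [g, mem_union, mem_filter, mem_univ, true_and, not_or, not_le] at hcon
          have hun : (univ : Finset (Fin (2 * h))) ⊆
              (univ.filter fun i => iterDeriv2 (v i) f x ≠ f x) ∪
              (univ.filter fun i => iterDeriv2 (v i) f₀ x ≠ f₀ x) := by
            intro i _
            by_contra hi
            simp only [mem_union, mem_filter, mem_univ, true_and, not_or, not_not] at hi
            have : iterDeriv2 (v i) f = iterDeriv2 (v i) f₀ := congrFun (hfy.trans hf₀y.symm) i
            exact hne (by rw [← hi.1, ← hi.2, this])
          have hc := (card_le_card hun).trans (card_union_le _ _)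
          rw [card_univ, Fintype.card_fin] at hc
          omega
        have hc : (nnz (f - f₀) : ℝ) ≤ (g f v).card + (g f₀ v).card := by
          exact_mod_cast (card_le_card hsub).trans (card_union_le _ _)
        linarith

/-- The additive character of `F₂` with values `±1`. -/
def signChar (a : ZMod 2) : ℝ := if a = 0 then 1 else -1

lemma signChar_add (a b : ZMod 2) : signChar (a + b) = signChar a * signChar b := by
  have h : ∀ a b : ZMod 2, a + b = 0 ↔ (a = 0 ↔ b = 0) := by decide
  unfold signChar
  by_cases ha : a = 0 <;> by_cases hb : b = 0 <;> simp [h, ha, hb]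

lemma signChar_mul_self (a : ZMod 2) : signChar a * signChar a = 1 := by
  unfold signChar; split_ifs <;> norm_num

lemma sum_signChar {m : ℕ} (f : (Fin m → ZMod 2) → ZMod 2) :
    ∑ x, signChar (f x) = 2 ^ m - 2 * nnz f := by
  have h := card_filter_add_card_filter_not (s := univ) (fun x => f x = 0)
  have h' : ((univ.filter fun x => f x = 0).card : ℝ) + nnz f = 2 ^ m := by
    rw [nnz]
    exact_mod_cast h.trans (by simp)
  simp only [signChar, sum_ite, sum_const, nsmul_eq_mul]
  rw [nnz] at *
  linarith

/-- The sum of the signs of `f` over the coset `x + span v`, with multiplicity. -/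
def cosetSum {m t : ℕ} (f : (Fin m → ZMod 2) → ZMod 2) (v : Fin t → Fin m → ZMod 2)
    (x : Fin m → ZMod 2) : ℝ := ∑ c : Fin t → ZMod 2, signChar (f (x + comb c v))

lemma sum_signChar_translate {m : ℕ} (f : (Fin m → ZMod 2) → ZMod 2) (u : Fin m → ZMod 2) :
    ∑ x, signChar (f (x + u)) = ∑ x, signChar (f x) :=
  Fintype.sum_equiv (Equiv.addRight u) _ _ fun _ => rfl

lemma sum_cosetSum {m t : ℕ} (f : (Fin m → ZMod 2) → ZMod 2) :
    ∑ v : Fin t → Fin m → ZMod 2, ∑ x, cosetSum f v x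
      = Fintype.card (Fin t → Fin m → ZMod 2) * (2 ^ t * ∑ x, signChar (f x)) := by
  have h : ∀ v : Fin t → Fin m → ZMod 2, ∑ x, cosetSum f v x = 2 ^ t * ∑ x, signChar (f x) := by
    intro v
    simp only [cosetSum]
    rw [sum_comm]
    simp [sum_signChar_translate]
  rw [sum_congr rfl fun v _ => h v, sum_const, card_univ, nsmul_eq_mul]

lemma sum_signChar_pair {m t : ℕ} (f : (Fin m → ZMod 2) → ZMod 2) (c e : Fin t → ZMod 2) :
    2 ^ m * ∑ v : Fin t → Fin m → ZMod 2, ∑ x,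
        signChar (f (x + comb c v)) * signChar (f (x + comb e v))
      ≤ Fintype.card (Fin t → Fin m → ZMod 2)
        * ((∑ x, signChar (f x)) ^ 2 + if c = e then 2 ^ m * 2 ^ m else 0) := by
  have hsq := sq_nonneg (∑ x, signChar (f x))
  split_ifs with h
  · subst h
    simp only [signChar_mul_self]
    simp only [sum_const, card_univ, nsmul_eq_mul, mul_one]
    have : (Fintype.card (Fin m → ZMod 2) : ℝ) = 2 ^ m := by simp
    rw [this]
    have h0 : (0 : ℝ) ≤ Fintype.card (Fin t → Fin m → ZMod 2) := Nat.cast_nonneg _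
    nlinarith [mul_nonneg h0 hsq]
  · have h1 : ∀ v : Fin t → Fin m → ZMod 2,
        ∑ x, signChar (f (x + comb c v)) * signChar (f (x + comb e v))
          = ∑ x, signChar (f x) * signChar (f (x + comb (e - c) v)) := by
      intro v
      refine Fintype.sum_equiv (Equiv.addRight (comb c v)) _ _ fun x => ?_
      rw [Equiv.coe_addRight, add_assoc, ← add_comb, add_sub_cancel]
    rw [sum_congr rfl fun v _ => h1 v, sum_comm]
    simp only [← mul_sum]
    rw [mul_sum]
    have h2 : ∀ x, 2 ^ m * (signChar (f x) *
        ∑ v : Fin t → Fin m → ZMod 2, signChar (f (x + comb (e - c) v)))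
          = signChar (f x) * (Fintype.card (Fin t → Fin m → ZMod 2) * ∑ y, signChar (f y)) := by
      intro x
      rw [mul_left_comm, sum_comb (sub_ne_zero.mpr (Ne.symm h)) fun u => signChar (f (x + u))]
      simp only [add_comm x]
      rw [sum_signChar_translate]
    rw [sum_congr rfl fun x _ => h2 x, ← sum_mul]
    apply le_of_eq
    ring

lemma sum_cosetSum_sq_le {m t : ℕ} (f : (Fin m → ZMod 2) → ZMod 2) :
    2 ^ m * ∑ v : Fin t → Fin m → ZMod 2, ∑ x, cosetSum f v x ^ 2
      ≤ Fintype.card (Fin t → Fin m → ZMod 2)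
        * ((2 ^ t) ^ 2 * (∑ x, signChar (f x)) ^ 2 + 2 ^ t * (2 ^ m * 2 ^ m)) := by
  have h1 : 2 ^ m * ∑ v : Fin t → Fin m → ZMod 2, ∑ x, cosetSum f v x ^ 2
      = ∑ c : Fin t → ZMod 2, ∑ e : Fin t → ZMod 2,
        2 ^ m * ∑ v : Fin t → Fin m → ZMod 2, ∑ x,
        signChar (f (x + comb c v)) * signChar (f (x + comb e v)) := by
    rw [sum_congr rfl fun c _ => (mul_sum ..).symm, ← mul_sum]
    simp only [cosetSum, sq, sum_mul_sum]
    congr 1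
    rw [sum_congr rfl fun v _ => sum_comm, sum_comm]
    refine sum_congr rfl fun c _ => ?_
    rw [sum_congr rfl fun v _ => sum_comm, sum_comm]
  rw [h1]
  refine (sum_le_sum fun c _ => sum_le_sum fun e _ => sum_signChar_pair f c e).trans_eq ?_
  simp only [← mul_sum, sum_add_distrib, sum_const, card_univ, sum_ite_eq, mem_univ, if_true,
    nsmul_eq_mul]
  congr 1
  simp
  ring

/-- For a biased function, most random cosets carry a positive sign sum. -/
lemma sum_card_cosetSum_nonpos_le {m t : ℕ} {f : (Fin m → ZMod 2) → ZMod 2} {β : ℝ} (hβ : 0 < β)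
    (hf : β * 2 ^ m ≤ ∑ x, signChar (f x)) :
    ∑ v : Fin t → Fin m → ZMod 2, ((univ.filter fun x => cosetSum f v x ≤ 0).card : ℝ)
      ≤ 2 ^ m / (β ^ 2 * 2 ^ t) * Fintype.card (Fin t → Fin m → ZMod 2) := by
  have h1 := sum_cosetSum (t := t) f
  have h2 := sum_cosetSum_sq_le (t := t) f
  set S := ∑ x, signChar (f x) with hS
  set Y : ℝ := (Fintype.card (Fin t → Fin m → ZMod 2) : ℝ) with hY
  have hm : (0 : ℝ) < 2 ^ m := by positivity
  have ht : (0 : ℝ) < 2 ^ t := by positivity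
  have hY0 : 0 ≤ Y := Nat.cast_nonneg _
  set b := S / 2 ^ m with hb
  have hSb : S = b * 2 ^ m := by rw [hb]; field_simp
  have hβb : β ≤ b := by rw [hb, le_div_iff₀ hm]; exact hf
  have h3 : ∑ v : Fin t → Fin m → ZMod 2, ∑ x, (cosetSum f v x - 2 ^ t * b) ^ 2
      ≤ Y * 2 ^ t * 2 ^ m := by
    have : ∑ v : Fin t → Fin m → ZMod 2, ∑ x, (cosetSum f v x - 2 ^ t * b) ^ 2
        = ∑ v : Fin t → Fin m → ZMod 2, ∑ x, cosetSum f v x ^ 2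
          - 2 * (2 ^ t * b) * (∑ v : Fin t → Fin m → ZMod 2, ∑ x, cosetSum f v x)
          + (2 ^ t * b) ^ 2 * (Y * 2 ^ m) := by
      simp only [sub_sq, sum_add_distrib, sum_sub_distrib, mul_sum, sum_const, card_univ,
        nsmul_eq_mul]
      rw [← hY]
      have : (Fintype.card (Fin m → ZMod 2) : ℝ) = 2 ^ m := by simp
      rw [this]
      congr 1
      · congr 1
        exact sum_congr rfl fun v _ => sum_congr rfl fun x _ => by ring
      · ring
    rw [this, h1]
    refine le_of_mul_le_mul_left ?_ hm
    rw [hSb] at h2 ⊢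
    nlinarith
  have h4 : (∑ v : Fin t → Fin m → ZMod 2, ((univ.filter fun x => cosetSum f v x ≤ 0).card : ℝ))
      * (2 ^ t * β) ^ 2 ≤ ∑ v : Fin t → Fin m → ZMod 2, ∑ x, (cosetSum f v x - 2 ^ t * b) ^ 2 := by
    rw [sum_mul]
    refine sum_le_sum fun v _ => ?_
    rw [← nsmul_eq_mul]
    refine (card_nsmul_le_sum _ (fun x => (cosetSum f v x - 2 ^ t * b) ^ 2) _ fun x hx => ?_).trans
      (sum_le_sum_of_subset_of_nonneg (filter_subset _ _) fun x _ _ => sq_nonneg _)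
    have hx0 := (mem_filter.mp hx).2
    have : 2 ^ t * β ≤ 2 ^ t * b := by gcongr
    have h5 : 0 < 2 ^ t * β := by positivity
    nlinarith
  rw [div_mul_eq_mul_div, le_div_iff₀ (by positivity)]
  refine le_of_mul_le_mul_right ?_ ht
  linarith

/-- Any `t` vectors of `F₂^m` are killed by a surjective linear map to `F₂^(m-t)`. -/
lemma exists_surjective_comb_eq_zero {m t : ℕ} (v : Fin t → Fin m → ZMod 2) :
    ∃ L : (Fin m → ZMod 2) →ₗ[ZMod 2] (Fin (m - t) → ZMod 2),
      Function.Surjective L ∧ ∀ c, L (comb c v) = 0 := by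
  set W := Submodule.span (ZMod 2) (Set.range v) with hW
  have h1 : Module.finrank (ZMod 2) W ≤ t := by
    simpa [Set.finrank] using finrank_range_le_card (R := ZMod 2) v
  have h2 := W.finrank_quotient_add_finrank
  rw [Module.finrank_fintype_fun_eq_card, Fintype.card_fin] at h2
  have h3 : m - t ≤ Module.finrank (ZMod 2) ((Fin m → ZMod 2) ⧸ W) := by omega
  let e := (Module.finBasis (ZMod 2) ((Fin m → ZMod 2) ⧸ W)).equivFun
  refine ⟨(LinearMap.funLeft (ZMod 2) (ZMod 2) (Fin.castLE h3)).comp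
    (e.toLinearMap.comp W.mkQ), ?_, ?_⟩
  · exact (LinearMap.funLeft_surjective_of_injective (ZMod 2) (ZMod 2) _
      (Fin.castLE_injective h3)).comp
      (e.surjective.comp W.mkQ_surjective)
  · intro c
    have : W.mkQ (comb c v) = 0 := by
      rw [Submodule.mkQ_apply, Submodule.Quotient.mk_eq_zero]
      exact Submodule.sum_mem _ fun i _ =>
        Submodule.smul_mem _ _ (Submodule.subset_span ⟨i, rfl⟩)
    simp [this]

/-- A biased function is determined by its class modulo the functions invariant under `t` random
directions, up to a function of small weight. -/
lemma card_lightPolys_le_coset (m d t : ℕ) {β : ℝ} (hβ : 0 < β) :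
    ((lightPolys m d ((1 - β) / 2)).card : ℝ)
      ≤ 2 * (2 ^ binomLt m d / 2 ^ binomLt (m - t) d
          * ((lightPolys m d (4 / (β ^ 2 * 2 ^ t))).card : ℝ)) := by
  classical
  refine card_le_two_mul_of_markov (β := Fin t → Fin m → ZMod 2) _
    (fun f v => ((univ.filter fun x => cosetSum f v x ≤ 0).card : ℝ))
    (fun _ _ => Nat.cast_nonneg _) (2 ^ m / (β ^ 2 * 2 ^ t)) _ ?_ ?_
  · intro f hf
    refine sum_card_cosetSum_nonpos_le hβ ?_
    rw [sum_signChar]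
    have := (mem_lightPolys.mp hf).2
    linarith
  · intro v
    obtain ⟨L, hL, hLv⟩ := exists_surjective_comb_eq_zero v
    set G := (lightPolys m d ((1 - β) / 2)).filter fun f =>
      ((univ.filter fun x => cosetSum f v x ≤ 0).card : ℝ) ≤ 2 * (2 ^ m / (β ^ 2 * 2 ^ t)) with hG
    have hmem : ∀ f ∈ G, f ∈ lowDeg m d := fun f hf => (mem_lightPolys.mp (mem_filter.mp hf).1).1
    have hfib := card_le_mul_card_image_of_maps_to (s := G ×ˢ polys (m - t) d)
      (t := polys m d) (f := fun p => p.1 + p.2 ∘ L) (fun p hp => by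
        obtain ⟨h1, h2⟩ := mem_product.mp hp
        exact mem_polys.mpr (Submodule.add_mem _ (hmem _ h1)
          (comp_linear_mem_lowDeg L (mem_polys.mp h2))))
      (lightPolys m d (4 / (β ^ 2 * 2 ^ t))).card ?_
    · rw [card_product, card_polys, card_polys] at hfib
      rw [div_mul_eq_mul_div, le_div_iff₀ (by positivity), mul_comm ((2 : ℝ) ^ binomLt m d)]
      exact_mod_cast hfib
    · intro y _
      rcases ((G ×ˢ polys (m - t) d).filter fun p => p.1 + p.2 ∘ L = y).eq_empty_or_nonempty
        with he | ⟨p₀, hp₀⟩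
      · rw [he]; simp
      · obtain ⟨hp₀G, hp₀y⟩ := mem_filter.mp hp₀
        obtain ⟨hf₀, -⟩ := mem_product.mp hp₀G
        refine card_le_card_of_injOn (fun p => p.1 - p₀.1) ?_ ?_
        · intro p hp
          obtain ⟨hpG, hpy⟩ := mem_filter.mp hp
          obtain ⟨hf, -⟩ := mem_product.mp hpG
          refine mem_lightPolys.mpr ⟨Submodule.sub_mem _ (hmem _ hf) (hmem _ hf₀), ?_⟩
          have hdiff : ∀ x, p.1 x = (p₀.2 - p.2) (L x) + p₀.1 x := by
            intro x
            have h := congrFun (hpy.trans hp₀y.symm) x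
            simp only [Pi.add_apply, Function.comp_apply] at h
            rw [Pi.sub_apply]
            linear_combination h
          have hcos : ∀ x, cosetSum p.1 v x
              = signChar ((p₀.2 - p.2) (L x)) * cosetSum p₀.1 v x := by
            intro x
            rw [cosetSum, cosetSum, mul_sum]
            refine sum_congr rfl fun c _ => ?_
            rw [hdiff, map_add, hLv, add_zero, signChar_add]
          have hsub : (univ.filter fun x => (p.1 - p₀.1) x ≠ 0)
              ⊆ (univ.filter fun x => cosetSum p.1 v x ≤ 0)
                ∪ (univ.filter fun x => cosetSum p₀.1 v x ≤ 0) := by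
            intro x hx
            have hne := (mem_filter.mp hx).2
            rw [Pi.sub_apply, hdiff x, add_sub_cancel_right] at hne
            have h := hcos x
            rw [signChar, if_neg hne] at h
            simp only [mem_union, mem_filter, mem_univ, true_and]
            by_contra! hcon
            linarith [hcon.1, hcon.2]
          have hc : (nnz (p.1 - p₀.1) : ℝ) ≤ (univ.filter fun x => cosetSum p.1 v x ≤ 0).card
              + (univ.filter fun x => cosetSum p₀.1 v x ≤ 0).card := by
            exact_mod_cast (card_le_card hsub).trans (card_union_le _ _)
          have e1 := (mem_filter.mp hf).2
          have e2 := (mem_filter.mp hf₀).2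
          calc _ ≤ _ := hc
            _ ≤ _ := add_le_add e1 e2
            _ = _ := by ring
        · intro p hp q hq hpq
          have h1 : p.1 = q.1 := sub_left_injective hpq
          have h2 := (mem_filter.mp hp).2.trans (mem_filter.mp hq).2.symm
          simp only [h1, add_right_inj] at h2
          exact Prod.ext h1 (hL.injective_comp_right h2)

lemma binomLt_pred_ge {n r : ℕ} {γ : ℝ} (hr : (r : ℝ) ≤ γ * (n + 1)) :
    (1 - γ) * binomLt (n + 1) (r + 1) ≤ binomLt n (r + 1) := by
  unfold binomLt
  push_cast
  rw [mul_sum]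
  refine sum_le_sum fun i hi => ?_
  have hir : i ≤ r := Nat.lt_succ_iff.mp (mem_range.mp hi)
  rcases le_or_gt i (n + 1) with hin | hin
  · have h : (n.choose i : ℝ) * (n + 1) = (n + 1).choose i * (n + 1 - i) := by
      have := Nat.choose_mul_succ_eq n i
      rw [← Nat.cast_inj (R := ℝ)] at this
      push_cast [Nat.cast_sub hin] at this
      exact this
    have hi' : (i : ℝ) ≤ r := by exact_mod_cast hir
    have hc : (0 : ℝ) ≤ (n + 1).choose i := Nat.cast_nonneg _
    refine le_of_mul_le_mul_right ?_ (by positivity : (0 : ℝ) < n + 1)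
    rw [h]
    nlinarith
  · rw [Nat.choose_eq_zero_of_lt hin]
    simp

lemma binomLt_sub_ge {m r t : ℕ} {γ : ℝ} (hγ : 0 ≤ γ) (hγ1 : γ ≤ 1 / 2) (hr : (r : ℝ) ≤ γ * m)
    (ht : 2 * t ≤ m) : (1 - 2 * γ) ^ t * binomLt m (r + 1) ≤ binomLt (m - t) (r + 1) := by
  induction t with
  | zero => simp
  | succ t ih =>
    obtain ⟨n, hn⟩ : ∃ n, m - t = n + 1 := ⟨m - t - 1, by omega⟩
    have hn' : m - (t + 1) = n := by omega
    rw [hn']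
    have h1 := ih (by omega)
    rw [hn] at h1
    have hmn : (m : ℝ) ≤ 2 * (n + 1) := by
      have : m ≤ 2 * (n + 1) := by omega
      exact_mod_cast this
    have h2 : (1 - 2 * γ) * binomLt (n + 1) (r + 1) ≤ binomLt n (r + 1) :=
      binomLt_pred_ge (by nlinarith)
    calc (1 - 2 * γ) ^ (t + 1) * (binomLt m (r + 1) : ℝ)
        = (1 - 2 * γ) * ((1 - 2 * γ) ^ t * binomLt m (r + 1)) := by ring
      _ ≤ (1 - 2 * γ) * binomLt (n + 1) (r + 1) := by
        gcongr
        linarith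
      _ ≤ _ := h2

lemma binomLt_degree_pred_le {m r d : ℕ} {γ : ℝ} (hγ : 0 ≤ γ) (hγ1 : γ ≤ 1 / 2)
    (hr : (r : ℝ) ≤ γ * m)
    (hd : d ≤ r) : (binomLt m d : ℝ) ≤ 2 * γ * binomLt m (d + 1) := by
  have h1 : ∀ i ∈ range d, (m.choose i : ℝ) ≤ 2 * γ * m.choose (i + 1) := by
    intro i hi
    have hir : i + 1 ≤ r := (mem_range.mp hi).trans_le hd
    have hir' : (i : ℝ) + 1 ≤ r := by exact_mod_cast hir
    have hi0 : (0 : ℝ) ≤ i := Nat.cast_nonneg _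
    have hm0 : (0 : ℝ) ≤ m := Nat.cast_nonneg _
    have him' : (i : ℝ) + 1 ≤ m / 2 := by nlinarith
    have him : i ≤ m := by
      have : (i : ℝ) ≤ m := by linarith
      exact_mod_cast this
    have h := Nat.choose_succ_right_eq m i
    rw [← Nat.cast_inj (R := ℝ)] at h
    push_cast [Nat.cast_sub him] at h
    have hc : (0 : ℝ) ≤ m.choose i := Nat.cast_nonneg _
    have hc' : (0 : ℝ) ≤ m.choose (i + 1) := Nat.cast_nonneg _
    have hm : (0 : ℝ) < m / 2 := by linarith
    refine le_of_mul_le_mul_right ?_ hm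
    nlinarith
  unfold binomLt
  rw [sum_range_succ']
  push_cast
  rw [mul_add, mul_sum]
  have := sum_le_sum h1
  have : 0 ≤ 2 * γ * ((m.choose 0 : ℕ) : ℝ) := by positivity
  linarith

lemma binomLt_sub_degree_le {m r : ℕ} {γ : ℝ} (hγ : 0 ≤ γ) (hγ1 : γ ≤ 1 / 2)
    (hr : (r : ℝ) ≤ γ * m) (k : ℕ) :
    (binomLt m (r + 1 - k) : ℝ) ≤ (2 * γ) ^ k * binomLt m (r + 1) := by
  induction k with
  | zero => simp
  | succ k ih =>
    rcases Nat.eq_zero_or_pos (r + 1 - k) with h | h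
    · rw [show r + 1 - (k + 1) = 0 by omega]
      simp only [binomLt, range_zero, sum_empty, Nat.cast_zero]
      positivity
    · have h1 := binomLt_degree_pred_le (d := r + 1 - (k + 1)) hγ hγ1 hr (by omega)
      rw [show r + 1 - (k + 1) + 1 = r + 1 - k by omega] at h1
      calc _ ≤ _ := h1
        _ ≤ 2 * γ * ((2 * γ) ^ k * binomLt m (r + 1)) := by gcongr
        _ = _ := by ring

lemma binomLt_le_mul_pow {m r : ℕ} (hr : r ≤ m) {x : ℝ} (hx : 0 < x) (hx1 : x ≤ 1) :
    (binomLt m (r + 1) : ℝ) * x ^ r ≤ (1 + x) ^ m := by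
  rw [add_comm 1 x, add_pow, binomLt]
  push_cast
  rw [sum_mul]
  calc ∑ i ∈ range (r + 1), (m.choose i : ℝ) * x ^ r
      ≤ ∑ i ∈ range (r + 1), x ^ i * 1 ^ (m - i) * m.choose i := by
        refine sum_le_sum fun i hi => ?_
        rw [one_pow, mul_one, mul_comm]
        gcongr ?_ * _
        exact pow_le_pow_of_le_one hx.le hx1 (Nat.lt_succ_iff.mp (mem_range.mp hi))
    _ ≤ _ := sum_le_sum_of_subset_of_nonneg (range_mono (by omega)) fun i _ _ => by positivity

lemma binomLt_pow_le {m r : ℕ} (hr : 1000 * r ≤ m) :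
    (binomLt m (r + 1) : ℝ) ^ 10 ≤ 2 ^ m := by
  have h := binomLt_le_mul_pow (m := m) (r := r) (by omega) (x := 1 / 32) (by norm_num)
    (by norm_num)
  have h1 : (binomLt m (r + 1) : ℝ) ≤ (1 + 1 / 32) ^ m * 32 ^ r := by
    rw [one_div, inv_pow, ← one_div, mul_one_div, div_le_iff₀ (by positivity)] at h
    simpa using h
  calc (binomLt m (r + 1) : ℝ) ^ 10 ≤ ((1 + 1 / 32) ^ m * 32 ^ r) ^ 10 := by gcongr
    _ = ((1 + 1 / 32) ^ 10) ^ m * (2 ^ 50) ^ r := by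
      rw [mul_pow, ← pow_mul, ← pow_mul, ← pow_mul, ← pow_mul, mul_comm m, mul_comm r, pow_mul 32]
      norm_num [pow_mul]
    _ ≤ (3 / 2) ^ m * ((4 / 3) ^ 1000) ^ r := by
      gcongr
      · norm_num
      · calc (2 : ℝ) ^ 50 ≤ ((4 / 3) ^ 20) ^ 50 := by gcongr; norm_num
          _ = (4 / 3) ^ 1000 := by rw [← pow_mul]
    _ ≤ (3 / 2) ^ m * (4 / 3) ^ m := by
      rw [← pow_mul]
      gcongr
      norm_num
    _ = 2 ^ m := by rw [← mul_pow]; norm_num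

lemma two_pow_eq_exp (n : ℕ) : (2 : ℝ) ^ n = Real.exp (Real.log 2 * n) := by
  rw [mul_comm, Real.exp_nat_mul, Real.exp_log two_pos]

lemma natCast_le_of_mul_le {m r : ℕ} (hr : 32768 * r ≤ m) : (r : ℝ) ≤ 1 / 32768 * m := by
  have : (32768 : ℝ) * r ≤ m := by exact_mod_cast hr
  linarith

lemma card_lightPolys_biased_le {m r t : ℕ} (hr : 32768 * r ≤ m) (ht : 2 * t ≤ m) {β s : ℝ}
    (hβ : 0 < β) (hs : 0 < s) (hs1 : s ≤ 1) (hst : 4 / (β ^ 2 * 2 ^ t) = s ^ 2) :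
    ((lightPolys m (r + 1) ((1 - β) / 2)).card : ℝ)
      ≤ 4 * 2 ^ binomLt m (r + 1) * Real.exp
        ((4 * s - Real.log 2 * (1 - 2 * (1 / 32768)) ^ t) * binomLt m (r + 1)) := by
  have h1 := card_lightPolys_le_coset m (r + 1) t hβ
  rw [hst] at h1
  have h2 := card_lightPolys_le m (r + 1) (w := s ^ 2) (by positivity) (pow_le_one₀ hs.le hs1)
  rw [Real.sqrt_sq hs.le] at h2
  have h3 := binomLt_sub_ge (γ := 1 / 32768) (by norm_num) (by norm_num)
    (natCast_le_of_mul_le hr) ht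
  have hlog : 0 < Real.log 2 := Real.log_pos one_lt_two
  set N : ℝ := (binomLt m (r + 1) : ℝ)
  have h4 : ((2 : ℝ) ^ binomLt (m - t) (r + 1))⁻¹
      ≤ Real.exp (-(Real.log 2 * ((1 - 2 * (1 / 32768)) ^ t * N))) := by
    rw [two_pow_eq_exp, ← Real.exp_neg]
    refine Real.exp_le_exp.mpr (neg_le_neg ?_)
    gcongr
  calc _ ≤ _ := h1
    _ ≤ 2 * (2 ^ binomLt m (r + 1)
          * Real.exp (-(Real.log 2 * ((1 - 2 * (1 / 32768)) ^ t * N)))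
          * (2 * Real.exp (4 * s * N))) := by
      rw [div_eq_mul_inv]
      gcongr
    _ = 4 * 2 ^ binomLt m (r + 1) * (Real.exp (4 * s * N)
          * Real.exp (-(Real.log 2 * ((1 - 2 * (1 / 32768)) ^ t * N)))) := by ring
    _ = _ := by rw [← Real.exp_add]; ring_nf

lemma card_lightPolys_quarter_mul_le {m r : ℕ} (hr : 32768 * r ≤ m) (hm : 60 ≤ m) :
    ((lightPolys m (r + 1) ((1 - 1 / 4) / 2)).card : ℝ) * (15 / 8) ^ binomLt m (r + 1)
      ≤ 2 ^ binomLt m (r + 1) * (4 * Real.exp (-(binomLt m (r + 1) / 32))) := by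
  have h1 := card_lightPolys_biased_le (t := 30) (β := 1 / 4) (s := 1 / 4096) hr (by omega)
    (by norm_num) (by norm_num) (by norm_num) (by norm_num)
  have hq : (63 / 64 : ℝ) ≤ (1 - 2 * (1 / 32768)) ^ 30 := by norm_num
  have hl := Real.log_two_lt_d9
  have hl0 := Real.log_two_gt_d9
  have h15 : (15 / 8 : ℝ) ^ binomLt m (r + 1)
      ≤ Real.exp ((Real.log 2 - 1 / 16) * binomLt m (r + 1)) := by
    rw [mul_comm, Real.exp_nat_mul]
    gcongr
    rw [sub_eq_add_neg, Real.exp_add, Real.exp_log two_pos]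
    linarith [Real.add_one_le_exp (-(1 / 16) : ℝ)]
  have hN : (0 : ℝ) ≤ binomLt m (r + 1) := Nat.cast_nonneg _
  calc _ ≤ _ := mul_le_mul h1 h15 (by positivity) (by positivity)
    _ = 2 ^ binomLt m (r + 1) * (4 * (Real.exp ((4 * (1 / 4096)
          - Real.log 2 * (1 - 2 * (1 / 32768)) ^ 30) * binomLt m (r + 1))
          * Real.exp ((Real.log 2 - 1 / 16) * binomLt m (r + 1)))) := by ring
    _ ≤ _ := by
      rw [← Real.exp_add, ← add_mul]
      gcongr
      nlinarith

lemma card_lightPolys_level_mul_le {m r l : ℕ} (hr : 32768 * r ≤ m) (hl : 2 ≤ l)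
    (hm : 2 * (4 * l + 20) ≤ m) :
    ((lightPolys m (r + 1) ((1 - (1 / 2) ^ (l + 1)) / 2)).card : ℝ)
        * Real.exp ((1 / 2) ^ l * binomLt m (r + 1))
      ≤ 2 ^ binomLt m (r + 1)
        * (4 * Real.exp (-(3 / 10 * ((15 / 16) ^ l * binomLt m (r + 1))))) := by
  have h1 := card_lightPolys_biased_le (t := 4 * l + 20) (β := (1 / 2) ^ (l + 1))
    (s := (1 / 2) ^ (l + 8)) hr hm (by positivity) (by positivity)
    (pow_le_one₀ (by norm_num) (by norm_num)) (by
      simp only [one_div, inv_pow]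
      rw [div_eq_iff (by positivity), pow_add 2 (4 * l) 20, pow_add 2 l 1, pow_add 2 l 8,
        mul_comm 4 l, pow_mul]
      field_simp
      norm_num)
  have hq : (15 / 16 : ℝ) ≤ (1 - 2 * (1 / 32768)) ^ 4 := by norm_num
  have hq' : (9 / 10 : ℝ) ≤ (1 - 2 * (1 / 32768)) ^ 20 := by norm_num
  have hq'' : (9 / 10 : ℝ) * (15 / 16) ^ l ≤ (1 - 2 * (1 / 32768)) ^ (4 * l + 20) := by
    rw [pow_add, pow_mul, mul_comm]
    gcongr
  have hhalf : (1 / 2 : ℝ) ^ l ≤ (8 / 15) ^ 2 * (15 / 16) ^ l := by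
    calc (1 / 2 : ℝ) ^ l = (8 / 15) ^ l * (15 / 16) ^ l := by rw [← mul_pow]; norm_num
      _ ≤ _ := by
        gcongr ?_ * _
        exact pow_le_pow_of_le_one (by norm_num) (by norm_num) hl
  have hlog := Real.log_two_gt_d9
  have hN : (0 : ℝ) ≤ binomLt m (r + 1) := Nat.cast_nonneg _
  have ha : (0 : ℝ) < (15 / 16) ^ l := by positivity
  calc _ ≤ _ := mul_le_mul_of_nonneg_right h1 (Real.exp_nonneg _)
    _ = 2 ^ binomLt m (r + 1) * (4 * (Real.exp ((4 * (1 / 2) ^ (l + 8)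
          - Real.log 2 * (1 - 2 * (1 / 32768)) ^ (4 * l + 20)) * binomLt m (r + 1))
          * Real.exp ((1 / 2) ^ l * binomLt m (r + 1)))) := by ring
    _ ≤ _ := by
      rw [← Real.exp_add, ← add_mul]
      gcongr
      rw [← mul_assoc, ← neg_mul]
      gcongr
      rw [pow_add]
      have : 69 / 100 * (9 / 10 * (15 / 16) ^ l)
          ≤ Real.log 2 * (1 - 2 * (1 / 32768)) ^ (4 * l + 20) := by
        gcongr
        linarith
      linarith

lemma card_lightPolys_pow_le {m r k : ℕ} (hr : 32768 * r ≤ m) (hk : 1 ≤ k) :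
    ((lightPolys m (r + 1) ((1 / 4) ^ (k + 1))).card : ℝ)
      ≤ 4 * Real.exp ((1 / 4) ^ (k + 1) / 8 * binomLt m (r + 1)) := by
  have e1 : (2 : ℝ) ^ k * (1 / 4) ^ (k + 1) = (1 / 2) ^ k / 4 := by
    rw [pow_succ, ← mul_assoc, ← mul_pow]
    norm_num
    ring
  have h1 := card_lightPolys_le_deriv m (r + 1) k 24 (w := (1 / 4) ^ (k + 1)) (by positivity) (by
    rw [e1]
    have : (1 / 2 : ℝ) ^ k ≤ 1 := pow_le_one₀ (by norm_num) (by norm_num)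
    linarith)
  have e2 : 4 * (4 * ((2 : ℝ) ^ k * (1 / 4) ^ (k + 1))) ^ 24 = (2 * (1 / 4096) ^ k) ^ 2 := by
    rw [e1, mul_div_cancel₀ _ (by norm_num), ← pow_mul, mul_pow, ← pow_mul, mul_comm k 24,
      mul_comm k 2, pow_mul, pow_mul]
    norm_num
  rw [e2] at h1
  have hp : (1 / 4096 : ℝ) ^ k ≤ 1 / 4096 := pow_le_of_le_one (by norm_num) (by norm_num) (by omega)
  have h2 := card_lightPolys_le m (r + 1) (w := (2 * (1 / 4096) ^ k) ^ 2) (by positivity)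
    (pow_le_one₀ (by positivity) (by linarith))
  rw [Real.sqrt_sq (by positivity)] at h2
  have h3 := binomLt_sub_degree_le (γ := 1 / 32768) (by norm_num) (by norm_num)
    (natCast_le_of_mul_le hr) k
  have hl := Real.log_two_lt_d9
  have hl0 := Real.log_two_gt_d9
  set N : ℝ := (binomLt m (r + 1) : ℝ) with hN
  have hN0 : 0 ≤ N := Nat.cast_nonneg _
  have h4 : (2 : ℝ) ^ (2 * 24 * binomLt m (r + 1 - k))
      ≤ Real.exp (48 * ((2 * (1 / 32768)) ^ k * N)) := by
    rw [two_pow_eq_exp]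
    refine Real.exp_le_exp.mpr ?_
    push_cast
    have h0 : (0 : ℝ) ≤ binomLt m (r + 1 - k) := Nat.cast_nonneg _
    nlinarith
  have e3 : (2 * (1 / 32768) : ℝ) ^ k ≤ 1 / 4096 * (1 / 4) ^ k := by
    calc (2 * (1 / 32768) : ℝ) ^ k = (1 / 4096) ^ k * (1 / 4) ^ k := by rw [← mul_pow]; norm_num
      _ ≤ _ := by gcongr
  have e4 : (1 / 4096 : ℝ) ^ k ≤ 1 / 1024 * (1 / 4) ^ k := by
    calc (1 / 4096 : ℝ) ^ k = (1 / 1024) ^ k * (1 / 4) ^ k := by rw [← mul_pow]; norm_num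
      _ ≤ _ := by
        gcongr
        exact pow_le_of_le_one (by norm_num) (by norm_num) (by omega)
  calc _ ≤ _ := h1
    _ ≤ 2 * (Real.exp (48 * ((2 * (1 / 32768)) ^ k * N))
          * (2 * Real.exp (4 * (2 * (1 / 4096) ^ k) * N))) := by gcongr
    _ = 4 * (Real.exp (48 * ((2 * (1 / 32768)) ^ k * N))
          * Real.exp (4 * (2 * (1 / 4096) ^ k) * N)) := by ring
    _ ≤ _ := by
      rw [← Real.exp_add, ← mul_assoc, ← add_mul]
      gcongr
      rw [pow_succ]
      have hP : (0 : ℝ) < (1 / 4) ^ k := by positivity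
      linarith

lemma card_lightPolys_pow_mul_le {m r k : ℕ} (hr : 32768 * r ≤ m) (hk : 1 ≤ k) :
    ((lightPolys m (r + 1) ((1 / 4) ^ (k + 1))).card : ℝ)
        * (2 * (1 - (1 / 4) ^ (k + 2))) ^ binomLt m (r + 1)
      ≤ 2 ^ binomLt m (r + 1)
        * (4 * Real.exp (-((1 / 4) ^ (k + 1) / 8 * binomLt m (r + 1)))) := by
  have h1 := card_lightPolys_pow_le (k := k) hr hk
  have h0 : 0 ≤ 1 - (1 / 4 : ℝ) ^ (k + 2) :=
    sub_nonneg.mpr (pow_le_one₀ (by norm_num) (by norm_num))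
  have h2 : (1 - (1 / 4 : ℝ) ^ (k + 2)) ^ binomLt m (r + 1)
      ≤ Real.exp (-(1 / 4) ^ (k + 2) * binomLt m (r + 1)) := by
    rw [mul_comm, Real.exp_nat_mul]
    refine pow_le_pow_left₀ h0 ?_ _
    linarith [Real.add_one_le_exp (-(1 / 4 : ℝ) ^ (k + 2))]
  rw [mul_pow]
  calc _ ≤ 4 * Real.exp ((1 / 4) ^ (k + 1) / 8 * binomLt m (r + 1))
        * (2 ^ binomLt m (r + 1) * Real.exp (-(1 / 4) ^ (k + 2) * binomLt m (r + 1))) :=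
      mul_le_mul h1 (by gcongr) (mul_nonneg (by positivity) (pow_nonneg h0 _)) (by positivity)
    _ = 2 ^ binomLt m (r + 1) * (4 * (Real.exp ((1 / 4) ^ (k + 1) / 8 * binomLt m (r + 1))
        * Real.exp (-(1 / 4) ^ (k + 2) * binomLt m (r + 1)))) := by ring
    _ = _ := by rw [← Real.exp_add]; ring_nf

lemma card_lightPolys_tail_mul_le {m r k K : ℕ} {ε : ℝ} (hε : 0 < ε) (hk : (1 / 2) ^ k ≤ ε / 4)
    (hK : (K : ℝ) ≤ (1 - ε) * binomLt m (r + 1)) :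
    ((lightPolys m (r + 1) ((1 / 4) ^ (k + 2))).card : ℝ) * 2 ^ K
      ≤ 2 ^ binomLt m (r + 1) * (2 * Real.exp (-(ε / 4 * binomLt m (r + 1)))) := by
  have h1 := card_lightPolys_le m (r + 1) (w := (1 / 4) ^ (k + 2)) (by positivity)
    (pow_le_one₀ (by norm_num) (by norm_num))
  have hs : √((1 / 4 : ℝ) ^ (k + 2)) = (1 / 2) ^ (k + 2) := by
    rw [Real.sqrt_eq_iff_mul_self_eq (by positivity) (by positivity), ← mul_pow]
    norm_num
  have hl := Real.log_two_gt_d9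
  have hN : (0 : ℝ) ≤ binomLt m (r + 1) := Nat.cast_nonneg _
  rw [hs] at h1
  calc _ ≤ _ := mul_le_mul_of_nonneg_right h1 (by positivity)
    _ = 2 * (Real.exp (4 * (1 / 2) ^ (k + 2) * binomLt m (r + 1)) * Real.exp (Real.log 2 * K)) := by
      rw [two_pow_eq_exp]; ring
    _ ≤ 2 * (Real.exp (Real.log 2 * binomLt m (r + 1))
          * Real.exp (-(ε / 4 * binomLt m (r + 1)))) := by
      rw [← Real.exp_add, ← Real.exp_add]
      refine mul_le_mul_of_nonneg_left (Real.exp_le_exp.mpr ?_) two_pos.le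
      rw [pow_add]
      have e1 : (1 / 2 : ℝ) ^ k * binomLt m (r + 1) ≤ ε / 4 * binomLt m (r + 1) := by gcongr
      have e2 : Real.log 2 * K ≤ Real.log 2 * ((1 - ε) * binomLt m (r + 1)) := by gcongr
      have e3 : 1 / 2 * (ε * binomLt m (r + 1)) ≤ Real.log 2 * (ε * binomLt m (r + 1)) := by
        gcongr
        linarith
      linarith
    _ = _ := by rw [← two_pow_eq_exp]; ring

/-- The levels `l` at which biases between `2^{-(l+1)}` and `2^{-l}` matter. -/
def biasLevels (N a : ℕ) : Finset ℕ := (range (N * 2 ^ a)).filter fun l => 2 ≤ l ∧ 2 ^ l ≤ N * 2 ^ a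

lemma exists_quarter_pow_between {w : ℝ} {n : ℕ} (h1 : w ≤ (1 / 4) ^ 2)
    (h2 : (1 / 4) ^ (n + 2) < w) :
    ∃ k ∈ Icc 1 n, (1 / 4) ^ (k + 2) < w ∧ w ≤ (1 / 4) ^ (k + 1) := by
  induction n with
  | zero => exact absurd h1 (not_le.mpr h2)
  | succ n ih =>
    by_cases h : (1 / 4) ^ (n + 2) < w
    · obtain ⟨k, hk, hk'⟩ := ih h
      exact ⟨k, by simp only [mem_Icc] at hk ⊢; omega, hk'⟩
    · exact ⟨n + 1, by simp, h2, not_lt.mp h⟩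

lemma exists_biasLevel {N a : ℕ} {b : ℝ} (hN : 0 < N) (hb : b < 1 / 4)
    (hb' : (1 / 2) ^ a / N < b) :
    ∃ l ∈ biasLevels N a, (1 / 2) ^ (l + 1) < b ∧ b ≤ (1 / 2) ^ l := by
  have hN' : (0 : ℝ) < N := by exact_mod_cast hN
  have hb0 : 0 < b := lt_trans (by positivity) hb'
  obtain ⟨l, h1, h2⟩ := exists_nat_pow_near_of_lt_one hb0 (by linarith)
    (by norm_num : (0 : ℝ) < 1 / 2) (by norm_num)
  refine ⟨l, ?_, h1, h2⟩
  have hl : (2 : ℝ) ^ l < N * 2 ^ a := by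
    have h3 : (1 / 2 : ℝ) ^ a / N < (1 / 2) ^ l := hb'.trans_le h2
    rw [div_lt_iff₀ hN', one_div, inv_pow, inv_pow, inv_mul_eq_div,
      lt_div_iff₀ (by positivity), inv_mul_eq_div, div_lt_iff₀ (by positivity)] at h3
    exact h3
  have hl' : 2 ^ l < N * 2 ^ a := by exact_mod_cast hl
  have hl2 : 2 ≤ l := by
    by_contra! hl2
    have : (1 / 2 : ℝ) ^ 2 ≤ (1 / 2) ^ (l + 1) :=
      pow_le_pow_of_le_one (by norm_num) (by norm_num) (by omega)
    linarith
  simp only [biasLevels, mem_filter, mem_range]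
  exact ⟨l.lt_two_pow_self.trans hl', hl2, hl'.le⟩

lemma two_mul_one_sub_pow_le {N K : ℕ} (a n : ℕ) (hK : K ≤ N) (hN : 0 < N) {w : ℝ}
    (hw0 : 0 ≤ w) (hw1 : w ≤ 1) :
    (2 * (1 - w)) ^ K ≤ Real.exp ((1 / 2) ^ a)
      + ∑ l ∈ biasLevels N a,
          (if w ≤ (1 - (1 / 2) ^ (l + 1)) / 2 then Real.exp ((1 / 2) ^ l * N) else 0)
      + (if w ≤ (1 - 1 / 4) / 2 then (15 / 8) ^ N else 0)
      + ∑ k ∈ Icc 1 n,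
          (if w ≤ (1 / 4) ^ (k + 1) then (2 * (1 - (1 / 4) ^ (k + 2))) ^ N else 0)
      + (if w ≤ (1 / 4) ^ (n + 2) then 2 ^ K else 0) := by
  have hN' : (0 : ℝ) < N := by exact_mod_cast hN
  have hKN : (K : ℝ) ≤ N := by exact_mod_cast hK
  have hf (k : ℕ) : (1 : ℝ) ≤ 2 * (1 - (1 / 4) ^ (k + 2)) := by
    have : (1 / 4 : ℝ) ^ (k + 2) ≤ (1 / 4) ^ 2 :=
      pow_le_pow_of_le_one (by norm_num) (by norm_num) (by omega)
    linarith
  have t1 : 0 ≤ Real.exp ((1 / 2) ^ a) := Real.exp_nonneg _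
  have s2 (l : ℕ) : 0 ≤ (if w ≤ (1 - (1 / 2) ^ (l + 1)) / 2 then
      Real.exp ((1 / 2) ^ l * N) else 0) := by positivity
  have t2 := sum_nonneg fun l (_ : l ∈ biasLevels N a) => s2 l
  have t3 : (0 : ℝ) ≤ (if w ≤ (1 - 1 / 4) / 2 then (15 / 8) ^ N else 0) := by positivity
  have s4 (k : ℕ) : (0 : ℝ) ≤
      (if w ≤ (1 / 4) ^ (k + 1) then (2 * (1 - (1 / 4) ^ (k + 2))) ^ N else 0) := by
    split_ifs
    · exact pow_nonneg (zero_le_one.trans (hf k)) _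
    · exact le_rfl
  have t4 := sum_nonneg fun k (_ : k ∈ Icc 1 n) => s4 k
  have t5 : (0 : ℝ) ≤ (if w ≤ (1 / 4) ^ (n + 2) then 2 ^ K else 0) := by positivity
  have hpow {B : ℝ} (h1 : 1 ≤ B) (h : 2 * (1 - w) ≤ B) : (2 * (1 - w)) ^ K ≤ B ^ N :=
    (pow_le_pow_left₀ (by linarith) h K).trans (pow_le_pow_right₀ h1 hK)
  by_cases c1 : w ≤ (1 / 4) ^ (n + 2)
  · rw [if_pos c1]
    have : (2 * (1 - w)) ^ K ≤ 2 ^ K := pow_le_pow_left₀ (by linarith) (by linarith) K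
    linarith
  rw [if_neg c1]
  by_cases c2 : w ≤ (1 / 4) ^ 2
  · obtain ⟨k, hk, h1, h2⟩ := exists_quarter_pow_between c2 (not_le.mp c1)
    have h3 := single_le_sum (fun k _ => s4 k) hk
    rw [if_pos h2] at h3
    have := hpow (hf k) (by linarith)
    linarith
  by_cases c3 : w ≤ (1 - 1 / 4) / 2
  · rw [if_pos c3]
    have := hpow (B := 15 / 8) (by norm_num) (by linarith)
    linarith
  rw [if_neg c3]
  have hexp : (2 * (1 - w)) ^ K ≤ Real.exp (K * (1 - 2 * w)) := by
    rw [Real.exp_nat_mul]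
    refine pow_le_pow_left₀ (by linarith) ?_ _
    linarith [Real.add_one_le_exp (1 - 2 * w)]
  by_cases c4 : 1 - 2 * w ≤ (1 / 2) ^ a / N
  · have h1 : K * (1 - 2 * w) ≤ (1 / 2) ^ a := by
      calc K * (1 - 2 * w) ≤ K * ((1 / 2) ^ a / N) := by gcongr
        _ ≤ N * ((1 / 2) ^ a / N) := by gcongr
        _ = _ := by field_simp
    have := Real.exp_le_exp.mpr h1
    linarith
  · obtain ⟨l, hl, h1, h2⟩ := exists_biasLevel hN (by linarith) (not_le.mp c4)
    have h3 := single_le_sum (fun l _ => s2 l) hl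
    rw [if_pos (by linarith)] at h3
    have h4 : K * (1 - 2 * w) ≤ (1 / 2) ^ l * N := by
      calc K * (1 - 2 * w) ≤ K * (1 / 2) ^ l := by gcongr
        _ ≤ N * (1 / 2) ^ l := by gcongr
        _ = _ := mul_comm _ _
    have := Real.exp_le_exp.mpr h4
    linarith

lemma sum_polys_ite_eq (m d : ℕ) (w c : ℝ) :
    ∑ f ∈ polys m d, (if (nnz f : ℝ) / 2 ^ m ≤ w then c else 0) = (lightPolys m d w).card * c := by
  rw [← sum_filter, sum_const, nsmul_eq_mul]
  simp only [lightPolys, div_le_iff₀ (pow_pos (two_pos (α := ℝ)) m)]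

lemma binomLt_succ_pos (m r : ℕ) : 0 < binomLt m (r + 1) := by
  rw [binomLt, sum_range_succ']
  simp

lemma level_le_of_mem_biasLevels {m r a l : ℕ} (hr : 32768 * r ≤ m) (hm : 40 * a + 200 ≤ m)
    (hl : l ∈ biasLevels (binomLt m (r + 1)) a) : 2 * (4 * l + 20) ≤ m := by
  have h1 := binomLt_pow_le (m := m) (r := r) (by omega)
  have h2 : (2 ^ l : ℝ) ≤ binomLt m (r + 1) * 2 ^ a := by
    exact_mod_cast (mem_filter.mp hl).2.2
  have h3 : (2 : ℝ) ^ (l * 10) ≤ 2 ^ (m + a * 10) := by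
    rw [pow_mul, pow_add, pow_mul]
    calc _ ≤ ((binomLt m (r + 1) : ℝ) * 2 ^ a) ^ 10 := by gcongr
      _ ≤ _ := by rw [mul_pow]; gcongr
  have := (pow_le_pow_iff_right₀ (one_lt_two (α := ℝ))).mp h3
  omega

lemma sqrt_le_of_mem_biasLevels {N a l : ℕ} (hl : l ∈ biasLevels N a) :
    √((N : ℝ) / 2 ^ a) ≤ (15 / 16) ^ l * N := by
  have h2 : (2 ^ l : ℝ) ≤ N * 2 ^ a := by exact_mod_cast (mem_filter.mp hl).2.2
  rw [Real.sqrt_le_left (by positivity), div_le_iff₀ (by positivity)]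
  have h3 : (1 : ℝ) ≤ ((15 / 16) ^ l) ^ 2 * 2 ^ l := by
    rw [← pow_mul, mul_comm l 2, pow_mul, ← mul_pow]
    exact one_le_pow₀ (by norm_num)
  calc (N : ℝ) ≤ N * (((15 / 16) ^ l) ^ 2 * 2 ^ l) := le_mul_of_one_le_right (by positivity) h3
    _ ≤ N * (((15 / 16) ^ l) ^ 2 * (N * 2 ^ a)) := by gcongr
    _ = _ := by ring

lemma sum_polys_pow_le {m r a n K : ℕ} {ε : ℝ} (hr : 32768 * r ≤ m) (hm : 40 * a + 200 ≤ m)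
    (hε : 0 < ε) (hn : (1 / 2) ^ n ≤ ε / 4) (hK : (K : ℝ) ≤ (1 - ε) * binomLt m (r + 1)) :
    ∑ f ∈ polys m (r + 1), (2 * (1 - (nnz f : ℝ) / 2 ^ m)) ^ K
      ≤ 2 ^ binomLt m (r + 1) * (Real.exp ((1 / 2) ^ a)
        + binomLt m (r + 1) * 2 ^ a
          * (4 * Real.exp (-(3 / 10 * √((binomLt m (r + 1) : ℝ) / 2 ^ a))))
        + 4 * Real.exp (-(binomLt m (r + 1) / 32))
        + ∑ k ∈ Icc 1 n, 4 * Real.exp (-((1 / 4) ^ (k + 1) / 8 * binomLt m (r + 1)))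
        + 2 * Real.exp (-(ε / 4 * binomLt m (r + 1)))) := by
  have hN := binomLt_succ_pos m r
  have hKN : K ≤ binomLt m (r + 1) := by
    have : (0 : ℝ) ≤ binomLt m (r + 1) := Nat.cast_nonneg _
    have : (K : ℝ) ≤ binomLt m (r + 1) := by nlinarith
    exact_mod_cast this
  have hw (f : (Fin m → ZMod 2) → ZMod 2) : (nnz f : ℝ) / 2 ^ m ≤ 1 := by
    rw [div_le_one (by positivity)]
    have : nnz f ≤ 2 ^ m := (card_le_univ _).trans (by simp)
    exact_mod_cast this
  refine (sum_le_sum fun f _ => two_mul_one_sub_pow_le a n hKN hN (by positivity) (hw f)).trans ?_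
  simp only [sum_add_distrib]
  rw [sum_comm, sum_comm (t := Icc 1 n)]
  simp only [sum_polys_ite_eq, sum_const, nsmul_eq_mul, card_polys, mul_add, mul_sum]
  push_cast
  refine add_le_add (add_le_add (add_le_add (add_le_add le_rfl ?_)
    (card_lightPolys_quarter_mul_le hr (by omega)))
    (sum_le_sum fun k hk => card_lightPolys_pow_mul_le hr (mem_Icc.mp hk).1))
    (card_lightPolys_tail_mul_le hε hn hK)
  calc
    _ ≤ ∑ _l ∈ biasLevels (binomLt m (r + 1)) a, 2 ^ binomLt m (r + 1)
        * (4 * Real.exp (-(3 / 10 * √((binomLt m (r + 1) : ℝ) / 2 ^ a)))) := by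
      refine sum_le_sum fun l hl => (card_lightPolys_level_mul_le hr (mem_filter.mp hl).2.1
        (level_le_of_mem_biasLevels hr hm hl)).trans ?_
      gcongr
      exact sqrt_le_of_mem_biasLevels hl
    _ ≤ ((binomLt m (r + 1) * 2 ^ a : ℕ) : ℝ) * (2 ^ binomLt m (r + 1)
        * (4 * Real.exp (-(3 / 10 * √((binomLt m (r + 1) : ℝ) / 2 ^ a))))) := by
      rw [sum_const, nsmul_eq_mul]
      gcongr
      exact (card_filter_le _ _).trans_eq (card_range _)
    _ = _ := by push_cast; ring

lemma tendsto_mul_exp_neg_sqrt (a : ℕ) :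
    Tendsto (fun N : ℕ => (N : ℝ) * 2 ^ a * (4 * Real.exp (-(3 / 10 * √((N : ℝ) / 2 ^ a)))))
      atTop (𝓝 0) := by
  have h1 : Tendsto (fun N : ℕ => 3 / 10 * √((N : ℝ) / 2 ^ a)) atTop atTop :=
    (Real.tendsto_sqrt_atTop.comp
      (tendsto_natCast_atTop_atTop.atTop_div_const (by positivity))).const_mul_atTop (by norm_num)
  have h2 := ((Real.tendsto_pow_mul_exp_neg_atTop_nhds_zero 2).comp h1).const_mul
    (400 / 9 * ((2 : ℝ) ^ a) ^ 2)
  rw [mul_zero] at h2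
  refine h2.congr fun N => ?_
  simp only [Function.comp_apply]
  rw [mul_pow, Real.sq_sqrt (by positivity)]
  field_simp
  ring

lemma tendsto_mul_exp_neg_mul {c : ℝ} (hc : 0 < c) (b : ℝ) :
    Tendsto (fun N : ℕ => b * Real.exp (-(c * N))) atTop (𝓝 0) := by
  simpa using (Real.tendsto_exp_neg_atTop_nhds_zero.comp
    (tendsto_natCast_atTop_atTop.const_mul_atTop hc)).const_mul b

lemma exists_error_le {ε ρ : ℝ} (hε : 0 < ε) (hρ : 0 < ρ) :
    ∃ a n N₀ : ℕ, (1 / 2) ^ n ≤ ε / 4 ∧ ∀ N : ℕ, N₀ ≤ N →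
      Real.exp ((1 / 2) ^ a)
        + N * 2 ^ a * (4 * Real.exp (-(3 / 10 * √((N : ℝ) / 2 ^ a))))
        + 4 * Real.exp (-(N / 32))
        + ∑ k ∈ Icc 1 n, 4 * Real.exp (-((1 / 4) ^ (k + 1) / 8 * N))
        + 2 * Real.exp (-(ε / 4 * N)) ≤ 1 + ρ := by
  obtain ⟨n, hn⟩ := exists_pow_lt_of_lt_one (by positivity : 0 < ε / 4)
    (by norm_num : (1 / 2 : ℝ) < 1)
  have ha : ∃ a : ℕ, Real.exp ((1 / 2) ^ a) < 1 + ρ := by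
    have h1 : Tendsto (fun a : ℕ => Real.exp ((1 / 2) ^ a)) atTop (𝓝 1) := by
      simpa [Function.comp_def] using (Real.continuous_exp.tendsto 0).comp
        (tendsto_pow_atTop_nhds_zero_of_lt_one (by norm_num) (by norm_num : (1 / 2 : ℝ) < 1))
    exact (h1.eventually_lt_const (by linarith)).exists
  obtain ⟨a, ha⟩ := ha
  have h3 : Tendsto (fun N : ℕ => 4 * Real.exp (-((N : ℝ) / 32))) atTop (𝓝 0) := by
    refine (tendsto_mul_exp_neg_mul (c := 1 / 32) (by norm_num) 4).congr fun N => ?_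
    ring_nf
  have h4 : Tendsto (fun N : ℕ =>
      ∑ k ∈ Icc 1 n, 4 * Real.exp (-((1 / 4) ^ (k + 1) / 8 * (N : ℝ)))) atTop (𝓝 0) := by
    simpa using tendsto_finsetSum (Icc 1 n) fun k _ =>
      tendsto_mul_exp_neg_mul (c := (1 / 4) ^ (k + 1) / 8) (by positivity) 4
  have h := ((((tendsto_const_nhds (x := Real.exp ((1 / 2) ^ a))).add
    (tendsto_mul_exp_neg_sqrt a)).add h3).add h4).add
    (tendsto_mul_exp_neg_mul (by positivity : 0 < ε / 4) 2)
  simp only [add_zero] at h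
  obtain ⟨N₀, hN₀⟩ := eventually_atTop.mp (h.eventually_le_const ha)
  exact ⟨a, n, N₀, hn.le, hN₀⟩

lemma choose_mul_pow_le {n M : ℕ} (h : n ≤ M) (K : ℕ) :
    n.choose K * M ^ K ≤ M.choose K * n ^ K := by
  have hd : n.descFactorial K * M ^ K ≤ M.descFactorial K * n ^ K := by
    induction K with
    | zero => simp
    | succ K ih =>
      have h1 : (n - K) * M ≤ (M - K) * n := by
        rw [Nat.sub_mul, Nat.sub_mul, mul_comm n M]
        exact Nat.sub_le_sub_left (Nat.mul_le_mul_left K h) _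
      rw [Nat.descFactorial_succ, Nat.descFactorial_succ, pow_succ, pow_succ]
      calc (n - K) * n.descFactorial K * (M ^ K * M)
          = (n - K) * M * (n.descFactorial K * M ^ K) := by ring
        _ ≤ (M - K) * n * (M.descFactorial K * n ^ K) := Nat.mul_le_mul h1 ih
        _ = _ := by ring
  rw [Nat.descFactorial_eq_factorial_mul_choose, Nat.descFactorial_eq_factorial_mul_choose,
    mul_assoc, mul_assoc] at hd
  exact Nat.le_of_mul_le_mul_left hd K.factorial_pos

lemma choose_le_mul_div_pow {n M : ℕ} (hM : 0 < M) (h : n ≤ M) (K : ℕ) :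
    (n.choose K : ℝ) ≤ M.choose K * ((n : ℝ) / M) ^ K := by
  have h1 : (n.choose K : ℝ) * M ^ K ≤ M.choose K * n ^ K := by
    exact_mod_cast choose_mul_pow_le h K
  rwa [div_pow, ← mul_div_assoc, le_div_iff₀ (by positivity)]

lemma linearIndependent_monomialFun_monIdx (m r : ℕ) :
    LinearIndependent (ZMod 2) (fun S : MonIdx m r => monomialFun S.1) :=
  (linearIndependent_monomialFun m (r + 1)).comp
    (fun S : MonIdx m r => ⟨S.1, Nat.lt_succ_of_le S.2⟩)
    fun _ _ h => Subtype.ext (congrArg (fun U => U.1) h)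

lemma card_monIdx (m r : ℕ) : Fintype.card (MonIdx m r) = binomLt m (r + 1) := by
  rw [← card_subsets_lt]
  exact Fintype.card_congr (Equiv.subtypeEquivRight fun S => Nat.lt_succ_iff.symm)

lemma evalLin_eq_sum (m r : ℕ) (c : RMcode m r) :
    (fun z => evalLin m r z c) = ∑ S, c S • monomialFun S.1 := by
  ext z
  simp [evalLin, monomialFun, mul_comm]

lemma evalLin_mem_polys (m r : ℕ) (c : RMcode m r) :
    (fun z => evalLin m r z c) ∈ polys m (r + 1) := by
  rw [mem_polys, evalLin_eq_sum]
  exact Submodule.sum_mem _ fun S _ =>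
    Submodule.smul_mem _ _ (monomialFun_mem_lowDeg (Nat.lt_succ_of_le S.2))

lemma evalLin_injective (m r : ℕ) :
    Function.Injective fun (c : RMcode m r) (z : Fin m → ZMod 2) => evalLin m r z c := by
  intro c c' h
  simp only [evalLin_eq_sum] at h
  exact (linearIndependent_monomialFun_monIdx m r).fintypeLinearCombination_injective h

lemma sum_evalLin_le_sum_polys (m r : ℕ) {Φ : ((Fin m → ZMod 2) → ZMod 2) → ℝ}
    (hΦ : ∀ f, 0 ≤ Φ f) :
    ∑ c : RMcode m r, Φ (fun z => evalLin m r z c) ≤ ∑ f ∈ polys m (r + 1), Φ f := by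
  classical
  rw [← sum_image (f := Φ) (g := fun (c : RMcode m r) z => evalLin m r z c)
    fun c _ c' _ h => evalLin_injective m r h]
  refine sum_le_sum_of_subset_of_nonneg (fun f hf => ?_) fun f _ _ => hΦ f
  obtain ⟨c, -, rfl⟩ := mem_image.mp hf
  exact evalLin_mem_polys m r c

lemma mem_vanishing {m r : ℕ} {Z : Set (Fin m → ZMod 2)} {c : RMcode m r} :
    c ∈ vanishing m r Z ↔ ∀ z ∈ Z, evalLin m r z c = 0 := by
  simp [vanishing]

lemma le_finrank_vanishing (m r : ℕ) (Z : Finset (Fin m → ZMod 2)) :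
    binomLt m (r + 1) - Z.card ≤ Module.finrank (ZMod 2) (vanishing m r (Z : Set _)) := by
  let T : RMcode m r →ₗ[ZMod 2] (Z → ZMod 2) := LinearMap.pi fun z => evalLin m r z.1
  have hT : LinearMap.ker T = vanishing m r (Z : Set _) := by
    ext c
    simp [T, mem_vanishing, funext_iff]
  have h1 := T.finrank_range_add_finrank_ker
  have h2 := (LinearMap.range T).finrank_le
  rw [hT] at h1
  simp only [Module.finrank_fintype_fun_eq_card, card_monIdx, Fintype.card_coe] at h1 h2
  omega

lemma sum_two_pow_finrank_vanishing (m r K : ℕ) :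
    ∑ Z ∈ powersetCard K (univ : Finset (Fin m → ZMod 2)),
        2 ^ Module.finrank (ZMod 2) (vanishing m r (Z : Set _))
      = ∑ c : RMcode m r, (numZeros m r c).choose K := by
  classical
  have h1 (Z : Finset (Fin m → ZMod 2)) :
      2 ^ Module.finrank (ZMod 2) (vanishing m r (Z : Set _))
        = ∑ c : RMcode m r, if ∀ z ∈ Z, evalLin m r z c = 0 then 1 else 0 := by
    have := Module.card_eq_pow_finrank (K := ZMod 2) (V := vanishing m r (Z : Set _))
    rw [ZMod.card] at this
    rw [← this, ← card_filter, Fintype.card_subtype]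
    simp [mem_vanishing]
  simp only [h1]
  rw [sum_comm]
  refine sum_congr rfl fun c _ => ?_
  rw [← card_filter, numZeros, ← card_powersetCard]
  congr 1
  ext Z
  simp [mem_powersetCard, subset_iff, and_comm]

lemma sum_choose_numZeros_le (m r K : ℕ) :
    ∑ c : RMcode m r, ((numZeros m r c).choose K : ℝ)
      ≤ (2 ^ m).choose K * ∑ f ∈ polys m (r + 1), (1 - (nnz f : ℝ) / 2 ^ m) ^ K := by
  have hw (f : (Fin m → ZMod 2) → ZMod 2) : (nnz f : ℝ) / 2 ^ m ≤ 1 := by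
    rw [div_le_one (by positivity)]
    have : nnz f ≤ 2 ^ m := (card_le_univ _).trans (by simp)
    exact_mod_cast this
  refine le_trans ?_ (mul_le_mul_of_nonneg_left (sum_evalLin_le_sum_polys m r
    fun f => pow_nonneg (sub_nonneg.mpr (hw f)) K) (Nat.cast_nonneg _))
  rw [mul_sum]
  refine sum_le_sum fun c _ => ?_
  have h1 : numZeros m r c + nnz (fun z => evalLin m r z c) = 2 ^ m := by
    have := card_filter_add_card_filter_not (s := (univ : Finset (Fin m → ZMod 2)))
      (fun z => evalLin m r z c = 0)
    simpa [numZeros, nnz] using this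
  have h2 : (1 - (nnz (fun z => evalLin m r z c) : ℝ) / 2 ^ m)
      = (numZeros m r c : ℝ) / (2 ^ m : ℕ) := by
    rw [← h1, eq_div_iff (by rw [h1]; positivity), sub_mul, one_mul]
    rw [show (2 : ℝ) ^ m = ((2 ^ m : ℕ) : ℝ) by push_cast; rfl, ← h1,
      div_mul_cancel₀ _ (by rw [h1]; positivity)]
    push_cast
    ring
  rw [h2]
  exact choose_le_mul_div_pow (by positivity) (by omega) K

lemma one_sub_mul_card_le_of_sum_le {ι : Type*} {s : Finset ι} {v : ι → ℕ} {d : ℕ} {ρ : ℝ}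
    (hv : ∀ i ∈ s, d ≤ v i) (h : ∑ i ∈ s, (2 : ℝ) ^ v i ≤ s.card * (2 ^ d * (1 + ρ))) :
    (1 - ρ) * s.card ≤ ((s.filter fun i => v i = d).card : ℝ) := by
  have h1 : ∀ i ∈ s, (2 : ℝ) ^ d * (2 - if v i = d then 1 else 0) ≤ 2 ^ v i := by
    intro i hi
    split_ifs with hd
    · rw [hd]; linarith
    · rw [sub_zero, ← pow_succ]
      exact pow_le_pow_right₀ one_le_two (by have := hv i hi; omega)
  have h2 := (sum_le_sum h1).trans h
  rw [← mul_sum, sum_sub_distrib, ← natCast_card_filter, sum_const, nsmul_eq_mul,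
    mul_left_comm] at h2
  have h3 := le_of_mul_le_mul_left h2 (by positivity)
  linarith

lemma natCard_subtype_card_eq {α : Type*} [Fintype α] (K : ℕ) (p : Finset α → Prop)
    [DecidablePred p] :
    Nat.card {Z : Finset α // Z.card = K ∧ p Z} = ((powersetCard K univ).filter p).card := by
  classical
  rw [Nat.card_eq_fintype_card, Fintype.card_subtype]
  congr 1
  ext Z
  simp [mem_powersetCard]

lemma one_sub_mul_card_le_card_finrank {m r K : ℕ} {ε ρ : ℝ} (hε : 0 < ε)
    (hK : (K : ℝ) ≤ (1 - ε) * binomLt m (r + 1))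
    (h : ∑ f ∈ polys m (r + 1), (2 * (1 - (nnz f : ℝ) / 2 ^ m)) ^ K
      ≤ 2 ^ binomLt m (r + 1) * (1 + ρ)) :
    (1 - ρ) * (Nat.card {Z : Finset (Fin m → ZMod 2) // Z.card = K} : ℝ)
      ≤ (Nat.card {Z : Finset (Fin m → ZMod 2) // Z.card = K ∧
          Module.finrank (ZMod 2) (vanishing m r (Z : Set (Fin m → ZMod 2)))
            = binomLt m (r + 1) - K} : ℝ) := by
  have hKN : K ≤ binomLt m (r + 1) := by
    have : (0 : ℝ) ≤ binomLt m (r + 1) := Nat.cast_nonneg _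
    have : (K : ℝ) ≤ binomLt m (r + 1) := by nlinarith
    exact_mod_cast this
  have hcard : Nat.card {Z : Finset (Fin m → ZMod 2) // Z.card = K}
      = (powersetCard K (univ : Finset (Fin m → ZMod 2))).card := by
    simp
  rw [hcard, natCard_subtype_card_eq]
  refine one_sub_mul_card_le_of_sum_le (fun Z hZ => ?_) ?_
  · rw [← (mem_powersetCard.mp hZ).2]
    exact le_finrank_vanishing m r Z
  · have h1 := sum_choose_numZeros_le m r K
    have h2 : (∑ Z ∈ powersetCard K (univ : Finset (Fin m → ZMod 2)),
        (2 : ℝ) ^ Module.finrank (ZMod 2) (vanishing m r (Z : Set _)))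
        = ∑ c : RMcode m r, ((numZeros m r c).choose K : ℝ) := by
      exact_mod_cast sum_two_pow_finrank_vanishing m r K
    have h3 : (2 : ℝ) ^ binomLt m (r + 1) = 2 ^ K * 2 ^ (binomLt m (r + 1) - K) := by
      rw [← pow_add, Nat.add_sub_cancel' hKN]
    simp only [mul_pow] at h
    rw [← mul_sum, h3, mul_assoc] at h
    rw [h2, card_powersetCard, card_univ, Fintype.card_fun, ZMod.card, Fintype.card_fin]
    exact h1.trans (mul_le_mul_of_nonneg_left (le_of_mul_le_mul_left h (by positivity))
      (Nat.cast_nonneg _))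

lemma le_binomLt {m r : ℕ} (hr : 1 ≤ r) : m ≤ binomLt m (r + 1) := by
  have := single_le_sum (f := fun i => m.choose i) (fun i _ => Nat.zero_le _)
    (mem_range.mpr (by omega : 1 < r + 1))
  simpa [binomLt] using this

end

/-- dimension of degree-`r` vanishing space of a random set.
There is an absolute constant `γ₀ > 0` such that for every `ε ∈ (0,1)` and `ρ > 0`
there is `m₀` such that for all `m ≥ m₀` and `1 ≤ r < γ₀ m`, setting
`K = ⌊(1-ε)·binom(m,≤r)⌋`, a uniformly random `K`-element subset `Z ⊆ F₂^m`
satisfies `dim I_r(Z) = binom(m,≤r) - K` with probability at least `1 - ρ`.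
(The probability is expressed by counting `K`-element subsets.) -/
theorem vanishing_space_random_set :
    ∃ γ₀ : ℝ, 0 < γ₀ ∧
      ∀ ε : ℝ, 0 < ε → ε < 1 →
        ∀ ρ : ℝ, 0 < ρ →
          ∃ m₀ : ℕ, ∀ m : ℕ, m₀ ≤ m →
            ∀ r : ℕ, 1 ≤ r → (r : ℝ) < γ₀ * m →
              ∀ K : ℕ, K = ⌊(1 - ε) * (binomLe m r : ℝ)⌋₊ →
                (1 - ρ) *
                    (Nat.card {Z : Finset (Fin m → ZMod 2) // Z.card = K} : ℝ)
                  ≤ (Nat.card {Z : Finset (Fin m → ZMod 2) //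
                      Z.card = K ∧
                      Module.finrank (ZMod 2)
                        ↥(vanishing m r (Z : Set (Fin m → ZMod 2))) =
                          binomLe m r - K} : ℝ) := by
  refine ⟨1 / 32768, by norm_num, fun ε hε hε1 ρ hρ => ?_⟩
  obtain ⟨a, n, N₀, hn, hN₀⟩ := exists_error_le hε hρ
  refine ⟨max N₀ (40 * a + 200), fun m hm r hr hrm K hK => ?_⟩
  have hrm' : 32768 * r ≤ m := by
    have : (32768 : ℝ) * r ≤ m := by linarith
    exact_mod_cast this
  have hK' : (K : ℝ) ≤ (1 - ε) * binomLt m (r + 1) := by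
    rw [hK]
    exact Nat.floor_le (mul_nonneg (by linarith) (Nat.cast_nonneg _))
  exact one_sub_mul_card_le_card_finrank hε hK'
    ((sum_polys_pow_le hrm' ((le_max_right _ _).trans hm) hε hn hK').trans
      (mul_le_mul_of_nonneg_left
        (hN₀ _ (((le_max_left _ _).trans hm).trans (le_binomLt hr))) (by positivity)))
end

section
/- There exists an absolute constant γ₀ > 0 such that for every constant ε ∈ (0,1) and every ρ > 0 there exists m₀ such that for all m ≥ m₀ and all integers d with (1-γ₀)·m < d < m the following holds. Set r = m - d - 1 and K = ⌊(1-ε)·binom(m,≤r)⌋, and let Z be a uniformly random K-element subset of F₂^m. Then with probability at least 1 - ρ, there is no nonzero multilinear polynomial P in m variables over F₂ of total degree at most d whose support {x ∈ F₂^m : P(x) ≠ 0} is contained in Z. (Equivalently, the Reed–Muller code RM(m,d) recovers from the K random erasures indexed by Z.) -/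
namespace RMErasure

open Finset

/-- The points of `F₂^m`. -/
abbrev Pt (m : ℕ) := Fin m → ZMod 2

/-- The function computed by the multilinear monomial with index set `S`. -/
def mono {m : ℕ} (S : Finset (Fin m)) : Pt m → ZMod 2 := fun z => ∏ i ∈ S, z i

/-- The Reed–Muller code as a space of functions. -/
def RM (m r : ℕ) : Submodule (ZMod 2) (Pt m → ZMod 2) :=
  Submodule.span (ZMod 2) (mono '' {S | S.card ≤ r})

variable {m : ℕ}

lemma zmod_two_cases (a : ZMod 2) : a = 0 ∨ a = 1 := by
  revert a; decide

lemma mono_apply (S : Finset (Fin m)) (z : Pt m) :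
    mono S z = if ∀ i ∈ S, z i = 1 then 1 else 0 := by
  unfold mono
  split_ifs with h
  · exact prod_eq_one h
  · push Not at h
    obtain ⟨i, hi, hz⟩ := h
    exact prod_eq_zero hi ((zmod_two_cases (z i)).resolve_right hz)

lemma mono_mul (S T : Finset (Fin m)) : mono S * mono T = mono (S ∪ T) := by
  ext z
  simp only [Pi.mul_apply, mono_apply, mem_union, or_imp, forall_and]
  split_ifs <;> simp_all

lemma mono_mem {S : Finset (Fin m)} {r : ℕ} (h : S.card ≤ r) : mono S ∈ RM m r :=
  Submodule.subset_span ⟨S, h, rfl⟩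

lemma RM_mono {r s : ℕ} (h : r ≤ s) : RM m r ≤ RM m s :=
  Submodule.span_mono (Set.image_mono fun _ hS => le_trans hS h)

lemma one_mem_RM (r : ℕ) : (1 : Pt m → ZMod 2) ∈ RM m r := by
  have : (1 : Pt m → ZMod 2) = mono ∅ := by ext z; simp [mono]
  rw [this]
  exact mono_mem (by simp)

lemma mul_mem_RM {r s : ℕ} {P Q : Pt m → ZMod 2} (hP : P ∈ RM m r) (hQ : Q ∈ RM m s) :
    P * Q ∈ RM m (r + s) := by
  have h : RM m r * RM m s ≤ RM m (r + s) := by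
    unfold RM
    rw [Submodule.span_mul_span, Submodule.span_le]
    rintro _ ⟨_, ⟨S, hS, rfl⟩, _, ⟨T, hT, rfl⟩, rfl⟩
    change mono S * mono T ∈ RM m (r + s)
    rw [mono_mul]
    exact mono_mem ((card_union_le S T).trans (add_le_add hS hT))
  exact h (Submodule.mul_mem_mul hP hQ)

lemma sum_eq_zero_of_mem {r : ℕ} (hr : r < m) {P : Pt m → ZMod 2} (hP : P ∈ RM m r) :
    ∑ x, P x = 0 := by
  let φ : (Pt m → ZMod 2) →ₗ[ZMod 2] ZMod 2 := ∑ x, LinearMap.proj x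
  have hφ : ∀ P, φ P = ∑ x, P x := fun P => by simp [φ]
  rw [← hφ]
  have : RM m r ≤ LinearMap.ker φ := by
    unfold RM
    rw [Submodule.span_le]
    rintro _ ⟨S, hS, rfl⟩
    simp only [SetLike.mem_coe, LinearMap.mem_ker, hφ]
    obtain ⟨i, hi⟩ : ∃ i, i ∉ S := by
      by_contra! h
      have : S = univ := by ext; simp [h]
      rw [this] at hS
      simp at hS
      omega
    refine sum_involution (fun x _ => Function.update x i (x i + 1)) ?_ ?_ ?_ ?_
    · intro x _
      have : mono S (Function.update x i (x i + 1)) = mono S x := by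
        refine prod_congr rfl fun j hj => ?_
        rw [Function.update_of_ne]
        rintro rfl
        exact hi hj
      rw [this]
      exact CharTwo.add_self_eq_zero _
    · intro x _ _ h
      have := congrFun h i
      simp at this
    · intros; simp
    · intro x _
      ext j
      by_cases hj : j = i
      · subst hj
        simp [add_assoc, CharTwo.add_self_eq_zero]
      · simp [hj]
  exact this hP

/-- The directional derivative of a function on `F₂^m`. -/
def deriv (b : Pt m) : (Pt m → ZMod 2) →ₗ[ZMod 2] (Pt m → ZMod 2) where
  toFun P x := P (x + b) + P x
  map_add' P Q := by ext x; simp; ring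
  map_smul' c P := by ext x; simp; ring

lemma deriv_apply (b : Pt m) (P : Pt m → ZMod 2) (x : Pt m) :
    deriv b P x = P (x + b) + P x := rfl

lemma coord_mem (i : Fin m) : (fun z : Pt m => z i) ∈ RM m 1 := by
  have : (fun z : Pt m => z i) = mono {i} := by ext z; simp [mono]
  rw [this]
  exact mono_mem (by simp)

lemma deriv_mono_mem (b : Pt m) (S : Finset (Fin m)) :
    deriv b (mono S) ∈ RM m (S.card - 1) := by
  induction S using Finset.induction_on with
  | empty =>
    have : deriv b (mono ∅) = 0 := by
      ext x
      simp [deriv_apply, mono, CharTwo.add_self_eq_zero]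
    rw [this]
    exact zero_mem _
  | insert i S hi ih =>
    have key : deriv b (mono (insert i S)) =
        (fun z : Pt m => z i) * deriv b (mono S) + b i • (deriv b (mono S) + mono S) := by
      ext x
      simp only [deriv_apply, mono, prod_insert hi, Pi.add_apply, Pi.mul_apply, Pi.smul_apply,
        smul_eq_mul]
      have h2 : ∀ a : ZMod 2, a + a = 0 := CharTwo.add_self_eq_zero
      linear_combination (- b i * ∏ j ∈ S, x j) * h2 1
    rw [key, card_insert_of_notMem hi, Nat.add_sub_cancel]
    refine add_mem ?_ (Submodule.smul_mem _ _ (add_mem (RM_mono (Nat.sub_le _ _) ih)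
      (mono_mem le_rfl)))
    rcases Nat.eq_zero_or_pos S.card with h0 | h0
    · have : deriv b (mono S) = 0 := by
        rw [card_eq_zero.mp h0]
        ext x
        simp [deriv_apply, mono, CharTwo.add_self_eq_zero]
      rw [this, mul_zero]
      exact zero_mem _
    · have := mul_mem_RM (coord_mem i) ih
      rwa [show 1 + (S.card - 1) = S.card by omega] at this

lemma deriv_mem (b : Pt m) {r : ℕ} {P : Pt m → ZMod 2} (hP : P ∈ RM m r) :
    deriv b P ∈ RM m (r - 1) := by
  have : RM m r ≤ (RM m (r - 1)).comap (deriv b) := by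
    unfold RM
    rw [Submodule.span_le]
    rintro _ ⟨S, hS, rfl⟩
    exact RM_mono (Nat.sub_le_sub_right hS 1) (deriv_mono_mem b S)
  exact this hP

lemma deriv_eq_zero (b : Pt m) {P : Pt m → ZMod 2} (hP : P ∈ RM m 0) : deriv b P = 0 := by
  have : RM m 0 ≤ LinearMap.ker (deriv b) := by
    unfold RM
    rw [Submodule.span_le]
    rintro _ ⟨S, hS, rfl⟩
    have hS' : S = ∅ := by simpa using hS
    subst hS'
    simp only [SetLike.mem_coe, LinearMap.mem_ker]
    ext x
    simp [deriv_apply, mono, CharTwo.add_self_eq_zero]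
  exact this hP

lemma linear_mem {n : ℕ} (L : Pt m →ₗ[ZMod 2] Pt n) (i : Fin n) :
    (fun z : Pt m => L z i) ∈ RM m 1 := by
  have : (fun z : Pt m => L z i) = ∑ j, (L (Pi.single j 1) i) • (fun z : Pt m => z j) := by
    ext z
    conv_lhs => rw [LinearMap.pi_apply_eq_sum_univ L z]
    simp only [Finset.sum_apply, Pi.smul_apply, smul_eq_mul]
    refine sum_congr rfl fun j _ => ?_
    have h : (fun k => if j = k then (1 : ZMod 2) else 0) = Pi.single j 1 := by
      ext k
      simp [Pi.single_apply, eq_comm]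
    rw [h, mul_comm]
  rw [this]
  exact sum_mem fun j _ => Submodule.smul_mem _ _ (coord_mem j)

lemma comp_mem {n r : ℕ} (L : Pt m →ₗ[ZMod 2] Pt n) {Q : Pt n → ZMod 2} (hQ : Q ∈ RM n r) :
    (fun z => Q (L z)) ∈ RM m r := by
  have key : ∀ S : Finset (Fin n), (fun z => mono S (L z)) ∈ RM m S.card := by
    intro S
    induction S using Finset.induction_on with
    | empty =>
      convert one_mem_RM (m := m) _ using 1
      ext z
      simp [mono]
    | insert i S hi ih =>
      have : (fun z => mono (insert i S) (L z)) =
          (fun z : Pt m => L z i) * (fun z => mono S (L z)) := by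
        ext z
        simp [mono, prod_insert hi]
      rw [this, card_insert_of_notMem hi, add_comm]
      exact mul_mem_RM (linear_mem L i) ih
  have : RM n r ≤ (RM m r).comap (LinearMap.funLeft (ZMod 2) (ZMod 2) L) := by
    unfold RM
    rw [Submodule.span_le]
    rintro _ ⟨S, hS, rfl⟩
    exact RM_mono hS (key S)
  exact this hQ

/-- Evaluation of coefficient vectors as functions. -/
def evalMap (m r : ℕ) : RMcode m r →ₗ[ZMod 2] (Pt m → ZMod 2) := LinearMap.pi (evalLin m r)

lemma evalMap_eq_sum (r : ℕ) (c : RMcode m r) :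
    evalMap m r c = ∑ S : MonIdx m r, c S • mono S.1 := by
  ext z
  simp [evalMap, evalLin, mono, mul_comm]

lemma evalMap_mem (r : ℕ) (c : RMcode m r) : evalMap m r c ∈ RM m r := by
  rw [evalMap_eq_sum]
  exact sum_mem fun S _ => Submodule.smul_mem _ _ (mono_mem S.2)

lemma evalMap_injective (m r : ℕ) : Function.Injective (evalMap m r) := by
  rw [injective_iff_map_eq_zero]
  intro c hc
  have key : ∀ n, ∀ S : MonIdx m r, S.1.card = n → c S = 0 := by
    intro n
    induction n using Nat.strong_induction_on with
    | _ n ih =>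
      intro S hS
      have h := congrFun hc (fun i => if i ∈ S.1 then 1 else 0)
      rw [evalMap_eq_sum] at h
      simp only [Finset.sum_apply, Pi.smul_apply, smul_eq_mul, Pi.zero_apply] at h
      rw [sum_eq_single S] at h
      · simpa [mono_apply] using h
      · intro T _ hT
        by_cases hTS : T.1 ⊆ S.1
        · have hlt : T.1.card < n := by
            rw [← hS]
            exact card_lt_card (hTS.ssubset_of_ne fun h => hT (Subtype.ext h))
          rw [ih _ hlt T rfl, zero_mul]
        · rw [mono_apply, if_neg, mul_zero]
          intro hall
          apply hTS
          intro i hi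
          by_contra hi'
          simpa [hi'] using hall i hi
      · simp
  ext S
  exact key _ S rfl

lemma range_evalMap (m r : ℕ) : LinearMap.range (evalMap m r) = RM m r := by
  apply le_antisymm
  · rintro _ ⟨c, rfl⟩
    exact evalMap_mem r c
  · unfold RM
    rw [Submodule.span_le]
    rintro _ ⟨S, hS, rfl⟩
    refine ⟨Pi.single ⟨S, hS⟩ 1, ?_⟩
    rw [evalMap_eq_sum, sum_eq_single ⟨S, hS⟩]
    · simp
    · intro T _ hT
      simp [hT]
    · simp

lemma card_monIdx (m r : ℕ) : Fintype.card (MonIdx m r) = binomLe m r := by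
  rw [Fintype.card_subtype, binomLe]
  have : (univ.filter fun S : Finset (Fin m) => S.card ≤ r) =
      (range (r + 1)).biUnion fun i => powersetCard i univ := by
    ext S
    simp
  rw [this, card_biUnion]
  · simp
  · intro i _ j _ hij
    exact Finset.pairwise_disjoint_powersetCard _ hij

lemma card_RM (m r : ℕ) : Nat.card (RM m r) = 2 ^ binomLe m r := by
  rw [← range_evalMap, ← Nat.card_congr (LinearEquiv.ofInjective _ (evalMap_injective m r)).toEquiv]
  simp [Nat.card_eq_fintype_card, card_monIdx]

/-- The Hamming weight of a function on `F₂^m`. -/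
def hw (P : Pt m → ZMod 2) : ℕ := (univ.filter fun x => P x ≠ 0).card

lemma hw_deriv_le (b : Pt m) (P : Pt m → ZMod 2) : hw (deriv b P) ≤ 2 * hw P := by
  have h1 : (univ.filter fun x => deriv b P x ≠ 0) ⊆
      (univ.filter fun x => P (x + b) ≠ 0) ∪ (univ.filter fun x => P x ≠ 0) := by
    intro x hx
    rw [mem_filter, deriv_apply] at hx
    by_contra h
    rw [mem_union, mem_filter, mem_filter, not_or] at h
    push Not at h
    refine hx.2 ?_
    rw [h.1 (mem_univ _), h.2 (mem_univ _), add_zero]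
  have h2 : (univ.filter fun x => P (x + b) ≠ 0).card = hw P := by
    unfold hw
    refine card_bij (fun x _ => x + b) ?_ ?_ ?_
    · intro x; simp
    · intro x _ y _; simp
    · intro y hy
      exact ⟨y - b, by simpa using hy, by simp⟩
  calc hw (deriv b P) ≤ _ := card_le_card h1
    _ ≤ _ := card_union_le _ _
    _ = 2 * hw P := by rw [h2, hw]; ring

lemma two_pow_le_hw {r : ℕ} {P : Pt m → ZMod 2} (hP : P ∈ RM m r) (h0 : P ≠ 0) :
    2 ^ m ≤ 2 ^ r * hw P := by
  induction r generalizing P with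
  | zero =>
    obtain ⟨y, hy⟩ : ∃ y, P y ≠ 0 := by
      by_contra! h
      exact h0 (funext h)
    have : (univ.filter fun x => P x ≠ 0) = univ := by
      rw [filter_eq_self]
      intro x _
      have := congrFun (deriv_eq_zero (x - y) hP) y
      rw [deriv_apply, add_sub_cancel, Pi.zero_apply, CharTwo.add_eq_zero] at this
      rwa [this]
    simp [hw, this]
  | succ r ih =>
    by_cases h : ∃ b, deriv b P ≠ 0
    · obtain ⟨b, hb⟩ := h
      have h' := deriv_mem b hP
      rw [Nat.add_sub_cancel] at h'
      have h1 := ih h' hb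
      have h2 := Nat.mul_le_mul_left (2 ^ r) (hw_deriv_le b P)
      rw [pow_succ, mul_assoc]
      exact h1.trans h2
    · push Not at h
      obtain ⟨y, hy⟩ : ∃ y, P y ≠ 0 := by
        by_contra! h
        exact h0 (funext h)
      have : (univ.filter fun x => P x ≠ 0) = univ := by
        rw [filter_eq_self]
        intro x _
        have := congrFun (h (x - y)) y
        rw [deriv_apply, add_sub_cancel, Pi.zero_apply, CharTwo.add_eq_zero] at this
        rwa [this]
      simp only [hw, this, card_univ, Fintype.card_pi, ZMod.card, prod_const, Fintype.card_fin]
      exact Nat.le_mul_of_pos_left _ (by positivity)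

/-- The codewords of `RM(m,r)` as a finite set of functions. -/
noncomputable def words (m r : ℕ) : Finset (Pt m → ZMod 2) :=
  (Set.toFinite (RM m r : Set (Pt m → ZMod 2))).toFinset

lemma mem_words {r : ℕ} {P : Pt m → ZMod 2} : P ∈ words m r ↔ P ∈ RM m r := by
  simp [words]

lemma card_words (m r : ℕ) : (words m r).card = 2 ^ binomLe m r := by
  rw [← card_RM, words, ← Set.ncard_eq_toFinset_card]
  rfl

/-- The character `(-1)^a` of `F₂`. -/
def sgn (a : ZMod 2) : ℝ := if a = 0 then 1 else -1

lemma sgn_mul_self (a : ZMod 2) : sgn a * sgn a = 1 := by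
  unfold sgn; split_ifs <;> norm_num

lemma sgn_add (a b : ZMod 2) : sgn (a + b) = sgn a * sgn b := by
  rcases zmod_two_cases a with rfl | rfl <;> rcases zmod_two_cases b with rfl | rfl <;>
    simp [sgn, CharTwo.add_self_eq_zero]

/-- The character sum of a function on `F₂^m`. -/
noncomputable def charSum (P : Pt m → ZMod 2) : ℝ := ∑ x, sgn (P x)

lemma card_pt (m : ℕ) : Fintype.card (Pt m) = 2 ^ m := by
  simp [Pt]

lemma charSum_eq (P : Pt m → ZMod 2) : charSum P = 2 ^ m - 2 * hw P := by
  have h : ∀ x, sgn (P x) = 1 - 2 * (if P x ≠ 0 then 1 else 0) := by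
    intro x
    unfold sgn
    by_cases hx : P x = 0
    · simp [hx]
    · simp [hx]
      norm_num
  unfold charSum
  rw [sum_congr rfl fun x _ => h x, sum_sub_distrib, ← mul_sum, sum_boole, hw]
  simp

/-- The linear combination of the directions `b` with coefficients `c`. -/
def comb {k : ℕ} (b : Fin k → Pt m) (c : Fin k → ZMod 2) : Pt m := ∑ i, c i • b i

lemma comb_add_single {k : ℕ} (b : Fin k → Pt m) (c : Fin k → ZMod 2) (i : Fin k) (v : Pt m) :
    comb (b + Pi.single i v) c = comb b c + c i • v := by
  simp only [comb, Pi.add_apply, smul_add, sum_add_distrib]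
  congr 1
  rw [sum_eq_single i]
  · simp
  · intro j _ hj; simp [hj]
  · simp

lemma sum_eq_sum_shift {k : ℕ} (i : Fin k) (f : (Fin k → Pt m) → ℝ) :
    2 ^ m * ∑ b, f b = ∑ b, ∑ v : Pt m, f (b + Pi.single (M := fun _ => Pt m) i v) := by
  rw [sum_comm]
  have : ∀ v : Pt m, ∑ b, f (b + Pi.single (M := fun _ => Pt m) i v) = ∑ b, f b := fun v =>
    Equiv.sum_comp (Equiv.addRight (Pi.single (M := fun _ => Pt m) i v)) f
  simp [this]

lemma sum_shift_charSum (P : Pt m → ZMod 2) (y : Pt m) :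
    ∑ v, sgn (P (y + v)) = charSum P :=
  Equiv.sum_comp (Equiv.addLeft y) fun v => sgn (P v)

lemma sum_mul_sgn_comb {k : ℕ} {P : Pt m → ZMod 2} {β : ℝ} (hβ : charSum P = β * 2 ^ m)
    (x : Pt m) (c : Fin k → ZMod 2) (i : Fin k) (hc : c i = 1)
    (g : (Fin k → Pt m) → ℝ) (hg : ∀ b (v : Pt m), g (b + Pi.single i v) = g b) :
    ∑ b, g b * (sgn (P (x + comb b c)) - β) = 0 := by
  have h := sum_eq_sum_shift i fun b => g b * (sgn (P (x + comb b c)) - β)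
  have h2 : ∀ b, ∑ v : Pt m, g (b + Pi.single (M := fun _ => Pt m) i v) *
      (sgn (P (x + comb (b + Pi.single (M := fun _ => Pt m) i v) c)) - β) = 0 := by
    intro b
    simp only [hg, comb_add_single, hc, one_smul, ← add_assoc]
    rw [← mul_sum, sum_sub_distrib, sum_shift_charSum, hβ]
    simp [mul_comm]
  simp only [h2, sum_const_zero] at h
  exact (mul_eq_zero.mp h).resolve_left (by positivity)

lemma sum_sgn_comb {k : ℕ} {P : Pt m → ZMod 2} {β : ℝ} (hβ : charSum P = β * 2 ^ m)
    (x : Pt m) {c : Fin k → ZMod 2} (hc : c ≠ 0) :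
    ∑ b, (sgn (P (x + comb b c)) - β) = 0 := by
  obtain ⟨i, hi⟩ := Function.ne_iff.mp hc
  simpa using sum_mul_sgn_comb hβ x c i ((zmod_two_cases _).resolve_left hi) (fun _ => 1)
    (fun _ _ => rfl)

lemma covariance_eq_zero {k : ℕ} {P : Pt m → ZMod 2} {β : ℝ} (hβ : charSum P = β * 2 ^ m)
    (x : Pt m) {c c' : Fin k → ZMod 2} (hcc : c ≠ c') :
    ∑ b, (sgn (P (x + comb b c)) - β) * (sgn (P (x + comb b c')) - β) = 0 := by
  obtain ⟨i, hi⟩ := Function.ne_iff.mp hcc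
  rcases zmod_two_cases (c' i) with h | h
  · have h1 : c i = 1 := (zmod_two_cases _).resolve_left (by rwa [h] at hi)
    simp only [mul_comm (sgn (P (x + comb _ c)) - β)]
    refine sum_mul_sgn_comb hβ x c i h1 _ fun b v => ?_
    rw [comb_add_single, h, zero_smul, add_zero]
  · have h1 : c i = 0 := (zmod_two_cases _).resolve_right (by rwa [h] at hi)
    refine sum_mul_sgn_comb hβ x c' i h _ fun b v => ?_
    rw [comb_add_single, h1, zero_smul, add_zero]

/-- The sum of the signs of `P` over the nonzero points of the parametrized flat `x + ⟨b⟩`. -/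
noncomputable def vote {k : ℕ} (b : Fin k → Pt m) (P : Pt m → ZMod 2) (x : Pt m) : ℝ :=
  ∑ c ∈ univ.filter (fun c : Fin k → ZMod 2 => c ≠ 0), sgn (P (x + comb b c))

lemma card_ne_zero (k : ℕ) :
    ((univ.filter (fun c : Fin k → ZMod 2 => c ≠ 0)).card : ℝ) = 2 ^ k - 1 := by
  rw [filter_ne', card_erase_of_mem (mem_univ _), card_univ, card_pt,
    Nat.cast_sub Nat.one_le_two_pow]
  simp

lemma sum_vote_variance {k : ℕ} {P : Pt m → ZMod 2} {β : ℝ} (hβ : charSum P = β * 2 ^ m)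
    (x : Pt m) :
    ∑ b : Fin k → Pt m, (vote b P x - (2 ^ k - 1) * β) ^ 2 =
      Fintype.card (Fin k → Pt m) * ((2 ^ k - 1) * (1 - β ^ 2)) := by
  have h1 : ∀ b : Fin k → Pt m, (vote b P x - (2 ^ k - 1) * β) ^ 2 =
      ∑ c ∈ univ.filter (fun c : Fin k → ZMod 2 => c ≠ 0),
        ∑ c' ∈ univ.filter (fun c : Fin k → ZMod 2 => c ≠ 0),
        (sgn (P (x + comb b c)) - β) * (sgn (P (x + comb b c')) - β) := by
    intro b
    rw [← sum_mul_sum, sum_sub_distrib, sum_const, nsmul_eq_mul, card_ne_zero, ← vote, sq]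
  rw [sum_congr rfl fun b _ => h1 b, sum_comm]
  have h2 : ∀ c ∈ univ.filter (fun c : Fin k → ZMod 2 => c ≠ 0),
      ∑ b : Fin k → Pt m, ∑ c' ∈ univ.filter (fun c : Fin k → ZMod 2 => c ≠ 0),
        (sgn (P (x + comb b c)) - β) * (sgn (P (x + comb b c')) - β) =
      Fintype.card (Fin k → Pt m) * (1 - β ^ 2) := by
    intro c hc
    rw [sum_comm, sum_eq_single c]
    · have h3 : ∀ b : Fin k → Pt m,
          (sgn (P (x + comb b c)) - β) * (sgn (P (x + comb b c)) - β) =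
          (1 - β ^ 2) - 2 * β * (sgn (P (x + comb b c)) - β) := by
        intro b
        linear_combination sgn_mul_self (P (x + comb b c))
      rw [sum_congr rfl fun b _ => h3 b, sum_sub_distrib, ← mul_sum,
        sum_sgn_comb hβ x (mem_filter.mp hc).2, sum_const, nsmul_eq_mul, mul_zero, sub_zero,
        card_univ]
    · intro c' _ hcc
      exact covariance_eq_zero hβ x hcc.symm
    · exact fun h => absurd hc h
  rw [sum_congr rfl h2, sum_const, nsmul_eq_mul, card_ne_zero]
  ring

/-- The points at which the majority vote along `b` fails to detect positive bias. -/
noncomputable def badSet {k : ℕ} (b : Fin k → Pt m) (P : Pt m → ZMod 2) : Finset (Pt m) :=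
  univ.filter fun x => vote b P x ≤ 0

lemma exists_badSet_le {k : ℕ} (hk : 0 < k) {P : Pt m → ZMod 2} {β : ℝ} (h0 : 0 < β)
    (hβ : charSum P = β * 2 ^ m) :
    ∃ b : Fin k → Pt m, (badSet b P).card * ((2 ^ k - 1) * β ^ 2) ≤ 2 ^ m * (1 - β ^ 2) := by
  have hT : (0 : ℝ) < 2 ^ k - 1 := by
    have : (1 : ℝ) < 2 ^ k := one_lt_pow₀ (by norm_num) hk.ne'
    linarith
  have key : ∀ x : Pt m,
      ∑ b : Fin k → Pt m, (if vote b P x ≤ 0 then (1 : ℝ) else 0) * ((2 ^ k - 1) * β ^ 2) ≤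
        Fintype.card (Fin k → Pt m) * (1 - β ^ 2) := by
    intro x
    have h1 : ∀ b : Fin k → Pt m,
        (2 ^ k - 1) * ((if vote b P x ≤ 0 then (1 : ℝ) else 0) * ((2 ^ k - 1) * β ^ 2)) ≤
          (vote b P x - (2 ^ k - 1) * β) ^ 2 := by
      intro b
      split_ifs with h
      · have := mul_pos hT h0
        nlinarith
      · simpa using sq_nonneg _
    have h2 := sum_le_sum fun b (_ : b ∈ univ) => h1 b
    rw [sum_vote_variance hβ, ← mul_sum] at h2
    refine le_of_mul_le_mul_left (h2.trans_eq ?_) hT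
    ring
  obtain ⟨b, -, hb⟩ := exists_le_of_sum_le (s := (univ : Finset (Fin k → Pt m)))
    (f := fun b => (badSet b P).card * ((2 ^ k - 1) * β ^ 2))
    (g := fun _ => 2 ^ m * (1 - β ^ 2)) univ_nonempty (by
      have h := sum_le_sum fun x (_ : x ∈ univ) => key x
      rw [sum_comm] at h
      simp only [← sum_mul, sum_boole] at h
      simp only [← sum_mul]
      refine h.trans_eq ?_
      simp only [sum_const, card_univ, nsmul_eq_mul, card_pt]
      push_cast
      ring)
  exact ⟨b, hb⟩

lemma add_comb_of_deriv_eq_zero {k : ℕ} {b : Fin k → Pt m} {Q : Pt m → ZMod 2}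
    (h : ∀ i, deriv (b i) Q = 0) (c : Fin k → ZMod 2) (x : Pt m) : Q (x + comb b c) = Q x := by
  have key : ∀ s : Finset (Fin k), ∀ x, Q (x + ∑ i ∈ s, c i • b i) = Q x := by
    intro s
    induction s using Finset.induction_on with
    | empty => simp
    | insert i s hi ih =>
      intro x
      rw [sum_insert hi, ← add_assoc, ih]
      rcases zmod_two_cases (c i) with h0 | h0
      · simp [h0]
      · rw [h0, one_smul]
        have := congrFun (h i) x
        rwa [deriv_apply, Pi.zero_apply, CharTwo.add_eq_zero] at this
  exact key univ x

lemma mem_badSet_of_ne {k : ℕ} {b : Fin k → Pt m} {P P' : Pt m → ZMod 2}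
    (h : ∀ i, deriv (b i) P = deriv (b i) P') {x : Pt m} (hx : P x ≠ P' x) :
    x ∈ badSet b P ∪ badSet b P' := by
  have hQ : ∀ i, deriv (b i) (P - P') = 0 := fun i => by rw [map_sub, h, sub_self]
  have hv : vote b P x = - vote b P' x := by
    unfold vote
    rw [← sum_neg_distrib]
    refine sum_congr rfl fun c _ => ?_
    have h1 := add_comb_of_deriv_eq_zero hQ c x
    simp only [Pi.sub_apply] at h1
    have h2 : P x - P' x = 1 := (zmod_two_cases _).resolve_left (sub_ne_zero.mpr hx)
    rw [h2, sub_eq_iff_eq_add] at h1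
    rw [h1, sgn_add, show sgn 1 = -1 by simp [sgn], neg_one_mul]
  simp only [badSet, mem_union, mem_filter, mem_univ, true_and]
  by_contra! hc
  linarith [hc.1, hc.2]

/-- The number of codewords of `RM(m,r)` of relative weight at most `2^{-j}`. -/
noncomputable def lowCount (m r j : ℕ) : ℕ :=
  ((words m r).filter fun P => 2 ^ j * hw P ≤ 2 ^ m).card

lemma card_le_of_badSet {k r j M : ℕ} (A : Finset (Pt m → ZMod 2)) (hA : A ⊆ words m r)
    (hb : ∀ P ∈ A, ∃ b : Fin k → Pt m, 2 ^ (j + 1) * (badSet b P).card ≤ 2 ^ m)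
    (hM : ∀ b : Fin k → Pt m, (A.image fun P i => deriv (b i) P).card ≤ M) :
    A.card ≤ 2 ^ (m * k) * (M * lowCount m r j) := by
  choose! b hb using hb
  have h1 : A.card ≤ lowCount m r j * M * (A.image b).card := by
    refine card_le_mul_card_image A _ fun b₀ _ => ?_
    set A' := A.filter fun P => b P = b₀ with hA'
    have h2 : A'.card ≤ lowCount m r j * (A'.image fun P i => deriv (b₀ i) P).card := by
      refine card_le_mul_card_image A' _ fun v hv => ?_
      obtain ⟨P₀, hP₀, rfl⟩ := mem_image.mp hv
      refine card_le_card_of_injOn (fun P => P - P₀) ?_ (sub_left_injective.injOn)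
      intro P hP
      obtain ⟨hP, hPv⟩ := mem_filter.mp hP
      have hPA := mem_filter.mp hP
      have hPA₀ := mem_filter.mp hP₀
      simp only [coe_filter, Set.mem_ofPred_eq, mem_words]
      refine ⟨sub_mem (mem_words.mp (hA hPA.1)) (mem_words.mp (hA hPA₀.1)), ?_⟩
      have h3 : hw (P - P₀) ≤ (badSet b₀ P).card + (badSet b₀ P₀).card := by
        refine (card_le_card fun x hx => ?_).trans (card_union_le _ _)
        refine mem_badSet_of_ne (fun i => congrFun hPv i) ?_
        simpa [sub_eq_zero] using hx
      have h4 := hb P hPA.1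
      have h5 := hb P₀ hPA₀.1
      rw [hPA.2] at h4
      rw [hPA₀.2] at h5
      have h6 := Nat.mul_le_mul_left (2 ^ j) h3
      rw [pow_succ] at h4 h5
      nlinarith
    refine h2.trans (Nat.mul_le_mul_left _ ((card_le_card ?_).trans (hM b₀)))
    exact image_subset_image (filter_subset _ _)
  have h2 : (A.image b).card ≤ 2 ^ (m * k) := by
    refine (card_le_univ _).trans_eq ?_
    rw [Fintype.card_fun, card_pt, Fintype.card_fin, pow_mul]
  calc A.card ≤ lowCount m r j * M * (A.image b).card := h1
    _ ≤ lowCount m r j * M * 2 ^ (m * k) := Nat.mul_le_mul_left _ h2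
    _ = _ := by ring

lemma lowCount_le_two_pow (m r j : ℕ) : lowCount m r j ≤ 2 ^ binomLe m r :=
  (card_filter_le _ _).trans_eq (card_words m r)

lemma hw_pos {P : Pt m → ZMod 2} (h : P ≠ 0) : 0 < hw P := by
  obtain ⟨x, hx⟩ := Function.ne_iff.mp h
  exact card_pos.mpr ⟨x, by simpa using hx⟩

lemma lowCount_le_one {r j : ℕ} (h : r < j) : lowCount m r j ≤ 1 := by
  refine card_le_one.mpr fun P hP Q hQ => ?_
  have key : ∀ P ∈ (words m r).filter fun P => 2 ^ j * hw P ≤ 2 ^ m, P = 0 := by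
    intro P hP
    rw [mem_filter, mem_words] at hP
    by_contra h0
    have h1 := two_pow_le_hw hP.1 h0
    have h2 : 2 ^ r * hw P < 2 ^ j * hw P :=
      Nat.mul_lt_mul_of_pos_right (Nat.pow_lt_pow_right (by norm_num) h) (hw_pos h0)
    omega
  rw [key P hP, key Q hQ]

lemma exists_badSet_le_of_low {j : ℕ} (hj : 2 ≤ j) {P : Pt m → ZMod 2}
    (hP : 2 ^ j * hw P ≤ 2 ^ m) :
    ∃ b : Fin 7 → Pt m, 2 ^ (j + 1 + 1) * (badSet b P).card ≤ 2 ^ m := by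
  have h4 : 4 * hw P ≤ 2 ^ m := by
    refine le_trans (Nat.mul_le_mul_right _ ?_) hP
    calc 4 = 2 ^ 2 := by norm_num
      _ ≤ 2 ^ j := Nat.pow_le_pow_right (by norm_num) hj
  have hM : (0 : ℝ) < 2 ^ m := by positivity
  set a : ℝ := hw P / 2 ^ m with ha
  have haw : a * 2 ^ m = hw P := by rw [ha]; field_simp
  have ha0 : 0 ≤ a := by positivity
  have ha4 : a ≤ 1 / 4 := by
    rw [ha, div_le_iff₀ hM]
    have : (4 * hw P : ℝ) ≤ 2 ^ m := by exact_mod_cast h4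
    linarith
  obtain ⟨b, hb⟩ := exists_badSet_le (k := 7) (by norm_num) (β := 1 - 2 * a) (by linarith)
    (by rw [charSum_eq, ← haw]; ring)
  refine ⟨b, ?_⟩
  have h1 : ((badSet b P).card : ℝ) * 4 ≤ hw P := by
    have h2 : (1 / 4 : ℝ) ≤ (1 - 2 * a) ^ 2 := by nlinarith
    have h3 : ((badSet b P).card : ℝ) * (127 * (1 / 4)) ≤
        (badSet b P).card * ((2 ^ 7 - 1) * (1 - 2 * a) ^ 2) := by
      gcongr
      norm_num
    have h5 : (2 : ℝ) ^ m * (1 - (1 - 2 * a) ^ 2) ≤ 4 * hw P := by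
      rw [← haw]
      nlinarith [mul_nonneg hM.le (sq_nonneg a)]
    have h6 : (0 : ℝ) ≤ hw P := by positivity
    linarith
  have h1' : (badSet b P).card * 4 ≤ hw P := by exact_mod_cast h1
  calc 2 ^ (j + 1 + 1) * (badSet b P).card = 2 ^ j * ((badSet b P).card * 4) := by ring
    _ ≤ 2 ^ j * hw P := Nat.mul_le_mul_left _ h1'
    _ ≤ 2 ^ m := hP

lemma lowCount_le_mul {r j : ℕ} (hj : 2 ≤ j) :
    lowCount m r j ≤ 2 ^ (m * 7) * (lowCount m (r - 1) (j - 1) ^ 7 * lowCount m r (j + 1)) := by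
  refine card_le_of_badSet _ (filter_subset _ _)
    (fun P hP => exists_badSet_le_of_low hj (mem_filter.mp hP).2) fun b => ?_
  have h : lowCount m (r - 1) (j - 1) ^ 7 = (Fintype.piFinset fun _ : Fin 7 =>
      (words m (r - 1)).filter fun P => 2 ^ (j - 1) * hw P ≤ 2 ^ m).card := by
    simp [Fintype.card_piFinset, lowCount]
  rw [h]
  refine card_le_card (image_subset_iff.mpr fun P hP => ?_)
  rw [mem_filter, mem_words] at hP
  rw [Fintype.mem_piFinset]
  intro i
  rw [mem_filter, mem_words]
  refine ⟨deriv_mem _ hP.1, le_trans ?_ hP.2⟩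
  calc 2 ^ (j - 1) * hw (deriv (b i) P) ≤ 2 ^ (j - 1) * (2 * hw P) :=
        Nat.mul_le_mul_left _ (hw_deriv_le _ _)
    _ = 2 ^ (j - 1 + 1) * hw P := by ring
    _ = 2 ^ j * hw P := by rw [Nat.sub_add_cancel (by omega)]

lemma lowCount_le_rpow (r : ℕ)
    (h1 : ∀ s, 1 ≤ s → s ≤ r → 224 * binomLe m (s - 1) ≤ binomLe m s)
    (h2 : ∀ s, 2 ≤ s → s ≤ r → 56 * m * 2 ^ s ≤ binomLe m s) :
    ∀ j, 2 ≤ j → (lowCount m r j : ℝ) ≤ 2 ^ ((binomLe m r : ℝ) / 2 ^ (j + 1)) := by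
  induction r with
  | zero =>
    intro j hj
    have h : (lowCount m 0 j : ℝ) ≤ 1 := by exact_mod_cast lowCount_le_one (by omega)
    exact h.trans (Real.one_le_rpow (by norm_num) (by positivity))
  | succ r ih =>
    have ih := ih (fun s hs hs' => h1 s hs (by omega)) (fun s hs hs' => h2 s hs (by omega))
    have base : ∀ j, r + 1 < j →
        (lowCount m (r + 1) j : ℝ) ≤ 2 ^ ((binomLe m (r + 1) : ℝ) / 2 ^ (j + 1)) := by
      intro j hj
      have h : (lowCount m (r + 1) j : ℝ) ≤ 1 := by exact_mod_cast lowCount_le_one hj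
      exact h.trans (Real.one_le_rpow (by norm_num) (by positivity))
    have key : ∀ n j, 2 ≤ j → r + 2 ≤ j + n →
        (lowCount m (r + 1) j : ℝ) ≤ 2 ^ ((binomLe m (r + 1) : ℝ) / 2 ^ (j + 1)) := by
      intro n
      induction n with
      | zero => exact fun j _ h => base j (by omega)
      | succ n ihn =>
        intro j hj hn
        by_cases hjr : r + 1 < j
        · exact base j hjr
        have e1 := ihn (j + 1) (by omega) (by omega)
        have e2 : (lowCount m r (j - 1) : ℝ) ≤ 2 ^ (4 * (binomLe m r : ℝ) / 2 ^ j) := by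
          rcases hj.eq_or_lt with rfl | hj3
          · have : (lowCount m r (2 - 1) : ℝ) ≤ 2 ^ binomLe m r := by
              exact_mod_cast lowCount_le_two_pow _ _ _
            rw [← Real.rpow_natCast] at this
            convert this using 2
            ring
          · refine (ih (j - 1) (by omega)).trans
              (Real.rpow_le_rpow_of_exponent_le (by norm_num) ?_)
            rw [Nat.sub_add_cancel (by omega)]
            gcongr
            have : (0 : ℝ) ≤ binomLe m r := by positivity
            linarith
        have e3 : (lowCount m (r + 1) j : ℝ) ≤
            2 ^ (m * 7) * (lowCount m r (j - 1) ^ 7 * lowCount m (r + 1) (j + 1)) := by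
          exact_mod_cast lowCount_le_mul hj
        have g1 : (224 * binomLe m r : ℝ) ≤ binomLe m (r + 1) := by
          exact_mod_cast h1 (r + 1) (by omega) le_rfl
        have g2 : (56 * m * 2 ^ (r + 1) : ℝ) ≤ binomLe m (r + 1) := by
          exact_mod_cast h2 (r + 1) (by omega) le_rfl
        have g3 : (2 : ℝ) ^ j ≤ 2 ^ (r + 1) := pow_le_pow_right₀ (by norm_num) (by omega)
        calc (lowCount m (r + 1) j : ℝ)
            ≤ 2 ^ (m * 7) * (lowCount m r (j - 1) ^ 7 * lowCount m (r + 1) (j + 1)) := e3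
          _ ≤ 2 ^ (m * 7) * ((2 ^ (4 * (binomLe m r : ℝ) / 2 ^ j)) ^ 7 *
              2 ^ ((binomLe m (r + 1) : ℝ) / 2 ^ (j + 1 + 1))) := by gcongr
          _ = 2 ^ (((m * 7 : ℕ) : ℝ) + (4 * (binomLe m r : ℝ) / 2 ^ j * 7 +
              (binomLe m (r + 1) : ℝ) / 2 ^ (j + 1 + 1))) := by
            rw [Real.rpow_add (by norm_num), Real.rpow_add (by norm_num), Real.rpow_natCast]
            congr 2
            rw [← Real.rpow_natCast, ← Real.rpow_mul (by norm_num)]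
            norm_num
          _ ≤ 2 ^ ((binomLe m (r + 1) : ℝ) / 2 ^ (j + 1)) := by
            refine Real.rpow_le_rpow_of_exponent_le (by norm_num) ?_
            have g4 : (56 * m * 2 ^ j : ℝ) ≤ binomLe m (r + 1) := le_trans (by gcongr) g2
            push_cast
            rw [pow_succ, pow_succ]
            have hp : (0 : ℝ) < 2 ^ j := by positivity
            rw [← sub_nonneg]
            have : (binomLe m (r + 1) : ℝ) / (2 ^ j * 2) - (m * 7 + (4 * (binomLe m r : ℝ) / 2 ^ j * 7 +
              (binomLe m (r + 1) : ℝ) / (2 ^ j * 2 * 2))) =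
              (binomLe m (r + 1) - 28 * m * 2 ^ j - 112 * binomLe m r) / (2 ^ j * 4) := by
              field_simp
              ring
            rw [this]
            apply div_nonneg _ (by positivity)
            linarith
    exact fun j hj => key (r + 2) j hj (by omega)

lemma exists_surjective_linear {k : ℕ} (b : Fin k → Pt m) :
    ∃ L : Pt m →ₗ[ZMod 2] Pt (m - k), Function.Surjective L ∧ ∀ i, L (b i) = 0 := by
  set W : Submodule (ZMod 2) (Pt m) := Submodule.span (ZMod 2) (Set.range b)
  have h1 : Module.finrank (ZMod 2) W ≤ k := by
    exact (finrank_range_le_card (R := ZMod 2) b).trans_eq (Fintype.card_fin k)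
  have h2 : m - k ≤ Module.finrank (ZMod 2) (Pt m ⧸ W) := by
    have := W.finrank_quotient_add_finrank
    rw [Module.finrank_fin_fun] at this
    omega
  let e := (Module.finBasis (ZMod 2) (Pt m ⧸ W)).equivFun
  refine ⟨LinearMap.funLeft (ZMod 2) (ZMod 2) (Fin.castLE h2) ∘ₗ e.toLinearMap ∘ₗ W.mkQ, ?_, ?_⟩
  · rw [LinearMap.coe_comp, LinearMap.coe_comp]
    exact (LinearMap.funLeft_surjective_of_injective _ _ _ (Fin.castLE_injective h2)).comp
      (e.surjective.comp W.mkQ_surjective)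
  · intro i
    have : W.mkQ (b i) = 0 := by
      simpa using Submodule.subset_span (Set.mem_range_self i)
    simp only [LinearMap.comp_apply, this, map_zero]

lemma card_image_deriv_mul_le {k : ℕ} (r : ℕ) (b : Fin k → Pt m) :
    2 ^ binomLe (m - k) r * ((words m r).image fun P i => deriv (b i) P).card ≤
      2 ^ binomLe m r := by
  rw [← card_words m r]
  obtain ⟨L, hL, hb⟩ := exists_surjective_linear b
  refine mul_card_image_le_card _ _ fun v hv => ?_
  obtain ⟨P, hP, rfl⟩ := mem_image.mp hv
  rw [← card_words]
  refine card_le_card_of_injOn (fun Q => P + fun z => Q (L z)) ?_ ?_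
  · intro Q hQ
    rw [mem_coe, mem_words] at hQ
    simp only [coe_filter, Set.mem_ofPred_eq, mem_words]
    refine ⟨add_mem (mem_words.mp hP) (comp_mem L hQ), ?_⟩
    ext i x
    simp [deriv_apply, hb, add_add_add_comm, CharTwo.add_self_eq_zero]
  · intro Q _ Q' _ h
    ext y
    obtain ⟨z, rfl⟩ := hL y
    exact congrFun (add_left_cancel h) z

/-- The codewords of `RM(m,r)` of bias at least `2^{-l}`. -/
noncomputable def biased (m r l : ℕ) : Finset (Pt m → ZMod 2) :=
  (words m r).filter fun P => (2 : ℝ) ^ m ≤ 2 ^ l * charSum P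

lemma exists_badSet_le_of_biased {l : ℕ} {P : Pt m → ZMod 2}
    (hP : (2 : ℝ) ^ m ≤ 2 ^ l * charSum P) :
    ∃ b : Fin (4 * l + 6) → Pt m, 2 ^ (2 * l + 4 + 1) * (badSet b P).card ≤ 2 ^ m := by
  have hM : (0 : ℝ) < 2 ^ m := by positivity
  have hl : (0 : ℝ) < 2 ^ l := by positivity
  set β : ℝ := charSum P / 2 ^ m with hβ
  have hβl : 1 ≤ 2 ^ l * β := by
    rw [hβ, ← mul_div_assoc, one_le_div hM]
    exact hP
  have h0 : 0 < β := by
    by_contra! h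
    nlinarith
  obtain ⟨b, hb⟩ := exists_badSet_le (k := 4 * l + 6) (by omega) h0
    (by rw [hβ]; field_simp)
  refine ⟨b, ?_⟩
  have h1 : (2 : ℝ) ^ (2 * l + 4 + 1) ≤ (2 ^ (4 * l + 6) - 1) * β ^ 2 := by
    have e1 : (2 : ℝ) ^ (2 * l + 4 + 1) * 1 ≤ 2 ^ (2 * l + 4 + 1) * (2 ^ l * β) ^ 2 := by
      gcongr
      exact one_le_pow₀ hβl
    have e2 : (2 : ℝ) ^ (2 * l + 4 + 1) * (2 ^ l * β) ^ 2 = 2 ^ (4 * l + 5) * β ^ 2 := by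
      ring
    have e3 : (2 : ℝ) ^ (4 * l + 5) ≤ 2 ^ (4 * l + 6) - 1 := by
      have : (1 : ℝ) ≤ 2 ^ (4 * l + 5) := one_le_pow₀ (by norm_num)
      rw [pow_succ _ (4 * l + 5)]
      linarith
    have e4 := mul_le_mul_of_nonneg_right e3 (sq_nonneg β)
    linarith
  have h2 : (2 : ℝ) ^ (2 * l + 4 + 1) * (badSet b P).card ≤ 2 ^ m := by
    have e1 := mul_le_mul_of_nonneg_left h1 (Nat.cast_nonneg (α := ℝ) (badSet b P).card)
    nlinarith [sq_nonneg β]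
  exact_mod_cast h2

lemma card_biased_mul_le (m r l : ℕ) :
    2 ^ binomLe (m - (4 * l + 6)) r * (biased m r l).card ≤
      2 ^ (m * (4 * l + 6)) * (2 ^ binomLe m r * lowCount m r (2 * l + 4)) := by
  have h1 : 2 ^ binomLe (m - (4 * l + 6)) r ∣ 2 ^ binomLe m r := by
    refine Nat.pow_dvd_pow _ ?_
    refine sum_le_sum fun i _ => Nat.choose_le_choose i (Nat.sub_le _ _)
  obtain ⟨M, hM⟩ := h1
  have h2 : (biased m r l).card ≤
      2 ^ (m * (4 * l + 6)) * (M * lowCount m r (2 * l + 4)) := by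
    refine card_le_of_badSet _ (filter_subset _ _)
      (fun P hP => exists_badSet_le_of_biased (mem_filter.mp hP).2) fun b => ?_
    have h3 := card_image_deriv_mul_le r b
    rw [hM] at h3
    exact (card_le_card (image_subset_image (filter_subset _ _))).trans
      (Nat.le_of_mul_le_mul_left h3 (by positivity))
  calc _ ≤ 2 ^ binomLe (m - (4 * l + 6)) r *
        (2 ^ (m * (4 * l + 6)) * (M * lowCount m r (2 * l + 4))) := Nat.mul_le_mul_left _ h2
    _ = _ := by rw [hM]; ring

lemma mul_binomLe_le {c n r : ℕ} (h : (c + 1) * (r + 1) ≤ n) :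
    c * binomLe n r ≤ binomLe n (r + 1) := by
  unfold binomLe
  rw [mul_sum, sum_range_succ' _ (r + 1)]
  refine le_trans (sum_le_sum fun i hi => ?_) (Nat.le_add_right _ _)
  have hi' : i ≤ r := Nat.lt_succ_iff.mp (mem_range.mp hi)
  have h1 := Nat.choose_succ_right_eq n i
  have h2 : c * (i + 1) ≤ n - i := by
    have h3 : (c + 1) * (i + 1) ≤ (c + 1) * (r + 1) := Nat.mul_le_mul_left _ (by omega)
    have h4 : (c + 1) * (i + 1) = c * (i + 1) + i + 1 := by ring
    omega
  refine Nat.le_of_mul_le_mul_right ?_ (Nat.succ_pos i)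
  rw [Nat.succ_eq_add_one, h1, mul_comm c, mul_assoc]
  exact Nat.mul_le_mul_left _ h2

lemma binomLe_succ_succ (n r : ℕ) :
    binomLe (n + 1) (r + 1) = binomLe n (r + 1) + binomLe n r := by
  unfold binomLe
  rw [sum_range_succ' _ (r + 1), sum_range_succ' _ (r + 1)]
  simp only [Nat.choose_succ_succ', sum_add_distrib, Nat.choose_zero_right]
  ring

lemma pow_mul_binomLe_le {c r : ℕ} (k n : ℕ) (h : (c + 1) * (r + 1) ≤ n) :
    c ^ k * binomLe (n + k) (r + 1) ≤ (c + 1) ^ k * binomLe n (r + 1) := by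
  induction k with
  | zero => simp
  | succ k ih =>
    have h1 : c * binomLe (n + k) r ≤ binomLe (n + k) (r + 1) :=
      mul_binomLe_le (h.trans (Nat.le_add_right _ _))
    have h2 : c * binomLe (n + (k + 1)) (r + 1) ≤ (c + 1) * binomLe (n + k) (r + 1) := by
      rw [← add_assoc, binomLe_succ_succ]
      nlinarith
    calc c ^ (k + 1) * binomLe (n + (k + 1)) (r + 1)
        = c ^ k * (c * binomLe (n + (k + 1)) (r + 1)) := by ring
      _ ≤ c ^ k * ((c + 1) * binomLe (n + k) (r + 1)) := Nat.mul_le_mul_left _ h2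
      _ = (c + 1) * (c ^ k * binomLe (n + k) (r + 1)) := by ring
      _ ≤ (c + 1) * ((c + 1) ^ k * binomLe n (r + 1)) := Nat.mul_le_mul_left _ ih
      _ = _ := by ring

lemma choose_le_binomLe {i r : ℕ} (n : ℕ) (h : i ≤ r) : n.choose i ≤ binomLe n r :=
  single_le_sum (f := fun i => n.choose i) (fun _ _ => Nat.zero_le _)
    (mem_range.mpr (Nat.lt_succ_of_le h))

lemma le_two_mul_binomLe {r : ℕ} (n : ℕ) (h : 2 ≤ r) : n * (n - 1) ≤ 2 * binomLe n r := by
  have h1 := choose_le_binomLe n h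
  have h2 := Nat.div_add_mod (n * (n - 1)) 2
  have h3 : n * (n - 1) % 2 = 0 := Nat.even_iff.mp (Nat.even_mul_pred_self n)
  rw [Nat.choose_two_right] at h1
  omega

lemma mul_two_pow_le_binomLe {s : ℕ} (hm : 449 ≤ m) (hs : 2 ≤ s) (h : 3 * s ≤ m) :
    56 * m * 2 ^ s ≤ binomLe m s := by
  induction s, hs using Nat.le_induction with
  | base =>
    have h1 := le_two_mul_binomLe m (le_refl 2)
    have h2 : m * 448 ≤ m * (m - 1) := Nat.mul_le_mul_left _ (by omega)
    omega
  | succ s hs ih =>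
    have h1 := mul_binomLe_le (c := 2) (n := m) (r := s) h
    have h2 := ih (by omega)
    rw [pow_succ, ← mul_assoc]
    omega

lemma binomLe_le_exp (m r : ℕ) : (binomLe m r : ℝ) ≤ 1024 ^ r * Real.exp (m / 1024) := by
  have h1 : (binomLe m r : ℝ) * (1 / 1024) ^ r ≤ (1 / 1024 + 1) ^ m := by
    rw [add_pow, binomLe]
    push_cast
    rw [sum_mul]
    have h2 : ∀ i ∈ range (r + 1), (m.choose i : ℝ) * (1 / 1024) ^ r ≤
        (1 / 1024) ^ i * 1 ^ (m - i) * (m.choose i : ℝ) := by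
      intro i hi
      rw [one_pow, mul_one, mul_comm]
      exact mul_le_mul_of_nonneg_right (pow_le_pow_of_le_one (by norm_num) (by norm_num)
        (Nat.lt_succ_iff.mp (mem_range.mp hi))) (by positivity)
    refine (sum_le_sum h2).trans ?_
    rcases le_total (r + 1) (m + 1) with h | h
    · exact sum_le_sum_of_subset_of_nonneg (range_mono h) fun _ _ _ => by positivity
    · refine le_of_eq (sum_subset (range_mono h) fun i _ hi => ?_).symm
      rw [Nat.choose_eq_zero_of_lt (by simpa using hi)]
      simp
  have h2 : ((1 : ℝ) / 1024 + 1) ^ m ≤ Real.exp (m / 1024) := by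
    calc ((1 : ℝ) / 1024 + 1) ^ m ≤ Real.exp (1 / 1024) ^ m := by
          gcongr
          exact Real.add_one_le_exp _
      _ = Real.exp (m / 1024) := by
          rw [← Real.exp_nat_mul]
          ring_nf
  have h3 : (1024 : ℝ) ^ r * (1 / 1024) ^ r = 1 := by
    rw [← mul_pow]
    norm_num
  calc (binomLe m r : ℝ) = 1024 ^ r * (binomLe m r * (1 / 1024) ^ r) := by
        linear_combination (-(binomLe m r : ℝ)) * h3
    _ ≤ 1024 ^ r * Real.exp (m / 1024) := by
        gcongr
        exact h1.trans h2

lemma lowCount_le_rpow_of_le {r : ℕ} (hm : 449 ≤ m) (hr : 10000 * r ≤ m) {j : ℕ} (hj : 2 ≤ j) :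
    (lowCount m r j : ℝ) ≤ 2 ^ ((binomLe m r : ℝ) / 2 ^ (j + 1)) := by
  refine lowCount_le_rpow r (fun s hs hsr => ?_)
    (fun s hs hsr => mul_two_pow_le_binomLe hm hs (by omega)) j hj
  obtain ⟨s, rfl⟩ := Nat.exists_eq_add_of_le' hs
  exact mul_binomLe_le (by omega)

lemma geometric_bound {l : ℕ} (hl : 2 ≤ l) :
    (1 : ℝ) / 2 ^ (2 * l + 5) + 1.443 * (2 / 2 ^ l) ≤ 0.9 * (1000 / 1001) ^ (4 * l + 6) := by
  induction l, hl using Nat.le_induction with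
  | base => norm_num
  | succ l hl ih =>
    have e1 : (1 : ℝ) / 2 ^ (2 * (l + 1) + 5) = 1 / 4 * (1 / 2 ^ (2 * l + 5)) := by
      rw [show 2 * (l + 1) + 5 = 2 * l + 5 + 2 by ring, pow_add]
      field_simp
      norm_num
    have e2 : (2 : ℝ) / 2 ^ (l + 1) = 1 / 2 * (2 / 2 ^ l) := by
      rw [pow_succ]
      field_simp
    have e3 : ((1000 : ℝ) / 1001) ^ (4 * (l + 1) + 6) =
        (1000 / 1001) ^ 4 * (1000 / 1001) ^ (4 * l + 6) := by
      rw [← pow_add]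
      congr 1
      ring
    have e4 : (1 / 2 : ℝ) ≤ (1000 / 1001) ^ 4 := by norm_num
    rw [e1, e2, e3]
    have p1 : (0 : ℝ) ≤ 1 / 2 ^ (2 * l + 5) := by positivity
    have p2 : (0 : ℝ) ≤ (1000 / 1001) ^ (4 * l + 6) := by positivity
    nlinarith [mul_le_mul_of_nonneg_right e4 p2]

lemma card_biased_mul_pow_le {r l K : ℕ} (hm : 2000 ≤ m) (hr : 2 ≤ r) (hrm : 10000 * r ≤ m)
    (hl : 2 ≤ l) (hlm : l ≤ m / 125) (hK : K ≤ binomLe m r) :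
    ((biased m r l).card : ℝ) * (1 + 2 / 2 ^ l) ^ K ≤ 2 ^ binomLe m r / 2 ^ m := by
  set k := 4 * l + 6 with hk
  set D := binomLe m r with hD
  set D' := binomLe (m - k) r with hD'
  have hkm : 25 * k ≤ m := by omega
  have h1 : (2 : ℝ) ^ D' * (biased m r l).card ≤
      2 ^ (m * k) * (2 ^ D * lowCount m r (2 * l + 4)) := by
    exact_mod_cast card_biased_mul_le m r l
  have h2 := lowCount_le_rpow_of_le (by omega) hrm (j := 2 * l + 4) (by omega)
  have h3 : (1000 / 1001 : ℝ) ^ k * D ≤ D' := by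
    obtain ⟨s, rfl⟩ := Nat.exists_eq_add_of_le' (show 1 ≤ r by omega)
    have := pow_mul_binomLe_le (c := 1000) (r := s) k (m - k) (by omega)
    rw [Nat.sub_add_cancel (by omega)] at this
    have h : (1000 ^ k * D : ℝ) ≤ 1001 ^ k * D' := by exact_mod_cast this
    rw [div_pow, div_mul_eq_mul_div, div_le_iff₀ (by positivity)]
    linarith
  have h4 : (m * k + m : ℝ) ≤ 0.1 * D' := by
    have e1 := le_two_mul_binomLe (m - k) hr
    have e2 : ((m - k : ℕ) : ℝ) * ((m - k : ℕ) - 1) ≤ 2 * D' := by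
      have : (((m - k) * (m - k - 1) : ℕ) : ℝ) ≤ (2 * D' : ℕ) := by exact_mod_cast e1
      rw [Nat.cast_mul, Nat.cast_sub (by omega : 1 ≤ m - k)] at this
      push_cast at this
      exact this
    rw [Nat.cast_sub (by omega)] at e2
    have e3 : (25 * k : ℝ) ≤ m := by exact_mod_cast hkm
    have e4 : (2000 : ℝ) ≤ m := by exact_mod_cast hm
    have e5 : (0.96 * m : ℝ) * (0.96 * m - 1) ≤ (m - k) * (m - k - 1) := by
      apply mul_le_mul <;> linarith
    have e6 : (m * k : ℝ) ≤ m * (m / 25) := by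
      gcongr
      linarith
    nlinarith
  have h5 : (1 + 2 / 2 ^ l : ℝ) ^ K ≤ 2 ^ (1.443 * (2 / 2 ^ l) * (D : ℝ)) := by
    have hp : (0 : ℝ) ≤ 2 / 2 ^ l := by positivity
    have hKD : (K : ℝ) ≤ D := by exact_mod_cast hK
    calc (1 + 2 / 2 ^ l : ℝ) ^ K ≤ Real.exp (2 / 2 ^ l) ^ K := by
          gcongr
          rw [add_comm]
          exact Real.add_one_le_exp _
      _ = Real.exp (K * (2 / 2 ^ l)) := by rw [← Real.exp_nat_mul]
      _ ≤ Real.exp (Real.log 2 * (1.443 * (2 / 2 ^ l) * (D : ℝ))) := by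
          refine Real.exp_le_exp.mpr ?_
          have e1 : (1 : ℝ) ≤ Real.log 2 * 1.443 := by
            have := Real.log_two_gt_d9
            linarith
          have e2 : (K : ℝ) * (2 / 2 ^ l) ≤ D * (2 / 2 ^ l) := by gcongr
          have e3 := mul_le_mul_of_nonneg_right e1 (by positivity : (0 : ℝ) ≤ D * (2 / 2 ^ l))
          linarith
      _ = _ := by rw [Real.rpow_def_of_pos (by norm_num)]
  have hT : (0 : ℝ) < 2 ^ m := by positivity
  have hT' : (0 : ℝ) < 2 ^ D' := by positivity
  rw [le_div_iff₀ hT]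
  refine le_of_mul_le_mul_left ?_ hT'
  calc (2 : ℝ) ^ D' * ((biased m r l).card * (1 + 2 / 2 ^ l) ^ K * 2 ^ m)
      = (2 ^ D' * (biased m r l).card) * ((1 + 2 / 2 ^ l) ^ K * 2 ^ m) := by ring
    _ ≤ (2 ^ (m * k) * (2 ^ D * lowCount m r (2 * l + 4))) * ((1 + 2 / 2 ^ l) ^ K * 2 ^ m) := by
        gcongr
    _ ≤ (2 ^ (m * k) * (2 ^ D * 2 ^ ((D : ℝ) / 2 ^ (2 * l + 4 + 1)))) *
          (2 ^ (1.443 * (2 / 2 ^ l) * (D : ℝ)) * 2 ^ m) := by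
        gcongr
    _ = 2 ^ D * 2 ^ (((m * k : ℕ) : ℝ) + (m : ℝ) + (D : ℝ) / 2 ^ (2 * l + 4 + 1) +
          1.443 * (2 / 2 ^ l) * (D : ℝ)) := by
        rw [Real.rpow_add (by norm_num), Real.rpow_add (by norm_num),
          Real.rpow_add (by norm_num), Real.rpow_natCast, Real.rpow_natCast]
        ring
    _ ≤ 2 ^ D * 2 ^ (D' : ℝ) := by
        gcongr
        · norm_num
        · have e1 := mul_le_mul_of_nonneg_right (geometric_bound hl)
            (Nat.cast_nonneg (α := ℝ) D)
          rw [show 2 * l + 4 + 1 = 2 * l + 5 by ring]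
          push_cast
          rw [← hk] at e1
          have e2 : (D : ℝ) / 2 ^ (2 * l + 5) = 1 / 2 ^ (2 * l + 5) * D := by ring
          rw [e2]
          linarith
    _ = 2 ^ D' * 2 ^ D := by
        rw [Real.rpow_natCast]
        ring

lemma choose_mul_pow_le {a n : ℕ} (h : a ≤ n) (K : ℕ) :
    a.choose K * n ^ K ≤ a ^ K * n.choose K := by
  induction K with
  | zero => simp
  | succ K ih =>
    have h1 : (a - K) * n ≤ a * (n - K) := by
      rw [Nat.sub_mul, Nat.mul_sub, mul_comm a K]
      exact Nat.sub_le_sub_left (Nat.mul_le_mul_left _ h) _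
    refine Nat.le_of_mul_le_mul_right ?_ (Nat.succ_pos K)
    calc a.choose (K + 1) * n ^ (K + 1) * (K + 1)
        = (a.choose (K + 1) * (K + 1)) * n ^ (K + 1) := by ring
      _ = (a.choose K * n ^ K) * ((a - K) * n) := by
          rw [Nat.choose_succ_right_eq]
          ring
      _ ≤ (a ^ K * n.choose K) * (a * (n - K)) := Nat.mul_le_mul ih h1
      _ = a ^ (K + 1) * (n.choose K * (n - K)) := by ring
      _ = a ^ (K + 1) * n.choose (K + 1) * (K + 1) := by
          rw [← Nat.choose_succ_right_eq]
          ring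

open Classical in
/-- The subsets of `Z` on which every codeword of `RM(m,r)` sums to zero. -/
noncomputable def dependencies (m r : ℕ) (Z : Finset (Pt m)) : Finset (Finset (Pt m)) :=
  Z.powerset.filter fun A => ∀ P ∈ words m r, ∑ x ∈ A, P x = 0

lemma sgn_sum (A : Finset (Pt m)) (P : Pt m → ZMod 2) :
    sgn (∑ x ∈ A, P x) = ∏ x ∈ A, sgn (P x) := by
  induction A using Finset.induction_on with
  | empty => simp [sgn]
  | insert x A hx ih => rw [sum_insert hx, prod_insert hx, sgn_add, ih]

open Classical in
lemma sum_sgn_words (r : ℕ) (A : Finset (Pt m)) :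
    ∑ P ∈ words m r, sgn (∑ x ∈ A, P x) =
      if ∀ P ∈ words m r, ∑ x ∈ A, P x = 0 then (2 : ℝ) ^ binomLe m r else 0 := by
  split_ifs with h
  · rw [sum_congr rfl fun P hP => by rw [h P hP]]
    simp [sgn, card_words]
  · push Not at h
    obtain ⟨Q, hQ, hQA⟩ := h
    have hQ1 : ∑ x ∈ A, Q x = 1 := (zmod_two_cases _).resolve_left hQA
    have key : ∑ P ∈ words m r, sgn (∑ x ∈ A, P x) =
        ∑ P ∈ words m r, - sgn (∑ x ∈ A, P x) := by
      refine sum_nbij' (fun P => P + Q) (fun P => P - Q) ?_ ?_ ?_ ?_ ?_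
      · intro P hP
        exact mem_words.mpr (add_mem (mem_words.mp hP) (mem_words.mp hQ))
      · intro P hP
        exact mem_words.mpr (sub_mem (mem_words.mp hP) (mem_words.mp hQ))
      · intro P _
        exact add_sub_cancel_right P Q
      · intro P _
        exact sub_add_cancel P Q
      · intro P _
        simp only [Pi.add_apply, sum_add_distrib, hQ1, sgn_add]
        simp [sgn]
    rw [sum_neg_distrib] at key
    linarith

lemma card_dependencies_mul (r : ℕ) (Z : Finset (Pt m)) :
    ((dependencies m r Z).card : ℝ) * 2 ^ binomLe m r =
      2 ^ Z.card * ((words m r).filter fun P => ∀ x ∈ Z, P x = 0).card := by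
  classical
  have h1 : ((dependencies m r Z).card : ℝ) * 2 ^ binomLe m r =
      ∑ A ∈ Z.powerset, ∑ P ∈ words m r, sgn (∑ x ∈ A, P x) := by
    simp only [sum_sgn_words, dependencies]
    rw [← sum_filter, sum_const, nsmul_eq_mul]
  rw [h1, sum_comm]
  simp only [sgn_sum]
  simp only [← prod_one_add]
  have h2 : ∀ P : Pt m → ZMod 2, ∏ x ∈ Z, (1 + sgn (P x)) =
      if ∀ x ∈ Z, P x = 0 then (2 : ℝ) ^ Z.card else 0 := by
    intro P
    split_ifs with h
    · rw [prod_congr rfl fun x hx => by rw [h x hx]]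
      norm_num [sgn]
    · push Not at h
      obtain ⟨x, hx, hPx⟩ := h
      exact prod_eq_zero hx (by simp [sgn, hPx])
  simp only [h2]
  rw [← sum_filter, sum_const, nsmul_eq_mul, mul_comm]

lemma card_zeros (P : Pt m → ZMod 2) :
    (univ.filter fun x => P x = 0).card = 2 ^ m - hw P := by
  have := card_filter_add_card_filter_not (s := (univ : Finset (Pt m))) (fun x => P x = 0)
  rw [card_univ, card_pt] at this
  simp only [hw, ne_eq]
  omega

lemma hw_le (P : Pt m → ZMod 2) : hw P ≤ 2 ^ m :=
  (card_le_univ _).trans_eq (card_pt m)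

lemma sum_card_dependencies_le (r K : ℕ) :
    (∑ Z ∈ powersetCard K (univ : Finset (Pt m)), ((dependencies m r Z).card : ℝ)) *
      2 ^ binomLe m r ≤
    (powersetCard K (univ : Finset (Pt m))).card *
      ∑ P ∈ words m r, (1 + charSum P / 2 ^ m) ^ K := by
  have h1 : (∑ Z ∈ powersetCard K (univ : Finset (Pt m)), ((dependencies m r Z).card : ℝ)) *
      2 ^ binomLe m r = ∑ P ∈ words m r, 2 ^ K * ((2 ^ m - hw P).choose K : ℝ) := by
    rw [sum_mul]
    have : ∀ Z ∈ powersetCard K (univ : Finset (Pt m)),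
        ((dependencies m r Z).card : ℝ) * 2 ^ binomLe m r =
        ∑ P ∈ words m r, if ∀ x ∈ Z, P x = 0 then (2 : ℝ) ^ K else 0 := by
      intro Z hZ
      rw [card_dependencies_mul, (mem_powersetCard.mp hZ).2, ← sum_filter, sum_const,
        nsmul_eq_mul, mul_comm]
    rw [sum_congr rfl this, sum_comm]
    refine sum_congr rfl fun P _ => ?_
    rw [← sum_filter, sum_const, nsmul_eq_mul, mul_comm, ← card_zeros, ← card_powersetCard]
    congr 3
    ext Z
    simp only [mem_filter, mem_powersetCard, true_and, subset_iff, mem_univ]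
    tauto
  rw [h1, mul_sum]
  refine sum_le_sum fun P _ => ?_
  have hM : (0 : ℝ) < 2 ^ m := by positivity
  have h2 : (((2 ^ m - hw P : ℕ).choose K : ℕ) : ℝ) * (2 ^ m) ^ K ≤
      (2 ^ m - hw P) ^ K * (2 ^ m).choose K := by
    have := choose_mul_pow_le (Nat.sub_le (2 ^ m) (hw P)) K
    have h3 : (((2 ^ m - hw P).choose K * (2 ^ m) ^ K : ℕ) : ℝ) ≤
      ((2 ^ m - hw P) ^ K * (2 ^ m).choose K : ℕ) := by exact_mod_cast this
    push_cast [Nat.cast_sub (hw_le P)] at h3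
    exact h3
  have h3 : (1 + charSum P / 2 ^ m) = 2 * (2 ^ m - hw P) / 2 ^ m := by
    rw [charSum_eq]
    field_simp
    ring
  rw [h3, card_powersetCard, card_univ, card_pt, div_pow, mul_pow, ← mul_div_assoc,
    le_div_iff₀ (by positivity)]
  nlinarith [mul_le_mul_of_nonneg_left h2 (by positivity : (0 : ℝ) ≤ 2 ^ K)]

/-- No nonzero codeword of `RM(m,d)` is supported in `Z`. -/
def Recovers (m d : ℕ) (Z : Finset (Pt m)) : Prop :=
  ∀ c : RMcode m d, {x : Pt m | evalLin m d x c ≠ 0} ⊆ (Z : Set (Pt m)) → c = 0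

lemma two_le_card_dependencies {d r : ℕ} (h : d + r < m) {Z : Finset (Pt m)}
    (hZ : ¬ Recovers m d Z) : 2 ≤ (dependencies m r Z).card := by
  classical
  unfold Recovers at hZ
  push Not at hZ
  obtain ⟨c, hc, hc0⟩ := hZ
  set f := evalMap m d c with hf
  have hf0 : f ≠ 0 := fun h0 => hc0 (evalMap_injective m d (h0.trans (map_zero _).symm))
  obtain ⟨y, hy⟩ := Function.ne_iff.mp hf0
  set A : Finset (Pt m) := univ.filter fun x => f x ≠ 0 with hA
  have hyA : y ∈ A := by simpa [hA] using hy
  have hsum : ∀ P ∈ words m r, ∑ x ∈ A, P x = 0 := by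
    intro P hP
    have h1 := sum_eq_zero_of_mem h (mul_mem_RM (evalMap_mem d c) (mem_words.mp hP))
    rw [← h1, hA, sum_filter]
    refine sum_congr rfl fun x _ => ?_
    rw [Pi.mul_apply, ← hf]
    rcases zmod_two_cases (f x) with h2 | h2 <;> simp [h2]
  have hsub : {∅, A} ⊆ dependencies m r Z := by
    intro B hB
    rw [mem_insert, mem_singleton] at hB
    rw [dependencies, mem_filter, mem_powerset]
    rcases hB with rfl | rfl
    · simp
    · refine ⟨fun x hx => ?_, hsum⟩
      exact hc (show f x ≠ 0 from (mem_filter.mp hx).2)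
  have hne : (∅ : Finset (Pt m)) ≠ A := fun h0 => by simp [← h0] at hyA
  rw [← card_pair hne]
  exact card_le_card hsub

lemma one_le_card_dependencies (r : ℕ) (Z : Finset (Pt m)) :
    1 ≤ (dependencies m r Z).card := by
  refine card_pos.mpr ⟨∅, ?_⟩
  simp [dependencies]

open Classical in
lemma card_recovers_ge {d r K : ℕ} (h : d + r < m) {ρ : ℝ}
    (hρ : ∑ P ∈ words m r, (1 + charSum P / 2 ^ m) ^ K ≤ (1 + ρ) * 2 ^ binomLe m r) :
    (1 - ρ) * (powersetCard K (univ : Finset (Pt m))).card ≤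
      ((powersetCard K (univ : Finset (Pt m))).filter fun Z => Recovers m d Z).card := by
  set N : ℝ := ((powersetCard K (univ : Finset (Pt m))).card : ℝ) with hN
  have hD : (0 : ℝ) < 2 ^ binomLe m r := by positivity
  have h1 : ∑ Z ∈ powersetCard K (univ : Finset (Pt m)), ((dependencies m r Z).card : ℝ) ≤
      (1 + ρ) * N := by
    refine le_of_mul_le_mul_right ((sum_card_dependencies_le r K).trans ?_) hD
    have := mul_le_mul_of_nonneg_left hρ (by positivity : 0 ≤ N)
    linarith
  have h2 : ∑ Z ∈ powersetCard K (univ : Finset (Pt m)),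
      (2 - if Recovers m d Z then (1 : ℝ) else 0) ≤
      ∑ Z ∈ powersetCard K (univ : Finset (Pt m)), ((dependencies m r Z).card : ℝ) := by
    refine sum_le_sum fun Z _ => ?_
    split_ifs with hZ
    · have : (1 : ℝ) ≤ (dependencies m r Z).card := by
        exact_mod_cast one_le_card_dependencies r Z
      linarith
    · have : (2 : ℝ) ≤ (dependencies m r Z).card := by
        exact_mod_cast two_le_card_dependencies h hZ
      linarith
  rw [sum_sub_distrib, sum_boole, sum_const, nsmul_eq_mul] at h2
  linarith

lemma one_add_bias_eq (P : Pt m → ZMod 2) :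
    1 + charSum P / 2 ^ m = 2 * (1 - hw P / 2 ^ m) := by
  rw [charSum_eq]
  field_simp
  ring

lemma one_add_bias_nonneg (P : Pt m → ZMod 2) : 0 ≤ 1 + charSum P / 2 ^ m := by
  rw [one_add_bias_eq]
  have h : (hw P : ℝ) ≤ 2 ^ m := by exact_mod_cast hw_le P
  have := div_le_one_of_le₀ h (by positivity)
  linarith

lemma exists_scale_of_low {r : ℕ} {P : Pt m → ZMod 2} (hP : P ∈ RM m r) (h0 : P ≠ 0)
    (h4 : 4 * hw P ≤ 2 ^ m) :
    ∃ j ∈ Icc 2 r, 2 ^ j * hw P ≤ 2 ^ m ∧ 2 ^ m < 2 ^ (j + 1) * hw P := by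
  have hex : ∃ j, 2 ^ m < 2 ^ (j + 1) * hw P := by
    refine ⟨r, (two_pow_le_hw hP h0).trans_lt ?_⟩
    exact Nat.mul_lt_mul_of_pos_right (Nat.pow_lt_pow_right (by norm_num) (by omega)) (hw_pos h0)
  have hle : Nat.find hex ≤ r := by
    refine Nat.find_min' hex ((two_pow_le_hw hP h0).trans_lt ?_)
    exact Nat.mul_lt_mul_of_pos_right (Nat.pow_lt_pow_right (by norm_num) (by omega)) (hw_pos h0)
  have h2 : 2 ≤ Nat.find hex := by
    rw [Nat.le_find_iff]
    intro i hi
    have : 2 ^ (i + 1) ≤ 2 ^ 2 := Nat.pow_le_pow_right (by norm_num) (by omega)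
    nlinarith
  refine ⟨Nat.find hex, mem_Icc.mpr ⟨h2, hle⟩, ?_, Nat.find_spec hex⟩
  have := Nat.find_min hex (m := Nat.find hex - 1) (by omega)
  rw [Nat.sub_add_cancel (by omega)] at this
  exact not_lt.mp this

lemma exists_scale_of_bias {L : ℕ} {β : ℝ} (hβ : β < 1 / 2) (hL : 1 ≤ 2 ^ L * β) :
    ∃ l ∈ Icc 2 L, 1 ≤ 2 ^ l * β ∧ β ≤ 2 / 2 ^ l := by
  classical
  have hex : ∃ l : ℕ, 1 ≤ 2 ^ l * β := ⟨L, hL⟩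
  have hβ0 : 0 < β := by
    by_contra! h
    have : (0 : ℝ) < 2 ^ L := by positivity
    nlinarith
  have h2 : 2 ≤ Nat.find hex := by
    rw [Nat.le_find_iff]
    intro i hi
    have : (2 : ℝ) ^ i ≤ 2 ^ 1 := pow_le_pow_right₀ (by norm_num) (by omega)
    nlinarith
  refine ⟨Nat.find hex, mem_Icc.mpr ⟨h2, Nat.find_min' hex hL⟩, Nat.find_spec hex, ?_⟩
  have := Nat.find_min hex (m := Nat.find hex - 1) (by omega)
  rw [le_div_iff₀ (by positivity)]
  have e : (2 : ℝ) ^ Nat.find hex = 2 ^ (Nat.find hex - 1) * 2 := by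
    rw [← pow_succ, Nat.sub_add_cancel (by omega)]
  rw [e]
  linarith

open Classical in
lemma pow_one_add_bias_le {r K L : ℕ} {ρ : ℝ} (hρ : 0 < ρ) (hρ1 : ρ ≤ 1)
    (hL : 4 * K ≤ ρ * 2 ^ L) {P : Pt m → ZMod 2} (hP : P ∈ words m r) :
    (1 + charSum P / 2 ^ m) ^ K ≤ 1 + ρ / 2 + (if P = 0 then 2 ^ K else 0) +
      (∑ j ∈ Icc 2 r, if 2 ^ j * hw P ≤ 2 ^ m then (2 * (1 - 1 / 2 ^ (j + 1)) : ℝ) ^ K else 0) +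
      ∑ l ∈ Icc 2 L, if P ∈ (biased m r l).erase 0 then (1 + 2 / 2 ^ l : ℝ) ^ K else 0 := by
  set β := charSum P / 2 ^ m with hβ
  have hM : (0 : ℝ) < 2 ^ m := by positivity
  have hβ0 : 0 ≤ 1 + β := one_add_bias_nonneg P
  have hβa : 1 + β = 2 * (1 - hw P / 2 ^ m) := one_add_bias_eq P
  have t1 : (0 : ℝ) ≤ if P = 0 then (2 : ℝ) ^ K else 0 := by positivity
  have hj0 : ∀ j : ℕ, (0 : ℝ) ≤ 2 * (1 - 1 / 2 ^ (j + 1)) := by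
    intro j
    have : (1 : ℝ) / 2 ^ (j + 1) ≤ 1 := div_le_one_of_le₀ (one_le_pow₀ (by norm_num)) (by positivity)
    linarith
  have s2 : ∀ j ∈ Icc 2 r,
      (0 : ℝ) ≤ if 2 ^ j * hw P ≤ 2 ^ m then (2 * (1 - 1 / 2 ^ (j + 1)) : ℝ) ^ K else 0 := by
    intro j _
    split_ifs
    · exact pow_nonneg (hj0 j) K
    · exact le_rfl
  have t2 := sum_nonneg s2
  have s3 : ∀ l ∈ Icc 2 L,
      (0 : ℝ) ≤ if P ∈ (biased m r l).erase 0 then (1 + 2 / 2 ^ l : ℝ) ^ K else 0 := by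
    intro l _
    positivity
  have t3 := sum_nonneg s3
  by_cases hK : K * β ≤ ρ / 4
  · have e1 : (1 + β) ^ K ≤ Real.exp (ρ / 4) := by
      calc (1 + β) ^ K ≤ Real.exp β ^ K := by
            gcongr
            rw [add_comm]
            exact Real.add_one_le_exp β
        _ = Real.exp (K * β) := by rw [Real.exp_nat_mul]
        _ ≤ _ := Real.exp_le_exp.mpr hK
    have e2 : Real.exp (ρ / 4) ≤ 1 + ρ / 2 := by
      refine (Real.exp_bound_div_one_sub_of_interval (by linarith) (by linarith)).trans ?_
      rw [div_le_iff₀ (by linarith)]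
      nlinarith
    linarith
  by_cases h0 : P = 0
  · have e1 : 1 + β ≤ 2 := by
      rw [hβa]
      have : (0 : ℝ) ≤ hw P / 2 ^ m := by positivity
      linarith
    have e2 : (1 + β) ^ K ≤ 2 ^ K := by gcongr
    rw [if_pos h0]
    linarith
  by_cases h4 : 4 * hw P ≤ 2 ^ m
  · obtain ⟨j, hj, hj1, hj2⟩ := exists_scale_of_low (mem_words.mp hP) h0 h4
    have e1 := single_le_sum s2 hj
    rw [if_pos hj1] at e1
    have e2 : (1 + β) ^ K ≤ (2 * (1 - 1 / 2 ^ (j + 1))) ^ K := by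
      refine pow_le_pow_left₀ hβ0 ?_ K
      rw [hβa]
      have : (1 : ℝ) / 2 ^ (j + 1) ≤ hw P / 2 ^ m := by
        rw [div_le_div_iff₀ (by positivity) hM]
        have : (2 ^ m : ℝ) ≤ 2 ^ (j + 1) * hw P := by exact_mod_cast hj2.le
        linarith
      linarith
    linarith
  · have hlt : β < 1 / 2 := by
      have e1 : (2 ^ m : ℝ) < 4 * hw P := by exact_mod_cast not_le.mp h4
      have e2 : (1 / 4 : ℝ) < hw P / 2 ^ m := by
        rw [div_lt_div_iff₀ (by norm_num) hM]
        linarith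
      linarith
    have hLβ : 1 ≤ 2 ^ L * β := by
      push Not at hK
      have hβpos : 0 < β := by
        by_contra! h
        have : (0 : ℝ) ≤ K := Nat.cast_nonneg K
        nlinarith
      have e1 := mul_le_mul_of_nonneg_right hL hβpos.le
      have e2 : ρ * 1 ≤ ρ * (2 ^ L * β) := by linarith
      exact le_of_mul_le_mul_left e2 hρ
    obtain ⟨l, hl, hl1, hl2⟩ := exists_scale_of_bias hlt hLβ
    have hmem : P ∈ (biased m r l).erase 0 := by
      rw [mem_erase, biased, mem_filter]
      refine ⟨h0, hP, ?_⟩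
      rw [hβ, ← mul_div_assoc, one_le_div hM] at hl1
      exact hl1
    have e1 := single_le_sum s3 hl
    rw [if_pos hmem] at e1
    have e2 : (1 + β) ^ K ≤ (1 + 2 / 2 ^ l) ^ K := by gcongr
    linarith

lemma card_biased_erase_mul_pow_le {r l K : ℕ} (hm : 2000 ≤ m) (hr : 1 ≤ r)
    (hrm : 10000 * r ≤ m) (hl : 2 ≤ l) (hlm : l ≤ m / 125) (hK : K ≤ binomLe m r) :
    (((biased m r l).erase 0).card : ℝ) * (1 + 2 / 2 ^ l) ^ K ≤ 2 ^ binomLe m r / 2 ^ m := by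
  rcases hr.eq_or_lt with rfl | hr
  · have : (biased m 1 l).erase 0 = ∅ := by
      rw [eq_empty_iff_forall_notMem]
      intro P hP
      rw [mem_erase, biased, mem_filter, mem_words] at hP
      have h1 := two_pow_le_hw hP.2.1 hP.1
      have h2 : (2 ^ m : ℝ) ≤ 2 ^ 1 * hw P := by exact_mod_cast h1
      have h3 := hP.2.2
      rw [charSum_eq] at h3
      have h4 : (0 : ℝ) < 2 ^ l := by positivity
      have h5 : (0 : ℝ) < 2 ^ m := by positivity
      nlinarith
    rw [this]
    simp only [card_empty, Nat.cast_zero, zero_mul]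
    positivity
  · refine le_trans ?_ (card_biased_mul_pow_le hm hr hrm hl hlm hK)
    gcongr
    exact erase_subset _ _

lemma lowCount_mul_pow_le {r j K : ℕ} {ε : ℝ} (hε : 0 < ε) (hm : 449 ≤ m)
    (hrm : 10000 * r ≤ m) (hj : 2 ≤ j) (hK : (K : ℝ) ≤ (1 - ε) * binomLe m r) :
    (lowCount m r j : ℝ) * (2 * (1 - 1 / 2 ^ (j + 1))) ^ K ≤
      2 ^ binomLe m r * Real.exp (-(ε * binomLe m r / 2)) := by
  set D := binomLe m r with hD
  set y : ℝ := 1 / 2 ^ j with hy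
  have hD0 : (0 : ℝ) ≤ D := Nat.cast_nonneg D
  have hlog := Real.log_two_gt_d9
  have hlog' := Real.log_two_lt_d9
  have hy0 : 0 ≤ y := by positivity
  have hy4 : y ≤ 1 / 4 := by
    have : (2 : ℝ) ^ 2 ≤ 2 ^ j := pow_le_pow_right₀ (by norm_num) hj
    rw [hy]
    gcongr
    linarith
  have e0 : (1 : ℝ) / 2 ^ (j + 1) = y / 2 := by
    rw [hy, pow_succ]
    field_simp
  have e1 : (lowCount m r j : ℝ) ≤ Real.exp (Real.log 2 * (y / 2 * D)) := by
    refine (lowCount_le_rpow_of_le hm hrm hj).trans_eq ?_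
    rw [Real.rpow_def_of_pos (by norm_num), ← e0]
    congr 2
    ring
  have e2 : (2 * (1 - 1 / 2 ^ (j + 1)) : ℝ) ^ K ≤ Real.exp (K * (Real.log 2 - y / 2)) := by
    rw [Real.exp_nat_mul, e0, sub_eq_add_neg (Real.log 2), Real.exp_add,
      Real.exp_log (by norm_num)]
    gcongr
    · linarith
    · have := Real.add_one_le_exp (-(y / 2))
      linarith
  calc (lowCount m r j : ℝ) * (2 * (1 - 1 / 2 ^ (j + 1))) ^ K
      ≤ Real.exp (Real.log 2 * (y / 2 * D)) * Real.exp (K * (Real.log 2 - y / 2)) := by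
        refine mul_le_mul e1 e2 (pow_nonneg ?_ K) (Real.exp_nonneg _)
        rw [e0]
        linarith
    _ = Real.exp (Real.log 2 * (y / 2 * D) + K * (Real.log 2 - y / 2)) := by rw [Real.exp_add]
    _ ≤ Real.exp (D * Real.log 2 + -(ε * D / 2)) := by
        refine Real.exp_le_exp.mpr ?_
        have h1 : K * (Real.log 2 - y / 2) ≤ (1 - ε) * D * (Real.log 2 - y / 2) :=
          mul_le_mul_of_nonneg_right hK (by linarith)
        have h2 : 0 ≤ D * y * (1 - Real.log 2) :=
          mul_nonneg (mul_nonneg hD0 hy0) (by linarith)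
        have h3 : 0 ≤ D * ε * (Real.log 2 - y / 2 - 1 / 2) :=
          mul_nonneg (mul_nonneg hD0 hε.le) (by linarith)
        nlinarith
    _ = 2 ^ D * Real.exp (-(ε * D / 2)) := by
        rw [Real.exp_add, Real.exp_nat_mul, Real.exp_log (by norm_num)]

lemma le_binomLe {r : ℕ} (hr : 1 ≤ r) : m ≤ binomLe m r := by
  simpa using choose_le_binomLe m hr

lemma sum_pow_one_add_bias_le {r K : ℕ} {ε ρ : ℝ} (hε : 0 < ε) (hε1 : ε < 1) (hρ : 0 < ρ)
    (hρ1 : ρ ≤ 1) (hm : 2000 ≤ m) (hr : 1 ≤ r) (hrm : 10000 * r ≤ m)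
    (hK : (K : ℝ) ≤ (1 - ε) * binomLe m r) (hKL : 4 * K ≤ ρ * 2 ^ (m / 125))
    (hmρ : m * Real.exp (-(ε * m / 2)) ≤ ρ / 2) :
    ∑ P ∈ words m r, (1 + charSum P / 2 ^ m) ^ K ≤ (1 + ρ) * 2 ^ binomLe m r := by
  classical
  set D := binomLe m r with hD
  have hmD : (m : ℝ) ≤ D := by exact_mod_cast le_binomLe hr
  have hD0 : (0 : ℝ) ≤ D := Nat.cast_nonneg D
  have hKD : K ≤ D := by
    have : (K : ℝ) ≤ D := by nlinarith
    exact_mod_cast this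
  set E := Real.exp (-(ε * m / 2)) with hE
  have hlog := Real.log_two_gt_d9
  have hDE : Real.exp (-(ε * D / 2)) ≤ E := Real.exp_le_exp.mpr (by nlinarith)
  have a1 : (2 : ℝ) ^ K ≤ 2 ^ D * E := by
    refine le_trans ?_ (mul_le_mul_of_nonneg_left hDE (by positivity))
    rw [← Real.exp_log (show (0 : ℝ) < 2 by norm_num), ← Real.exp_nat_mul, ← Real.exp_nat_mul,
      ← Real.exp_add, Real.exp_log (by norm_num)]
    refine Real.exp_le_exp.mpr ?_
    have h1 : K * Real.log 2 ≤ (1 - ε) * D * Real.log 2 :=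
      mul_le_mul_of_nonneg_right hK (by linarith)
    have h2 : 0 ≤ ε * D * (Real.log 2 - 1 / 2) := mul_nonneg (by positivity) (by linarith)
    linarith
  have a2 : ∀ j ∈ Icc 2 r,
      (lowCount m r j : ℝ) * (2 * (1 - 1 / 2 ^ (j + 1))) ^ K ≤ 2 ^ D * E := by
    intro j hj
    refine (lowCount_mul_pow_le hε (by omega) hrm (mem_Icc.mp hj).1 hK).trans ?_
    exact mul_le_mul_of_nonneg_left hDE (by positivity)
  have a3 : ∀ l ∈ Icc 2 (m / 125),
      (((biased m r l).erase 0).card : ℝ) * (1 + 2 / 2 ^ l) ^ K ≤ 2 ^ D * E := by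
    intro l hl
    rw [mem_Icc] at hl
    refine (card_biased_erase_mul_pow_le hm hr hrm hl.1 hl.2 hKD).trans ?_
    rw [div_eq_mul_inv]
    gcongr
    rw [← Real.exp_log (show (0 : ℝ) < 2 ^ m by positivity), ← Real.exp_neg, Real.log_pow]
    refine Real.exp_le_exp.mpr ?_
    have hm0 : (0 : ℝ) ≤ m := Nat.cast_nonneg m
    nlinarith
  have hsum := sum_le_sum fun P (hP : P ∈ words m r) => pow_one_add_bias_le hρ hρ1 hKL hP
  refine hsum.trans ?_
  rw [sum_add_distrib, sum_add_distrib, sum_add_distrib, sum_comm (t := Icc 2 r),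
    sum_comm (t := Icc 2 (m / 125)), sum_const, card_words, nsmul_eq_mul, ← hD]
  have b1 : ∑ P ∈ words m r, (if P = 0 then (2 : ℝ) ^ K else 0) ≤ 2 ^ D * E := by
    rw [sum_ite_eq' (words m r) 0]
    split_ifs
    · exact a1
    · positivity
  have b2 : ∑ j ∈ Icc 2 r, ∑ P ∈ words m r,
      (if 2 ^ j * hw P ≤ 2 ^ m then (2 * (1 - 1 / 2 ^ (j + 1)) : ℝ) ^ K else 0) ≤
      r * (2 ^ D * E) := by
    calc _ ≤ ∑ j ∈ Icc 2 r, 2 ^ D * E := by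
          refine sum_le_sum fun j hj => ?_
          rw [← sum_filter, sum_const, nsmul_eq_mul]
          exact a2 j hj
      _ ≤ r * (2 ^ D * E) := by
          rw [sum_const, nsmul_eq_mul, Nat.card_Icc]
          gcongr
          omega
  have b3 : ∑ l ∈ Icc 2 (m / 125), ∑ P ∈ words m r,
      (if P ∈ (biased m r l).erase 0 then (1 + 2 / 2 ^ l : ℝ) ^ K else 0) ≤
      (m / 125 : ℕ) * (2 ^ D * E) := by
    calc _ ≤ ∑ l ∈ Icc 2 (m / 125), 2 ^ D * E := by
          refine sum_le_sum fun l hl => ?_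
          rw [← sum_filter, sum_const, nsmul_eq_mul, filter_mem_eq_inter, inter_eq_right.mpr]
          · exact a3 l hl
          · exact (erase_subset _ _).trans (filter_subset _ _)
      _ ≤ _ := by
          rw [sum_const, nsmul_eq_mul, Nat.card_Icc]
          gcongr
          omega
  have hcount : (1 + r + (m / 125 : ℕ) : ℝ) ≤ m := by
    have : 1 + r + m / 125 ≤ m := by omega
    exact_mod_cast this
  have hpos : (0 : ℝ) ≤ 2 ^ D * E := by positivity
  have c1 := mul_le_mul_of_nonneg_right hcount hpos
  have c2 := mul_le_mul_of_nonneg_left hmρ (by positivity : (0 : ℝ) ≤ 2 ^ D)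
  push_cast at *
  linarith

lemma four_mul_le_of_large {r K : ℕ} {ρ : ℝ} (hρ : 0 < ρ) (hrm : 10000 * r ≤ m)
    (hK : K ≤ binomLe m r) (hm : 2700 ≤ ρ * m) : 4 * K ≤ ρ * 2 ^ (m / 125) := by
  have hlog := Real.log_two_gt_d9
  have hlog' := Real.log_two_lt_d9
  have hm0 : (0 : ℝ) ≤ m := Nat.cast_nonneg m
  have h1 : (K : ℝ) ≤ Real.exp (m / 500) := by
    have e1 : (K : ℝ) ≤ binomLe m r := by exact_mod_cast hK
    refine (e1.trans (binomLe_le_exp m r)).trans ?_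
    have e2 : (1024 : ℝ) ^ r = Real.exp (r * (10 * Real.log 2)) := by
      rw [Real.exp_nat_mul]
      congr 1
      rw [← Nat.cast_ofNat (n := 10), Real.exp_nat_mul, Real.exp_log (by norm_num)]
      norm_num
    rw [e2, ← Real.exp_add]
    refine Real.exp_le_exp.mpr ?_
    have e3 : (10000 * r : ℝ) ≤ m := by exact_mod_cast hrm
    have e4 : (0 : ℝ) ≤ r := Nat.cast_nonneg r
    nlinarith
  have h2 : Real.exp (m / 200) ≤ 2 * 2 ^ (m / 125) := by
    rw [← pow_succ', ← Real.exp_log (show (0 : ℝ) < 2 by norm_num), ← Real.exp_nat_mul]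
    refine Real.exp_le_exp.mpr ?_
    have e1 : (m : ℝ) ≤ 125 * ((m / 125 : ℕ) + 1) := by
      have : m ≤ 125 * (m / 125 + 1) := by omega
      exact_mod_cast this
    push_cast
    nlinarith
  have h3 : (8 : ℝ) ≤ ρ * Real.exp (3 * m / 1000) := by
    have e1 := Real.add_one_le_exp (3 * m / 1000 : ℝ)
    nlinarith
  have h4 : Real.exp (m / 500) * Real.exp (3 * m / 1000) = Real.exp (m / 200 : ℝ) := by
    rw [← Real.exp_add]
    ring_nf
  have h5 : Real.exp (m / 500) * 8 ≤ ρ * Real.exp (m / 200) := by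
    rw [← h4]
    have := mul_le_mul_of_nonneg_left h3 (Real.exp_nonneg (m / 500 : ℝ))
    linarith
  have h6 := mul_le_mul_of_nonneg_left h2 hρ.le
  linarith

lemma mul_exp_neg_le_of_large {ε ρ : ℝ} (hε : 0 < ε) (hρ : 0 < ρ)
    (hm : 16 ≤ ρ * ε ^ 2 * m) : m * Real.exp (-(ε * m / 2)) ≤ ρ / 2 := by
  have hm0 : (0 : ℝ) ≤ m := Nat.cast_nonneg m
  have h1 := Real.quadratic_le_exp_of_nonneg (x := ε * m / 2) (by positivity)
  rw [Real.exp_neg, ← div_eq_mul_inv, div_le_iff₀ (Real.exp_pos _)]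
  have h2 : (ε * m / 2) ^ 2 / 2 ≤ Real.exp (ε * m / 2) := by
    have : 0 ≤ ε * m / 2 := by positivity
    linarith
  have h3 := mul_le_mul_of_nonneg_left h2 hρ.le
  have h4 := mul_le_mul_of_nonneg_right hm hm0
  nlinarith

lemma recovers_empty (m d : ℕ) : Recovers m d ∅ := by
  intro c hc
  refine evalMap_injective m d ?_
  rw [map_zero]
  ext x
  by_contra h
  simpa using hc (show evalLin m d x c ≠ 0 from h)

end RMErasure

/-- high-degree RM codes under erasures.
There is an absolute constant `γ₀ > 0` such that for every `ε ∈ (0,1)` and `ρ > 0`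
there is `m₀` such that for all `m ≥ m₀` and integers `d` with `(1-γ₀)m < d < m`,
setting `r = m - d - 1` and `K = ⌊(1-ε)·binom(m,≤r)⌋`, a uniformly random
`K`-element subset `Z ⊆ F₂^m` satisfies, with probability at least `1 - ρ`:
no nonzero multilinear polynomial of degree at most `d` has its support contained
in `Z` (i.e. `RM(m,d)` recovers from the erasure pattern `Z`). -/
theorem high_degree_RM_under_BEC :
    ∃ γ₀ : ℝ, 0 < γ₀ ∧
      ∀ ε : ℝ, 0 < ε → ε < 1 →
        ∀ ρ : ℝ, 0 < ρ →
          ∃ m₀ : ℕ, ∀ m : ℕ, m₀ ≤ m →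
            ∀ d : ℕ, (1 - γ₀) * (m : ℝ) < (d : ℝ) → d < m →
              ∀ K : ℕ, K = ⌊(1 - ε) * (binomLe m (m - d - 1) : ℝ)⌋₊ →
                (1 - ρ) *
                    (Nat.card {Z : Finset (Fin m → ZMod 2) // Z.card = K} : ℝ)
                  ≤ (Nat.card {Z : Finset (Fin m → ZMod 2) //
                      Z.card = K ∧
                      ∀ c : RMcode m d,
                        {x : Fin m → ZMod 2 | evalLin m d x c ≠ 0} ⊆
                          (Z : Set (Fin m → ZMod 2)) → c = 0} : ℝ) := by
  classical
  refine ⟨1 / 10000, by norm_num, fun ε hε hε1 ρ₀ hρ₀ => ?_⟩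
  obtain ⟨ρ, hρ, hρ1, hρρ⟩ : ∃ ρ : ℝ, 0 < ρ ∧ ρ ≤ 1 ∧ ρ ≤ ρ₀ :=
    ⟨min ρ₀ 1, lt_min hρ₀ one_pos, min_le_right _ _, min_le_left _ _⟩
  refine ⟨2000 + ⌈2700 / ρ⌉₊ + ⌈16 / (ρ * ε ^ 2)⌉₊, fun m hm d hd hdm K hK => ?_⟩
  have hm1 : 2700 ≤ ρ * m := by
    have h1 : (⌈2700 / ρ⌉₊ : ℝ) ≤ m := by exact_mod_cast (by omega : ⌈2700 / ρ⌉₊ ≤ m)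
    have h2 := (Nat.le_ceil (2700 / ρ)).trans h1
    rw [div_le_iff₀ hρ] at h2
    linarith
  have hm2 : 16 ≤ ρ * ε ^ 2 * m := by
    have h1 : (⌈16 / (ρ * ε ^ 2)⌉₊ : ℝ) ≤ m := by
      exact_mod_cast (by omega : ⌈16 / (ρ * ε ^ 2)⌉₊ ≤ m)
    have h2 := (Nat.le_ceil (16 / (ρ * ε ^ 2))).trans h1
    rw [div_le_iff₀ (by positivity)] at h2
    linarith
  have hrm : 10000 * (m - d - 1) ≤ m := by
    have h1 : (10000 * m : ℝ) ≤ 10000 * d + m := by linarith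
    have h2 : 10000 * m ≤ 10000 * d + m := by exact_mod_cast h1
    omega
  have hKε : (K : ℝ) ≤ (1 - ε) * binomLe m (m - d - 1) := by
    rw [hK]
    exact Nat.floor_le (mul_nonneg (by linarith) (Nat.cast_nonneg _))
  have hKD : K ≤ binomLe m (m - d - 1) := by
    have h1 : (0 : ℝ) ≤ binomLe m (m - d - 1) := Nat.cast_nonneg _
    have h2 : (K : ℝ) ≤ binomLe m (m - d - 1) := by nlinarith
    exact_mod_cast h2
  rw [Nat.subtype_card (Finset.powersetCard K Finset.univ)
      (p := fun Z : Finset (Fin m → ZMod 2) => Z.card = K)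
      (fun Z => Finset.mem_powersetCard_univ),
    Nat.subtype_card ((Finset.powersetCard K Finset.univ).filter fun Z => RMErasure.Recovers m d Z)
      (fun Z => by rw [Finset.mem_filter, Finset.mem_powersetCard_univ]; rfl)]
  have key : (1 - ρ) * (Finset.powersetCard K (Finset.univ : Finset (Fin m → ZMod 2))).card ≤
      ((Finset.powersetCard K Finset.univ).filter fun Z => RMErasure.Recovers m d Z).card := by
    rcases Nat.eq_zero_or_pos (m - d - 1) with hr | hr
    · have hK0 : K = 0 := by
        rw [hr] at hKε
        have h1 : (K : ℝ) < 1 := by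
          simp only [binomLe, zero_add, Finset.range_one, Finset.sum_singleton,
            Nat.choose_zero_right, Nat.cast_one, mul_one] at hKε
          linarith
        have h2 : K < 1 := by exact_mod_cast h1
        omega
      subst hK0
      rw [Finset.powersetCard_zero, Finset.filter_singleton, if_pos (RMErasure.recovers_empty m d)]
      simp [hρ.le]
    · exact RMErasure.card_recovers_ge (by omega)
        (RMErasure.sum_pow_one_add_bias_le hε hε1 hρ hρ1 (by omega) hr hrm hKε
          (RMErasure.four_mul_le_of_large hρ hrm hKD hm1)
          (RMErasure.mul_exp_neg_le_of_large hε hρ hm2))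
  refine le_trans ?_ key
  gcongr
end
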